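/- Spatial Hölder continuity with L¹ initial data (Theorem 1.3, inequality (1.11)): For every real μ ≥ 1 there exist constants C > 0 and β ∈ (0,1) such that the following holds: for every choice of continuous ν, a : ℝ → ℝ with 1/μ ≤ ν(x) ≤ μ and 1/μ ≤ a(x) ≤ μ for all x, every real W ≥ 0, every corrector T, every fundamental solution P of the canonical equation, and every p₀ ∈ L¹(ℝ) ∩ L∞(ℝ), the function p(t,x) := ∫_ℝ ν(y)P(t,x,y)p₀(y)dy satisfies |p(t,x) − p(t,x')| ≤ (C/t^{(1+β)/2})·‖p₀‖_{L¹(ℝ)}·|x − x'|^β for all t > 0 and all x, x' ∈ ℝ. -/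

import Mathlib

open MeasureTheory Filter

/-- Two-sided ellipticity bounds `1/μ ≤ f ≤ μ`. -/
def Elliptic (μ : ℝ) (f : ℝ → ℝ) : Prop := ∀ x : ℝ, 1 / μ ≤ f x ∧ f x ≤ μ

/-- A classical solution of the canonical equation
`ν(x)∂ₜp − ∂ₓ(ν(x)a(x)∂ₓp) + W∂ₓp = 0` for every time `t ∈ s` and every `x ∈ ℝ`. -/
def IsCanonicalSolOn (ν a : ℝ → ℝ) (W : ℝ) (u : ℝ → ℝ → ℝ) (s : Set ℝ) : Prop :=
  ∃ ut ux q : ℝ → ℝ → ℝ, ∀ t ∈ s, ∀ x : ℝ,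
    HasDerivAt (fun τ => u τ x) (ut t x) t ∧
    HasDerivAt (fun ξ => u t ξ) (ux t x) x ∧
    HasDerivAt (fun ξ => ν ξ * a ξ * ux t ξ) (q t x) x ∧
    ν x * ut t x - q t x + W * ux t x = 0

/-- A corrector: `T(0) = 0`, `−(aνT')' + WT' = Wν` and `1/μ⁵ ≤ T' ≤ μ⁵`. -/
def IsCorrector (μ : ℝ) (ν a : ℝ → ℝ) (W : ℝ) (T : ℝ → ℝ) : Prop :=
  T 0 = 0 ∧ ∃ T' : ℝ → ℝ,
    (∀ x, HasDerivAt T (T' x) x) ∧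
    (∀ x, HasDerivAt (fun y => a y * ν y * T' y) (W * T' x - W * ν x) x) ∧
    (∀ x, 1 / μ ^ 5 ≤ T' x ∧ T' x ≤ μ ^ 5)

/-- An adjoint corrector: `T̃(0) = 0`, `(aνT̃')' + WT̃' = Wν` and `1/μ⁵ ≤ T̃' ≤ μ⁵`. -/
def IsAdjointCorrector (μ : ℝ) (ν a : ℝ → ℝ) (W : ℝ) (T : ℝ → ℝ) : Prop :=
  T 0 = 0 ∧ ∃ T' : ℝ → ℝ,
    (∀ x, HasDerivAt T (T' x) x) ∧
    (∀ x, HasDerivAt (fun y => a y * ν y * T' y) (W * ν x - W * T' x) x) ∧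
    (∀ x, 1 / μ ^ 5 ≤ T' x ∧ T' x ≤ μ ^ 5)

/-- A fundamental solution of the canonical equation. -/
def IsFundSol (ν a : ℝ → ℝ) (W : ℝ) (P : ℝ → ℝ → ℝ → ℝ) : Prop :=
  (∀ y : ℝ, IsCanonicalSolOn ν a W (fun t x => P t x y) (Set.Ioi 0)) ∧
  (∀ y : ℝ, ∀ t : ℝ, 0 < t → ∀ x : ℝ, 0 ≤ P t x y) ∧
  (∀ y : ℝ, ∀ t : ℝ, 0 < t → ∫ x : ℝ, ν x * P t x y = 1) ∧
  (∀ y : ℝ, ∀ φ : ℝ → ℝ, Continuous φ → (∃ B : ℝ, ∀ x, |φ x| ≤ B) →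
    Tendsto (fun t => ∫ x : ℝ, ν x * P t x y * φ x)
      (nhdsWithin 0 (Set.Ioi 0)) (nhds (φ y))) ∧
  (∀ s t : ℝ, 0 < s → 0 < t → ∀ x y : ℝ,
    P (t + s) x y = ∫ z : ℝ, ν z * P t x z * P s z y)

/-!
Dividing the spatial derivative of a solution by the derivative `T'` of the corrector makes the
weighted Dirichlet energy `∫ (∂ₓp)² / T'` nonincreasing in time: the drift enters its time
derivative only through the exact derivative of `(∂ₓp / T')²`. The energy identity and Nash's
inequality then bound this energy by a multiple of `t ^ (-3/2)`, with a constant depending only on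
`μ`, so that `t³ (p(t,x) - p(t,y))⁴ ≲ (x - y)²` by Cauchy–Schwarz for each fundamental solution.
This is `β = 1/2`, and integrating against `p₀` finishes.

A classical solution need not be regular or decay enough for these integrations by parts, so they
are carried out on double Steklov averages in time. That such averages solve the equation is itself
not immediate, as `∂ₜp` need not be locally integrable. Chapman–Kolmogorov and Fatou give joint
lower semicontinuity of `P`; an inf-convolution in time then shows that the time integral of a
solution is a supersolution, and conservation of mass leaves no room for strict inequality.
-/

section

open Set Topology intervalIntegral

/-! ### Elementary one-variable facts -/

lemma le_of_sub_le_mul_sq {φ : ℝ → ℝ} {s t C : ℝ} (hst : s ≤ t)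
    (h : ∀ p q, s ≤ p → p ≤ q → q ≤ t → φ q - φ p ≤ C * (q - p) ^ 2) : φ t ≤ φ s := by
  have mesh : ∀ n : ℕ, φ t - φ s ≤ C * (t - s) ^ 2 / (n + 1 : ℕ) := by
    intro n
    have hn : (0 : ℝ) < (n + 1 : ℕ) := by positivity
    set δ := (t - s) / (n + 1 : ℕ)
    have hδ : 0 ≤ δ := div_nonneg (sub_nonneg.2 hst) hn.le
    have hδn : (n + 1 : ℕ) * δ = t - s := mul_div_cancel₀ _ hn.ne'
    calc φ t - φ s
        = ∑ i ∈ Finset.range (n + 1), (φ (s + (i + 1 : ℕ) * δ) - φ (s + i * δ)) := by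
          rw [Finset.sum_range_sub (fun i : ℕ => φ (s + i * δ)), hδn]
          simp
      _ ≤ ∑ _i ∈ Finset.range (n + 1), C * δ ^ 2 := by
          refine Finset.sum_le_sum fun i hi => ?_
          have hi' : ((i + 1 : ℕ) : ℝ) ≤ (n + 1 : ℕ) := by
            exact_mod_cast Finset.mem_range.1 hi
          refine (h _ _ (by linarith [mul_nonneg i.cast_nonneg hδ]) ?_ ?_).trans_eq ?_
          · push_cast; linarith
          · linarith [mul_le_mul_of_nonneg_right hi' hδ]
          · push_cast; ring
      _ = C * (t - s) ^ 2 / (n + 1 : ℕ) := by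
          rw [Finset.sum_const, Finset.card_range, nsmul_eq_mul]
          simp only [δ]
          field_simp
  exact sub_nonpos.1 (ge_of_tendsto' ((tendsto_const_div_atTop_nhds_zero_nat _).comp
    (tendsto_add_atTop_nat 1)) mesh)

lemma mul_sub_pos_of_strictMono {s : ℝ → ℝ} (hs : StrictMono s) {p q x : ℝ} (hx : x ∈ uIoo p q) :
    0 < (s q - s p) * (s x - s p) := by
  rcases le_total p q with h | h
  · rw [uIoo_of_le h] at hx
    exact mul_pos (sub_pos.2 (hs (hx.1.trans hx.2))) (sub_pos.2 (hs hx.1))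
  · rw [uIoo_of_ge h] at hx
    exact mul_pos_of_neg_of_neg (sub_neg.2 (hs (hx.1.trans hx.2))) (sub_neg.2 (hs hx.2))

lemma mul_sub_nonpos_of_monotone {s : ℝ → ℝ} (hs : Monotone s) {p q x : ℝ} (hx : x ∈ uIcc p q) :
    (s q - s p) * (s x - s q) ≤ 0 := by
  rcases le_total p q with h | h
  · rw [uIcc_of_le h] at hx
    exact mul_nonpos_of_nonneg_of_nonpos (sub_nonneg.2 (hs h)) (sub_nonpos.2 (hs hx.2))
  · rw [uIcc_of_ge h] at hx
    exact mul_nonpos_of_nonpos_of_nonneg (sub_nonpos.2 (hs h)) (sub_nonneg.2 (hs hx.1))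

lemma nonneg_of_isLocalMin_of_hasDerivAt_flux {D D' κ : ℝ → ℝ} {x j : ℝ}
    (hmin : IsLocalMin D x) (hD : ∀ z, HasDerivAt D (D' z) z) (hκ : ∀ z, 0 < κ z)
    (hj : HasDerivAt (fun z => κ z * D' z) j x) : 0 ≤ j := by
  by_contra! hneg
  have hDx : D' x = 0 := hmin.hasDerivAt_eq_zero (hD x)
  have hslope : ∀ᶠ z in 𝓝[>] x, D' z < 0 := by
    have hlt := (hasDerivAt_iff_tendsto_slope.1 hj).eventually_lt_const hneg
    filter_upwards [nhdsWithin_mono x (fun z (hz : x < z) => hz.ne') hlt, self_mem_nhdsWithin]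
      with z hz (hxz : x < z)
    rw [slope_def_field, hDx, mul_zero, sub_zero, div_neg_iff] at hz
    rcases hz with h | h
    · linarith [h.2]
    · exact neg_of_mul_neg_right h.1 (hκ z).le
  obtain ⟨y, hxy, hy⟩ := mem_nhdsGT_iff_exists_Ioo_subset.1 hslope
  obtain ⟨z, hz, hxz, hzy⟩ :=
    ((hmin.filter_mono nhdsWithin_le_nhds).and (Ioo_mem_nhdsGT hxy)).exists
  obtain ⟨ξ, hξ, hξD⟩ := exists_hasDerivAt_eq_slope D D' hxz
    (fun w _ => (hD w).continuousAt.continuousWithinAt) fun w _ => hD w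
  have : D' ξ < 0 := hy ⟨hξ.1, hξ.2.trans hzy⟩
  rw [hξD, div_neg_iff] at this
  rcases this with h | h <;> linarith [h.1, h.2]

lemma exists_lt_lowerSemicontinuous_intervalIntegral_sub_le {f : ℝ → ℝ} {p q δ : ℝ} (hpq : p ≤ q)
    (hf : IntervalIntegrable f volume p q) (hδ : 0 < δ) :
    ∃ l : ℝ → EReal, LowerSemicontinuous l ∧ (∀ᵐ z, l z < ⊤) ∧
      (∀ z ∈ Ioc p q, (f z : EReal) < l z) ∧
      IntervalIntegrable (fun z => (l z).toReal) volume p q ∧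
      (∀ᵐ z, z ∈ Ioc p q → f z ≤ (l z).toReal) ∧ ∫ z in p..q, ((l z).toReal - f z) ≤ δ := by
  have hfi : Integrable (indicator (Ioc p q) f) := (integrable_indicator_iff measurableSet_Ioc).2
    ((intervalIntegrable_iff_integrableOn_Ioc_of_le hpq).1 hf)
  obtain ⟨l, hfl, hl, hint, htop, hlt⟩ := exists_lt_lowerSemicontinuous_integral_lt _ hfi hδ
  have hle : ∀ᵐ z, indicator (Ioc p q) f z ≤ (l z).toReal := by
    filter_upwards [htop] with z hz
    rw [← EReal.coe_le_coe_iff, EReal.coe_toReal hz.ne (bot_lt_of_lt (hfl z)).ne']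
    exact (hfl z).le
  refine ⟨l, hl, htop, fun z hz => by simpa only [indicator_of_mem hz] using hfl z,
    hint.intervalIntegrable,
    hle.mono fun z hz hzm => by rwa [indicator_of_mem hzm] at hz, ?_⟩
  calc ∫ z in p..q, ((l z).toReal - f z)
      = ∫ z in Ioc p q, ((l z).toReal - indicator (Ioc p q) f z) := by
        rw [integral_of_le hpq]
        exact setIntegral_congr_fun measurableSet_Ioc fun z hz => by simp only [indicator_of_mem hz]
    _ ≤ ∫ z, ((l z).toReal - indicator (Ioc p q) f z) :=
        setIntegral_le_integral (hint.sub hfi) (hle.mono fun z hz => sub_nonneg.2 hz)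
    _ ≤ δ := by rw [MeasureTheory.integral_sub hint hfi]; linarith

/-! ### Scale functions and viscosity supersolutions -/

/-- `s` is a scale function of the conductivity `κ`, i.e. `κ s' = 1`; the flux operator
`(κ g')'` is then the second derivative with respect to `s`, up to the weight `κ⁻¹`. -/
structure IsScale (κ s : ℝ → ℝ) : Prop where
  continuous_flux : Continuous κ
  pos : ∀ x, 0 < κ x
  hasDerivAt : ∀ x, HasDerivAt s (κ x)⁻¹ x

/-- The solution `g` of `(κ g')' = f`, `g p = (κ g') p = 0`, where `κ s' = 1`. -/
noncomputable def fluxPrimitive (s f : ℝ → ℝ) (p x : ℝ) : ℝ := ∫ z in p..x, (s x - s z) * f z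

/-- `(κ g')' ≤ f` on `(p, q)` in the viscosity sense, tested with quadratic polynomials in the
scale function `s`. -/
def IsViscositySupersol (κ s g f : ℝ → ℝ) (p q : ℝ) : Prop :=
  ∀ x ∈ Ioo p q, ∀ b c,
    (∀ᶠ z in 𝓝 x, g x + b * (s z - s x) + c * (s z - s x) ^ 2 / 2 ≤ g z) → c ≤ κ x * f x

/-- The height of `g x` above the chord of `g` over `[p, q]`, measured in the scale variable `s`
and multiplied by `s q - s p`. It is nonnegative for all `p < x < q` exactly when `g` is a concave
function of `s`. -/
def chordGap (s g : ℝ → ℝ) (p x q : ℝ) : ℝ :=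
  (s q - s p) * g x - (s q - s x) * g p - (s x - s p) * g q

namespace IsScale

variable {κ s : ℝ → ℝ} (hs : IsScale κ s)
include hs

lemma continuous : Continuous s :=
  continuous_iff_continuousAt.2 fun x => (hs.hasDerivAt x).continuousAt

lemma strictMono : StrictMono s :=
  strictMono_of_deriv_pos fun x => (hs.hasDerivAt x).deriv ▸ inv_pos.2 (hs.pos x)

lemma continuous_inv : Continuous fun x => (κ x)⁻¹ :=
  hs.continuous_flux.inv₀ fun x => (hs.pos x).ne'

lemma intervalIntegrable_kernel {f : ℝ → ℝ} {p q : ℝ} (hf : IntervalIntegrable f volume p q)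
    (x : ℝ) : IntervalIntegrable (fun z => (s x - s z) * f z) volume p q :=
  hf.continuousOn_mul (continuous_const.sub hs.continuous).continuousOn

lemma fluxPrimitive_const_div (c p x : ℝ) :
    fluxPrimitive s (fun z => c * (κ z)⁻¹) p x = c * (s x - s p) ^ 2 / 2 := by
  have hderiv : ∀ z, HasDerivAt (fun z => -(c * (s x - s z) ^ 2 / 2))
      ((s x - s z) * (c * (κ z)⁻¹)) z := fun z => by
    refine (((((hs.hasDerivAt z).const_sub (s x)).pow 2).const_mul c).div_const
      2).neg.congr_deriv ?_
    push_cast; ring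
  rw [fluxPrimitive, integral_eq_sub_of_hasDerivAt (fun z _ => hderiv z)
    (((continuous_const.sub hs.continuous).mul
      (continuous_const.mul hs.continuous_inv)).intervalIntegrable _ _)]
  ring

lemma fluxPrimitive_mono {f g : ℝ → ℝ} {p x : ℝ} (hf : IntervalIntegrable f volume p x)
    (hg : IntervalIntegrable g volume p x) (hfg : ∀ᵐ z, z ∈ uIoc p x → f z ≤ g z) :
    fluxPrimitive s f p x ≤ fluxPrimitive s g p x := by
  unfold fluxPrimitive
  rcases le_total p x with hpx | hxp
  · refine integral_mono_ae_restrict hpx (hs.intervalIntegrable_kernel hf x)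
      (hs.intervalIntegrable_kernel hg x) ?_
    rw [EventuallyLE, ← restrict_Ioc_eq_restrict_Icc, ae_restrict_iff' measurableSet_Ioc]
    filter_upwards [hfg] with z hz hzm
    exact mul_le_mul_of_nonneg_left (hz (by rwa [uIoc_of_le hpx]))
      (sub_nonneg.2 (hs.strictMono.monotone hzm.2))
  · rw [integral_symm, integral_symm x p, neg_le_neg_iff]
    refine integral_mono_ae_restrict hxp (hs.intervalIntegrable_kernel hg.symm x)
      (hs.intervalIntegrable_kernel hf.symm x) ?_
    rw [EventuallyLE, ← restrict_Ioc_eq_restrict_Icc, ae_restrict_iff' measurableSet_Ioc]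
    filter_upwards [hfg] with z hz hzm
    exact mul_le_mul_of_nonpos_left (hz (by rwa [uIoc_of_ge hxp]))
      (sub_nonpos.2 (hs.strictMono.monotone hzm.1.le))

lemma fluxPrimitive_rebase {f : ℝ → ℝ} {p x z : ℝ} (hpx : IntervalIntegrable f volume p x)
    (hxz : IntervalIntegrable f volume x z) :
    fluxPrimitive s f p z =
      fluxPrimitive s f p x + (s z - s x) * (∫ w in p..x, f w) + fluxPrimitive s f x z := by
  unfold fluxPrimitive
  rw [← integral_add_adjacent_intervals (hs.intervalIntegrable_kernel hpx z)
    (hs.intervalIntegrable_kernel hxz z), ← intervalIntegral.integral_const_mul,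
    ← integral_add (hs.intervalIntegrable_kernel hpx x) (hpx.const_mul _)]
  congr 2
  ext w
  ring

lemma continuousOn_fluxPrimitive {f : ℝ → ℝ} {p q : ℝ} (hpq : p ≤ q)
    (hf : IntervalIntegrable f volume p q) :
    ContinuousOn (fluxPrimitive s f p) (Icc p q) := by
  have hexpand : EqOn (fluxPrimitive s f p)
      (fun x => s x * (∫ z in p..x, f z) - ∫ z in p..x, s z * f z) (Icc p q) := by
    intro x hx
    have hfx : IntervalIntegrable f volume p x :=
      hf.mono_set (uIcc_subset_uIcc left_mem_uIcc (by rwa [uIcc_of_le hpq]))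
    simp only [fluxPrimitive, sub_mul]
    rw [integral_sub (hfx.const_mul _) (hfx.continuousOn_mul hs.continuous.continuousOn),
      intervalIntegral.integral_const_mul]
  have hprim : ∀ {g : ℝ → ℝ}, IntervalIntegrable g volume p q →
      ContinuousOn (fun x => ∫ z in p..x, g z) (Icc p q) := fun {g} hg => by
    have hg' : IntegrableOn g (uIcc p q) := by
      rwa [uIcc_of_le hpq, ← intervalIntegrable_iff_integrableOn_Icc_of_le hpq]
    have := continuousOn_primitive_interval (a := p) (b := q) hg'
    rwa [uIcc_of_le hpq] at this
  exact ((hs.continuous.continuousOn.mul (hprim hf)).sub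
    (hprim (hf.continuousOn_mul hs.continuous.continuousOn))).congr hexpand

/-- Just below its value at a point of lower semicontinuity, the right-hand side of
`(κ Z')' = l` is a lower bound for the curvature of `Z` with respect to `s`. -/
lemma eventually_quadratic_le_fluxPrimitive {l : ℝ → EReal} {x c p q : ℝ} (hx : x ∈ Ioo p q)
    (hl : LowerSemicontinuous l) (htop : ∀ᵐ z, l z < ⊤)
    (hint : IntervalIntegrable (fun z => (l z).toReal) volume p q)
    (hc : ((c * (κ x)⁻¹ : ℝ) : EReal) < l x) :
    ∀ᶠ z in 𝓝 x, c * (s z - s x) ^ 2 / 2 ≤ fluxPrimitive s (fun z => (l z).toReal) x z := by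
  obtain ⟨M, hcM, hMl⟩ := EReal.lt_iff_exists_real_btwn.1 hc
  have hnear : ∀ᶠ z in 𝓝 x, z ∈ Ioo p q ∧ c * (κ z)⁻¹ < M ∧ (M : EReal) < l z :=
    (show ∀ᶠ z in 𝓝 x, z ∈ Ioo p q from Ioo_mem_nhds hx.1 hx.2).and <|
      ((continuous_const.mul hs.continuous_inv).continuousAt.eventually_lt_const
        (EReal.coe_lt_coe_iff.1 hcM)).and (hl x M hMl)
  obtain ⟨ε, hε, hball⟩ := Metric.eventually_nhds_iff_ball.1 hnear
  filter_upwards [Metric.ball_mem_nhds x hε] with z hz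
  have huIcc : uIcc x z ⊆ Metric.ball x ε :=
    (convex_ball x ε).ordConnected.uIcc_subset (Metric.mem_ball_self hε) hz
  rw [← hs.fluxPrimitive_const_div]
  refine hs.fluxPrimitive_mono ((continuous_const.mul hs.continuous_inv).intervalIntegrable _ _)
    (hint.mono_set fun w hw => ?_) ?_
  · exact Icc_subset_uIcc (Ioo_subset_Icc_self (hball w (huIcc hw)).1)
  · filter_upwards [htop] with w hw hwm
    obtain ⟨-, hcw, hlw⟩ := hball w (huIcc (uIoc_subset_uIcc hwm))
    rw [← EReal.coe_le_coe_iff, EReal.coe_toReal hw.ne (bot_lt_of_lt hlw).ne']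
    exact (EReal.coe_lt_coe_iff.2 hcw).le.trans hlw.le

lemma exists_touching_of_chordGap_lt {g Z : ℝ → ℝ} {p x q : ℝ} (hpx : p < x) (hxq : x < q)
    (hg : LowerSemicontinuousOn g (Icc p q)) (hZ : ContinuousOn Z (Icc p q))
    (hlt : chordGap s g p x q < chordGap s Z p x q) :
    ∃ x₀ ∈ Ioo p q, ∃ m, ∀ z ∈ Icc p q, g x₀ + m * (s z - s x₀) + (Z z - Z x₀) ≤ g z := by
  have hpq := hpx.trans hxq
  have hspq : 0 < s q - s p := sub_pos.2 (hs.strictMono hpq)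
  set m := (g q - Z q - (g p - Z p)) / (s q - s p)
  have hm : m * (s q - s p) = g q - Z q - (g p - Z p) := div_mul_cancel₀ _ hspq.ne'
  let D : ℝ → ℝ := fun y => g y + (-Z y - m * (s y - s p))
  have hD : LowerSemicontinuousOn D (Icc p q) := hg.add (hZ.neg.sub
    ((hs.continuous.sub continuous_const).const_mul m).continuousOn).lowerSemicontinuousOn
  obtain ⟨x₀, hx₀, hmin⟩ := hD.exists_isMinOn ⟨p, left_mem_Icc.2 hpq.le⟩ isCompact_Icc
  have hDx : D x < D p := by
    refine lt_of_mul_lt_mul_left ?_ hspq.le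
    simp only [chordGap] at hlt
    calc (s q - s p) * D x
        = (s q - s p) * (g x - Z x) - (m * (s q - s p)) * (s x - s p) := by simp only [D]; ring
      _ < (s q - s p) * D p := by simp only [hm, D]; linarith
  have hDq : D q = D p := by simp only [D]; linarith
  have hD₀ : D x₀ < D p := (hmin ⟨hpx.le, hxq.le⟩).trans_lt hDx
  refine ⟨x₀, ⟨hx₀.1.lt_of_ne ?_, hx₀.2.lt_of_ne ?_⟩, m, fun z hz => ?_⟩
  · rintro rfl; exact hD₀.false
  · rintro rfl; exact (hDq ▸ hD₀).false
  · have hle : D x₀ ≤ D z := hmin hz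
    simp only [D] at hle
    linarith

lemma chordGap_fluxPrimitive_le_of_lt {g f : ℝ → ℝ} {l : ℝ → EReal} {p x q : ℝ} (hpx : p < x)
    (hxq : x < q) (hg : LowerSemicontinuousOn g (Icc p q))
    (hvisc : IsViscositySupersol κ s g f p q) (hfl : ∀ z ∈ Ioo p q, (f z : EReal) < l z)
    (hl : LowerSemicontinuous l) (htop : ∀ᵐ z, l z < ⊤)
    (hint : IntervalIntegrable (fun z => (l z).toReal) volume p q) :
    chordGap s (fluxPrimitive s (fun z => (l z).toReal) p) p x q ≤ chordGap s g p x q := by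
  by_contra! hlt
  obtain ⟨x₀, hx₀, m, htouch⟩ := hs.exists_touching_of_chordGap_lt hpx hxq hg
    (hs.continuousOn_fluxPrimitive (hpx.trans hxq).le hint) hlt
  obtain ⟨d, hfd, hdl⟩ := EReal.lt_iff_exists_real_btwn.1 (hfl x₀ hx₀)
  have hκ₀ := hs.pos x₀
  have hquad := hs.eventually_quadratic_le_fluxPrimitive (c := κ x₀ * d) hx₀ hl htop hint
    (by rwa [mul_comm, inv_mul_cancel_left₀ hκ₀.ne'])
  refine absurd (hvisc x₀ hx₀ (m + ∫ w in p..x₀, (l w).toReal) (κ x₀ * d) ?_)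
    (not_le.2 (mul_lt_mul_of_pos_left (EReal.coe_lt_coe_iff.1 hfd) hκ₀))
  filter_upwards [hquad, Ioo_mem_nhds hx₀.1 hx₀.2] with z hz hzI
  have hx₀' := Icc_subset_uIcc (Ioo_subset_Icc_self hx₀)
  have hrebase := hs.fluxPrimitive_rebase
    (hint.mono_set (uIcc_subset_uIcc left_mem_uIcc hx₀'))
    (hint.mono_set (uIcc_subset_uIcc hx₀' (Icc_subset_uIcc (Ioo_subset_Icc_self hzI))))
  linarith [htouch z (Ioo_subset_Icc_self hzI)]

lemma fluxPrimitive_sub_le {f g : ℝ → ℝ} {p q : ℝ} (hpq : p ≤ q)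
    (hf : IntervalIntegrable f volume p q) (hg : IntervalIntegrable g volume p q)
    (hfg : ∀ᵐ z, z ∈ Ioc p q → f z ≤ g z) :
    fluxPrimitive s g p q - fluxPrimitive s f p q ≤ (s q - s p) * ∫ z in p..q, (g z - f z) := by
  unfold fluxPrimitive
  rw [← integral_sub (hs.intervalIntegrable_kernel hg q) (hs.intervalIntegrable_kernel hf q),
    ← intervalIntegral.integral_const_mul]
  refine integral_mono_ae_restrict hpq ((hs.intervalIntegrable_kernel hg q).sub
    (hs.intervalIntegrable_kernel hf q)) ((hg.sub hf).const_mul _) ?_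
  rw [EventuallyLE, ← restrict_Ioc_eq_restrict_Icc, ae_restrict_iff' measurableSet_Ioc]
  filter_upwards [hfg] with z hz hzm
  rw [← mul_sub]
  exact mul_le_mul_of_nonneg_right
    (by linarith [hs.strictMono.monotone hzm.1.le]) (sub_nonneg.2 (hz hzm))

/-- A viscosity supersolution of `(κ g')' ≤ f` lies above its chords at least as much as the
solution `fluxPrimitive s f p` of the equation does. Vitali–Carathéodory replaces `f` by a lower
semicontinuous function above it, for which a failure of concavity produces a forbidden touching
point. -/
lemma chordGap_fluxPrimitive_le {g f : ℝ → ℝ} {p x q : ℝ} (hpx : p < x) (hxq : x < q)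
    (hg : LowerSemicontinuousOn g (Icc p q)) (hvisc : IsViscositySupersol κ s g f p q)
    (hf : IntervalIntegrable f volume p q) :
    chordGap s (fluxPrimitive s f p) p x q ≤ chordGap s g p x q := by
  have hpq := hpx.trans hxq
  have hspx : 0 < s x - s p := sub_pos.2 (hs.strictMono hpx)
  have hspq : 0 < s q - s p := sub_pos.2 (hs.strictMono hpq)
  refine le_of_forall_pos_le_add fun ε hε => ?_
  set δ := ε / ((s x - s p) * (s q - s p))
  obtain ⟨l, hl, htop, hfl, hlpq, hle, hmass⟩ :=
    exists_lt_lowerSemicontinuous_intervalIntegral_sub_le hpq.le hf (show 0 < δ by positivity)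
  have hlower : fluxPrimitive s f p x ≤ fluxPrimitive s (fun z => (l z).toReal) p x := by
    have hsub : uIcc p x ⊆ uIcc p q :=
      uIcc_subset_uIcc left_mem_uIcc (Icc_subset_uIcc ⟨hpx.le, hxq.le⟩)
    refine hs.fluxPrimitive_mono (hf.mono_set hsub) (hlpq.mono_set hsub) ?_
    filter_upwards [hle] with z hz hzm
    rw [uIoc_of_le hpx.le] at hzm
    exact hz ⟨hzm.1, hzm.2.trans hxq.le⟩
  have hupper := (hs.fluxPrimitive_sub_le hpq.le hf hlpq hle).trans
    (mul_le_mul_of_nonneg_left hmass hspq.le)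
  have hconc := hs.chordGap_fluxPrimitive_le_of_lt hpx hxq hg hvisc
    (fun z hz => hfl z (Ioo_subset_Ioc_self hz)) hl htop hlpq
  have hδ : (s x - s p) * ((s q - s p) * δ) = ε := by
    simp only [δ]; field_simp
  have hp : ∀ h, fluxPrimitive s h p p = 0 := fun h => integral_same
  simp only [chordGap, hp] at hconc ⊢
  linarith [mul_le_mul_of_nonneg_left hlower hspq.le, mul_le_mul_of_nonneg_left hupper hspx.le]

end IsScale

/-! ### Inf-convolution in time -/

/-- Inf-convolution in time, over the window `[a, b]` and with parameter `N ^ 2`, of the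
truncation of `u` at height `N`. -/
noncomputable def timeInfConv (u : ℝ → ℝ → ℝ) (a b N t x : ℝ) : ℝ :=
  sInf ((fun r => min (u r x) N + N ^ 2 * (t - r) ^ 2) '' Icc a b)

section TimeInfConv

variable {u : ℝ → ℝ → ℝ} {a b N t x : ℝ}

lemma exists_timeInfConv_eq (hab : a ≤ b) (hu : ContinuousOn (fun r => u r x) (Icc a b))
    (N t : ℝ) : ∃ r ∈ Icc a b, timeInfConv u a b N t x = min (u r x) N + N ^ 2 * (t - r) ^ 2 ∧
      ∀ r' ∈ Icc a b, timeInfConv u a b N t x ≤ min (u r' x) N + N ^ 2 * (t - r') ^ 2 := by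
  obtain ⟨r, hr, heq, hle⟩ := isCompact_Icc.exists_sInf_image_eq_and_le
    ⟨a, left_mem_Icc.2 hab⟩ ((hu.inf continuousOn_const).add
      (show ContinuousOn (fun r => N ^ 2 * (t - r) ^ 2) (Icc a b) by fun_prop))
  exact ⟨r, hr, heq, fun r' hr' => heq.trans_le (hle r' hr')⟩

lemma timeInfConv_nonneg (hu0 : ∀ r ∈ Icc a b, 0 ≤ u r x) (hN : 0 ≤ N) :
    0 ≤ timeInfConv u a b N t x := by
  refine Real.sInf_nonneg ?_
  rintro - ⟨r, hr, rfl⟩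
  have := le_min (hu0 r hr) hN
  positivity

lemma timeInfConv_le_min (hu : ContinuousOn (fun r => u r x) (Icc a b)) (ht : t ∈ Icc a b) :
    timeInfConv u a b N t x ≤ min (u t x) N := by
  obtain ⟨-, -, -, hle⟩ := exists_timeInfConv_eq (ht.1.trans ht.2) hu N t
  simpa using hle t ht

lemma timeInfConv_sub_le (hab : a ≤ b) (hu : ContinuousOn (fun r => u r x) (Icc a b)) {t' : ℝ}
    (ht : t ∈ Icc a b) (ht' : t' ∈ Icc a b) :
    timeInfConv u a b N t' x - timeInfConv u a b N t x ≤ N ^ 2 * (2 * (b - a)) * |t' - t| := by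
  obtain ⟨r, hr, heq, -⟩ := exists_timeInfConv_eq hab hu N t
  obtain ⟨-, -, -, hle⟩ := exists_timeInfConv_eq hab hu N t'
  have hsum : |t' - r + (t - r)| ≤ 2 * (b - a) :=
    abs_le.2 ⟨by linarith [hr.2, ht.1, ht'.1], by linarith [hr.1, ht.2, ht'.2]⟩
  calc timeInfConv u a b N t' x - timeInfConv u a b N t x
      ≤ N ^ 2 * ((t' - r + (t - r)) * (t' - t)) := by rw [heq]; linarith [hle r hr]
    _ ≤ N ^ 2 * (2 * (b - a) * |t' - t|) := by
        refine mul_le_mul_of_nonneg_left ((le_abs_self _).trans ?_) (sq_nonneg N)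
        rw [abs_mul]
        exact mul_le_mul_of_nonneg_right hsum (abs_nonneg _)
    _ = _ := by ring

lemma abs_timeInfConv_sub_le (hab : a ≤ b) (hu : ContinuousOn (fun r => u r x) (Icc a b)) {t' : ℝ}
    (ht : t ∈ Icc a b) (ht' : t' ∈ Icc a b) :
    |timeInfConv u a b N t' x - timeInfConv u a b N t x| ≤ N ^ 2 * (2 * (b - a)) * |t' - t| :=
  abs_sub_le_iff.2 ⟨timeInfConv_sub_le hab hu ht ht',
    abs_sub_comm t t' ▸ timeInfConv_sub_le hab hu ht' ht⟩

lemma continuousOn_timeInfConv (hab : a ≤ b) (hu : ContinuousOn (fun r => u r x) (Icc a b)) :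
    ContinuousOn (fun t => timeInfConv u a b N t x) (Icc a b) := by
  refine (LipschitzOnWith.of_dist_le_mul (K := (N ^ 2 * (2 * (b - a))).toNNReal)
    fun t ht t' ht' => ?_).continuousOn
  rw [Real.coe_toNNReal _ (mul_nonneg (sq_nonneg N) (by linarith)), Real.dist_eq, Real.dist_eq]
  exact abs_timeInfConv_sub_le hab hu ht' ht

lemma tendsto_timeInfConv (hu0 : ∀ r ∈ Icc a b, 0 ≤ u r x)
    (hu : ContinuousOn (fun r => u r x) (Icc a b)) (ht : t ∈ Icc a b) :
    Tendsto (fun n : ℕ => timeInfConv u a b n t x) atTop (𝓝 (u t x)) := by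
  refine Metric.tendsto_atTop.2 fun ε hε => ?_
  obtain ⟨δ, hδ, hclose⟩ := Metric.continuousOn_iff.1 hu t ht ε hε
  obtain ⟨n₀, hn₀⟩ := exists_nat_ge (max 1 (max (u t x) (u t x / δ ^ 2)))
  refine ⟨n₀, fun n hn => ?_⟩
  have hnn : (n₀ : ℝ) ≤ n := Nat.cast_le.2 hn
  have hn1 : (1 : ℝ) ≤ n := (le_max_left _ _).trans (hn₀.trans hnn)
  have hnu : u t x ≤ n := (le_max_left _ _).trans ((le_max_right _ _).trans (hn₀.trans hnn))
  have hnδ : u t x ≤ n * δ ^ 2 := (div_le_iff₀ (by positivity)).1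
    ((le_max_right _ _).trans ((le_max_right _ _).trans (hn₀.trans hnn)))
  have hupper := (timeInfConv_le_min (N := n) hu ht).trans (min_le_left _ _)
  obtain ⟨r, hr, heq, -⟩ := exists_timeInfConv_eq (ht.1.trans ht.2) hu n t
  have hmin := le_min (hu0 r hr) n.cast_nonneg
  rw [Real.dist_eq, abs_of_nonpos (sub_nonpos.2 hupper), neg_sub, heq]
  rcases lt_or_ge |t - r| δ with hnear | hfar
  · have hr' : u t x - ε < min (u r x) n := lt_min
      (by linarith [(abs_lt.1 (hclose r hr (by rwa [dist_comm, Real.dist_eq]))).1])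
      (by linarith)
    linarith [mul_nonneg (sq_nonneg (n : ℝ)) (sq_nonneg (t - r))]
  · have hsq : δ ^ 2 ≤ (t - r) ^ 2 := by
      rw [← sq_abs (t - r)]; exact pow_le_pow_left₀ hδ.le hfar 2
    have : (n : ℝ) * δ ^ 2 ≤ n ^ 2 * (t - r) ^ 2 :=
      mul_le_mul (by nlinarith) hsq (sq_nonneg δ) (sq_nonneg _)
    linarith

lemma lowerSemicontinuous_timeInfConv (hab : a ≤ b)
    (hu : ∀ x, ContinuousOn (fun r => u r x) (Icc a b))
    (hlsc : ∀ r ∈ Icc a b, ∀ x, LowerSemicontinuousAt (Function.uncurry u) (r, x)) (N t : ℝ) :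
    LowerSemicontinuous (timeInfConv u a b N t) := by
  intro x y hy
  have hjoint : ∀ r ∈ Icc a b, ∀ᶠ z : ℝ × ℝ in 𝓝 (x, r),
      y < min (u z.2 z.1) N + N ^ 2 * (t - z.2) ^ 2 := by
    intro r hr
    obtain ⟨-, -, -, hle⟩ := exists_timeInfConv_eq hab (hu x) N t
    have hF : LowerSemicontinuousAt
        (fun z : ℝ × ℝ => min (u z.1 z.2) N + N ^ 2 * (t - z.1) ^ 2) (r, x) :=
      ((hlsc r hr x).inf lowerSemicontinuousAt_const).add
        (Continuous.lowerSemicontinuous (by fun_prop) (r, x))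
    exact (continuous_swap.tendsto (x, r)).eventually (hF y (hy.trans_le (hle r hr)))
  filter_upwards [isCompact_Icc.eventually_forall_of_forall_eventually
    (P := fun z r => y < min (u r z) N + N ^ 2 * (t - r) ^ 2) hjoint] with z hz
  obtain ⟨r, hr, heq, -⟩ := exists_timeInfConv_eq hab (hu z) N t
  exact heq ▸ hz r hr

end TimeInfConv

/-- `u` is a classical solution of the divergence-form equation `m ∂ₜu = ∂ₓ(κ ∂ₓu)` on
`(0, ∞) × ℝ`. -/
def IsDivergenceSol (κ m : ℝ → ℝ) (u : ℝ → ℝ → ℝ) : Prop :=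
  ∃ ut ux : ℝ → ℝ → ℝ, ∀ t, 0 < t → ∀ x,
    HasDerivAt (fun r => u r x) (ut t x) t ∧ HasDerivAt (u t) (ux t x) x ∧
      HasDerivAt (fun z => κ z * ux t z) (m x * ut t x) x

lemma IsDivergenceSol.continuousAt_time {κ m : ℝ → ℝ} {u : ℝ → ℝ → ℝ}
    (hu : IsDivergenceSol κ m u) {t : ℝ} (ht : 0 < t) (x : ℝ) :
    ContinuousAt (fun r => u r x) t := by
  obtain ⟨ut, ux, hu⟩ := hu
  exact (hu t ht x).1.continuousAt

lemma IsDivergenceSol.continuous {κ m : ℝ → ℝ} {u : ℝ → ℝ → ℝ}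
    (hu : IsDivergenceSol κ m u) {t : ℝ} (ht : 0 < t) : Continuous (u t) := by
  obtain ⟨ut, ux, hu⟩ := hu
  exact continuous_iff_continuousAt.2 fun x => (hu t ht x).2.1.continuousAt

namespace IsScale

variable {κ s m : ℝ → ℝ} (hs : IsScale κ s)
include hs

lemma le_mul_of_touch {U U' : ℝ → ℝ} {x b c j : ℝ} (hU : ∀ z, HasDerivAt U (U' z) z)
    (hj : HasDerivAt (fun z => κ z * U' z) j x)
    (htouch : ∀ᶠ z in 𝓝 x, U x + b * (s z - s x) + c * (s z - s x) ^ 2 / 2 ≤ U z) :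
    c ≤ κ x * j := by
  let D : ℝ → ℝ := fun z => U z - (b * (s z - s x) + c * (s z - s x) ^ 2 / 2)
  have hD : ∀ z, HasDerivAt D (U' z - (b + c * (s z - s x)) * (κ z)⁻¹) z := fun z => by
    have hsz := (hs.hasDerivAt z).sub_const (s x)
    refine ((hU z).sub ((hsz.const_mul b).add (((hsz.pow 2).const_mul c).div_const 2))).congr_deriv
      ?_
    push_cast; ring
  have hflux : HasDerivAt (fun z => κ z * (U' z - (b + c * (s z - s x)) * (κ z)⁻¹))
      (j - c * (κ x)⁻¹) x := by
    have heq : (fun z => κ z * (U' z - (b + c * (s z - s x)) * (κ z)⁻¹)) =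
        fun z => κ z * U' z - (b + c * (s z - s x)) := by
      ext z
      have := (hs.pos z).ne'
      field_simp
    rw [heq]
    exact hj.sub ((((hs.hasDerivAt x).sub_const (s x)).const_mul c).const_add b)
  have hmin : IsLocalMin D x := by
    filter_upwards [htouch] with z hz
    simp only [D, sub_self]
    linarith
  have := nonneg_of_isLocalMin_of_hasDerivAt_flux hmin hD hs.pos hflux
  rw [mul_comm]
  exact (mul_inv_le_iff₀ (hs.pos x)).1 (by linarith)

lemma le_mul_of_touch_min {u : ℝ → ℝ → ℝ} {N t r x b c : ℝ} (hu : IsDivergenceSol κ m u)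
    (hr : 0 < r)
    (htime : ∀ᶠ r' in 𝓝 r,
      min (u r x) N + N ^ 2 * (t - r) ^ 2 ≤ min (u r' x) N + N ^ 2 * (t - r') ^ 2)
    (hspace : ∀ᶠ z in 𝓝 x,
      min (u r x) N + b * (s z - s x) + c * (s z - s x) ^ 2 / 2 ≤ min (u r z) N) :
    c ≤ κ x * (m x * (2 * N ^ 2 * (t - r))) := by
  have hpen : HasDerivAt (fun r' => N ^ 2 * (t - r') ^ 2) (-(2 * N ^ 2 * (t - r))) r :=
    ((((hasDerivAt_id r).const_sub t).pow 2).const_mul (N ^ 2)).congr_deriv (by simp; ring)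
  have hcont := hu.continuousAt_time hr x
  have hcontx := (hu.continuous hr).continuousAt (x := x)
  obtain ⟨ut, ux, hu⟩ := hu
  rcases le_or_gt (u r x) N with hle | hgt
  · rw [min_eq_left hle] at htime hspace
    have hmin : IsLocalMin (fun r' => u r' x + N ^ 2 * (t - r') ^ 2) r := by
      filter_upwards [htime] with r' hr'
      exact hr'.trans (by gcongr; exact min_le_left _ _)
    have hut : ut r x = 2 * N ^ 2 * (t - r) := by
      linarith [hmin.hasDerivAt_eq_zero ((hu r hr x).1.add hpen)]
    rw [← hut]
    exact hs.le_mul_of_touch (fun z => (hu r hr z).2.1) (hu r hr x).2.2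
      (hspace.mono fun z hz => hz.trans (min_le_left _ _))
  · rw [min_eq_right hgt.le] at htime hspace
    have hmin : IsLocalMin (fun r' => N ^ 2 * (t - r') ^ 2) r := by
      filter_upwards [htime, hcont.eventually_const_lt hgt] with r' hr' hN
      rw [min_eq_right hN.le] at hr'
      linarith
    have hτ : 2 * N ^ 2 * (t - r) = 0 := by linarith [hmin.hasDerivAt_eq_zero hpen]
    rw [hτ, mul_zero]
    refine hs.le_mul_of_touch (U := fun _ => N) (U' := fun _ => 0) (x := x) (b := b)
      (fun z => hasDerivAt_const z N) (by simpa using hasDerivAt_const x (0 : ℝ)) ?_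
    filter_upwards [hspace, hcontx.eventually_const_lt hgt] with z hz hN
    rwa [min_eq_right hN.le] at hz

/-- At a point of touching from below, the time derivative of the solution is the slope
`2 N² (t - r)` of the penalisation at its minimiser `r`, and this bounds the backward difference
quotient of the inf-convolution from below. -/
lemma isViscositySupersol_timeInfConv {u : ℝ → ℝ → ℝ} {a b N t h δ : ℝ}
    (hu : IsDivergenceSol κ m u) (hm : ∀ x, 0 ≤ m x) (ha : 0 < a)
    (hu0 : ∀ r ∈ Icc a b, ∀ x, 0 ≤ u r x) (hN : 0 < N) (hNδ : 1 < N * δ ^ 2) (hδ : 0 < δ)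
    (ht : t ∈ Icc (a + δ) (b - δ)) (hh : 0 < h) (p q : ℝ) :
    IsViscositySupersol κ s (timeInfConv u a b N t)
      (fun x => m x * ((timeInfConv u a b N t x - timeInfConv u a b N (t - h) x) / h + N ^ 2 * h))
      p q := by
  intro x _ β c htouch
  have hab : a ≤ b := by linarith [ht.1, ht.2]
  have htab : t ∈ Icc a b := ⟨by linarith [ht.1], by linarith [ht.2]⟩
  have hcont : ∀ z, ContinuousOn (fun r => u r z) (Icc a b) := fun z r hr =>
    (hu.continuousAt_time (ha.trans_le hr.1) z).continuousWithinAt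
  obtain ⟨r, hr, heq, hle⟩ := exists_timeInfConv_eq hab (hcont x) N t
  have hnear : |t - r| < δ := by
    by_contra! hfar
    have hsq : δ ^ 2 ≤ (t - r) ^ 2 := by
      rw [← sq_abs (t - r)]; exact pow_le_pow_left₀ hδ.le hfar 2
    have hup := (timeInfConv_le_min (N := N) (hcont x) htab).trans (min_le_right _ _)
    have hpen : N < N ^ 2 * (t - r) ^ 2 := by
      nlinarith [mul_le_mul_of_nonneg_left hsq (sq_nonneg N)]
    linarith [le_min (hu0 r hr x) hN.le]
  have hrI : r ∈ Ioo a b :=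
    ⟨by linarith [(abs_lt.1 hnear).2, ht.1], by linarith [(abs_lt.1 hnear).1, ht.2]⟩
  have hc : c ≤ κ x * (m x * (2 * N ^ 2 * (t - r))) := by
    refine hs.le_mul_of_touch_min hu (ha.trans_le hr.1) ?_ ?_ (b := β)
    · filter_upwards [Ioo_mem_nhds hrI.1 hrI.2] with r' hr'
      exact heq ▸ hle r' (Ioo_subset_Icc_self hr')
    · filter_upwards [htouch] with z hz
      obtain ⟨-, -, -, hlez⟩ := exists_timeInfConv_eq hab (hcont z) N t
      linarith [hlez r hr]
  obtain ⟨-, -, -, hleh⟩ := exists_timeInfConv_eq hab (hcont x) N (t - h)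
  have hslope : 2 * N ^ 2 * (t - r) ≤
      (timeInfConv u a b N t x - timeInfConv u a b N (t - h) x) / h + N ^ 2 * h := by
    rw [← sub_le_iff_le_add, le_div_iff₀ hh, heq]
    linarith [hleh r hr]
  exact hc.trans (mul_le_mul_of_nonneg_left (mul_le_mul_of_nonneg_left hslope (hm x))
    (hs.pos x).le)

lemma chordGap_fluxPrimitive_add_smul {f g : ℝ → ℝ} {p q x : ℝ} (c : ℝ) (hx : x ∈ Icc p q)
    (hf : IntervalIntegrable f volume p q) (hg : IntervalIntegrable g volume p q) :
    chordGap s (fluxPrimitive s (fun z => f z + c * g z) p) p x q =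
      chordGap s (fluxPrimitive s f p) p x q + c * chordGap s (fluxPrimitive s g p) p x q := by
  have hlin : ∀ y ∈ Icc p q, fluxPrimitive s (fun z => f z + c * g z) p y =
      fluxPrimitive s f p y + c * fluxPrimitive s g p y := by
    intro y hy
    have hsub : uIcc p y ⊆ uIcc p q := uIcc_subset_uIcc left_mem_uIcc (Icc_subset_uIcc hy)
    unfold fluxPrimitive
    rw [← intervalIntegral.integral_const_mul,
      ← integral_add (hs.intervalIntegrable_kernel (hf.mono_set hsub) y)
        ((hs.intervalIntegrable_kernel (hg.mono_set hsub) y).const_mul c)]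
    congr 1; ext z; ring
  have hpq := hx.1.trans hx.2
  simp only [chordGap, hlin p ⟨le_rfl, hpq⟩, hlin x hx, hlin q ⟨hpq, le_rfl⟩]
  ring

lemma chordGap_sub_le {g g' : ℝ → ℝ} {p x q ε : ℝ} (hpx : p ≤ x) (hxq : x ≤ q)
    (h : ∀ z, |g z - g' z| ≤ ε) :
    chordGap s g p x q - chordGap s g' p x q ≤ 2 * (s q - s p) * ε := by
  have hp := hs.strictMono.monotone hpx
  have hq := hs.strictMono.monotone hxq
  have hx' := mul_le_mul_of_nonneg_left (abs_le.1 (h x)).2 (sub_nonneg.2 (hp.trans hq))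
  have hp' := mul_le_mul_of_nonneg_left (abs_le.1 (h p)).1 (sub_nonneg.2 hq)
  have hq' := mul_le_mul_of_nonneg_left (abs_le.1 (h q)).1 (sub_nonneg.2 hp)
  simp only [chordGap]
  linarith

end IsScale

/-- A nonnegative classical solution of `m ∂ₜu = ∂ₓ(κ ∂ₓu)` on `(0, ∞) × ℝ` that is jointly lower
semicontinuous; classical solutions are only separately continuous in `t` and `x` by definition. -/
structure IsNonnegSol (κ m : ℝ → ℝ) (u : ℝ → ℝ → ℝ) : Prop where
  sol : IsDivergenceSol κ m u
  nonneg : ∀ t, 0 < t → ∀ x, 0 ≤ u t x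
  lsc : ∀ t, 0 < t → ∀ x, LowerSemicontinuousAt (Function.uncurry u) (t, x)

namespace IsNonnegSol

variable {κ m s : ℝ → ℝ} {u : ℝ → ℝ → ℝ} {a b N p x q : ℝ} (hu : IsNonnegSol κ m u) (ha : 0 < a)
include hu ha

lemma continuousOn_time (x : ℝ) : ContinuousOn (fun r => u r x) (Icc a b) := fun _ hr =>
  (hu.sol.continuousAt_time (ha.trans_le hr.1) x).continuousWithinAt

lemma lowerSemicontinuous_timeInfConv (hab : a ≤ b) (N t : ℝ) :
    LowerSemicontinuous (timeInfConv u a b N t) :=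
  _root_.lowerSemicontinuous_timeInfConv hab (hu.continuousOn_time ha)
    (fun r hr => hu.lsc r (ha.trans_le hr.1)) N t

lemma norm_timeInfConv_le (hN : 0 ≤ N) {t : ℝ} (ht : t ∈ Icc a b) (x : ℝ) :
    ‖timeInfConv u a b N t x‖ ≤ u t x := by
  rw [Real.norm_of_nonneg
    (timeInfConv_nonneg (fun r hr => hu.nonneg r (ha.trans_le hr.1) x) hN)]
  exact (timeInfConv_le_min (hu.continuousOn_time ha x) ht).trans (min_le_left _ _)

lemma intervalIntegrable_mul_timeInfConv (hm : Continuous m) (hN : 0 ≤ N) {t : ℝ}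
    (ht : t ∈ Icc a b) (p q : ℝ) :
    IntervalIntegrable (fun z => m z * timeInfConv u a b N t z) volume p q := by
  refine IntervalIntegrable.continuousOn_mul ?_ hm.continuousOn
  exact ((hu.sol.continuous (ha.trans_le ht.1)).intervalIntegrable p q).mono_fun
    (hu.lowerSemicontinuous_timeInfConv ha (ht.1.trans ht.2) N t).measurable.aestronglyMeasurable
    (Eventually.of_forall fun z => (hu.norm_timeInfConv_le ha hN ht z).trans (le_abs_self _))

lemma continuousOn_chordGap_timeInfConv (hab : a ≤ b) (s : ℝ → ℝ) (N p x q : ℝ) :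
    ContinuousOn (fun t => chordGap s (timeInfConv u a b N t) p x q) (Icc a b) := by
  have hcont := fun z => continuousOn_timeInfConv (N := N) hab (hu.continuousOn_time ha z)
  exact (((hcont x).const_mul _).sub ((hcont p).const_mul _)).sub ((hcont q).const_mul _)

lemma chordGap_timeInfConv_step (hs : IsScale κ s) (hm : Continuous m) (hm0 : ∀ x, 0 ≤ m x)
    {δ r t : ℝ} (hN : 0 < N) (hδ : 0 < δ) (hNδ : 1 < N * δ ^ 2) (har : a + δ ≤ r) (hrt : r < t)
    (htb : t ≤ b - δ) (hpx : p < x) (hxq : x < q) :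
    chordGap s (fluxPrimitive s (fun z => m z * timeInfConv u a b N t z) p) p x q -
        chordGap s (fluxPrimitive s (fun z => m z * timeInfConv u a b N r z) p) p x q ≤
      (t - r) * chordGap s (timeInfConv u a b N t) p x q -
        N ^ 2 * chordGap s (fluxPrimitive s m p) p x q * (t - r) ^ 2 := by
  set w := timeInfConv u a b N
  have hab : a ≤ b := by linarith
  have hh : 0 < t - r := sub_pos.2 hrt
  have hxI : x ∈ Icc p q := ⟨hpx.le, hxq.le⟩
  have hwt := hu.intervalIntegrable_mul_timeInfConv ha hm hN.le (t := t) (b := b)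
    ⟨by linarith, by linarith⟩ p q
  have hwr := hu.intervalIntegrable_mul_timeInfConv ha hm hN.le (t := r) (b := b)
    ⟨by linarith, by linarith⟩ p q
  have hmi := hm.intervalIntegrable (μ := volume) p q
  have hvisc := hs.isViscositySupersol_timeInfConv (b := b) (t := t) hu.sol hm0 ha
    (fun r hr => hu.nonneg r (ha.trans_le hr.1)) hN hNδ hδ ⟨by linarith, by linarith⟩ hh p q
  have hrhs : (fun z => m z * ((w t z - w (t - (t - r)) z) / (t - r) + N ^ 2 * (t - r))) =
      fun z => (N ^ 2 * (t - r)) * m z + (t - r)⁻¹ * (m z * w t z + -1 * (m z * w r z)) := by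
    ext z; rw [sub_sub_cancel]; ring
  rw [hrhs] at hvisc
  have hdiff := hwt.add (hwr.const_mul (-1))
  have hkey := hs.chordGap_fluxPrimitive_le hpx hxq
    ((hu.lowerSemicontinuous_timeInfConv ha hab N t).lowerSemicontinuousOn _) hvisc
    ((hmi.const_mul _).add (hdiff.const_mul _))
  have hzero : ∀ c, chordGap s (fluxPrimitive s (fun z => c * m z) p) p x q =
      c * chordGap s (fluxPrimitive s m p) p x q := fun c => by
    have := hs.chordGap_fluxPrimitive_add_smul (f := m) (c - 1) hxI hmi hmi
    rw [show (fun z => c * m z) = fun z => m z + (c - 1) * m z by ext z; ring, this]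
    ring
  rw [hs.chordGap_fluxPrimitive_add_smul _ hxI (hmi.const_mul _) hdiff,
    hs.chordGap_fluxPrimitive_add_smul _ hxI hwt hwr, hzero] at hkey
  have hmul := mul_le_mul_of_nonneg_left hkey hh.le
  rw [mul_add, mul_inv_cancel_left₀ hh.ne'] at hmul
  linarith

lemma chordGap_timeInfConv_sub_le (hs : IsScale κ s) (hm : Continuous m) (hm0 : ∀ x, 0 ≤ m x)
    {δ t₁ t₂ : ℝ} (hN : 0 < N) (hδ : 0 < δ) (hNδ : 1 < N * δ ^ 2) (h₁ : a + δ ≤ t₁)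
    (h₁₂ : t₁ ≤ t₂) (h₂ : t₂ ≤ b - δ) (hpx : p < x) (hxq : x < q) :
    chordGap s (fluxPrimitive s (fun z => m z * timeInfConv u a b N t₂ z) p) p x q -
        chordGap s (fluxPrimitive s (fun z => m z * timeInfConv u a b N t₁ z) p) p x q ≤
      ∫ t in t₁..t₂, chordGap s (timeInfConv u a b N t) p x q := by
  set B : ℝ → ℝ := fun t =>
    chordGap s (fluxPrimitive s (fun z => m z * timeInfConv u a b N t z) p) p x q
  set A : ℝ → ℝ := fun t => chordGap s (timeInfConv u a b N t) p x q
  set c₁ := chordGap s (fluxPrimitive s m p) p x q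
  set K := 2 * (s q - s p) * (N ^ 2 * (2 * (b - a)))
  have hab : a ≤ b := by linarith
  have hwin : ∀ {r}, t₁ ≤ r → r ≤ t₂ → r ∈ Icc a b := fun hr hr' => ⟨by linarith, by linarith⟩
  have hAint : ∀ {r r'}, t₁ ≤ r → r ≤ r' → r' ≤ t₂ → IntervalIntegrable A volume r r' :=
    fun h h' h'' => ContinuousOn.intervalIntegrable <|
      (hu.continuousOn_chordGap_timeInfConv ha hab s N p x q).mono <|
        ordConnected_Icc.uIcc_subset (hwin h (h'.trans h'')) (hwin (h.trans h') h'')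
  suffices h : B t₂ - ∫ t in t₁..t₂, A t ≤ B t₁ - ∫ t in t₁..t₁, A t by
    rw [integral_same] at h; linarith
  refine le_of_sub_le_mul_sq (φ := fun t => B t - ∫ r in t₁..t, A r) (C := K - N ^ 2 * c₁) h₁₂
    fun r t hr hrt ht => ?_
  rcases hrt.eq_or_lt with rfl | hlt
  · simp
  have hstep : B t - B r ≤ (t - r) * A t - N ^ 2 * c₁ * (t - r) ^ 2 :=
    hu.chordGap_timeInfConv_step ha hs hm hm0 hN hδ hNδ (by linarith) hlt (by linarith) hpx hxq
  have hosc : ∀ τ ∈ Icc r t, A t - K * (t - r) ≤ A τ := by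
    intro τ hτ
    have hτt : |t - τ| ≤ t - r := by rw [abs_of_nonneg (by linarith [hτ.2])]; linarith [hτ.1]
    have hclose : ∀ z, |timeInfConv u a b N t z - timeInfConv u a b N τ z| ≤
        N ^ 2 * (2 * (b - a)) * (t - r) := fun z =>
      (abs_timeInfConv_sub_le hab (hu.continuousOn_time ha z) (hwin (hr.trans hτ.1) (hτ.2.trans ht))
        (hwin (hr.trans hrt) ht)).trans (mul_le_mul_of_nonneg_left hτt
          (mul_nonneg (sq_nonneg N) (by linarith)))
    linarith [hs.chordGap_sub_le hpx.le hxq.le hclose]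
  have hint : (t - r) * (A t - K * (t - r)) ≤ ∫ τ in r..t, A τ := by
    rw [← smul_eq_mul, ← intervalIntegral.integral_const]
    exact integral_mono_on hrt intervalIntegrable_const (hAint hr hrt ht) hosc
  have hadd := integral_add_adjacent_intervals (hAint le_rfl hr (hrt.trans ht)) (hAint hr hrt ht)
  linarith

lemma tendsto_timeInfConv_natCast {r : ℝ} (hr : r ∈ Icc a b) (z : ℝ) :
    Tendsto (fun n : ℕ => timeInfConv u a b n r z) atTop (𝓝 (u r z)) :=
  tendsto_timeInfConv (fun r hr => hu.nonneg r (ha.trans_le hr.1) z) (hu.continuousOn_time ha z) hr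

lemma tendsto_chordGap_fluxPrimitive_timeInfConv (hs : IsScale κ s) (hm : Continuous m) {r : ℝ}
    (hr : r ∈ Icc a b) :
    Tendsto (fun n : ℕ =>
        chordGap s (fluxPrimitive s (fun z => m z * timeInfConv u a b n r z) p) p x q) atTop
      (𝓝 (chordGap s (fluxPrimitive s (fun z => m z * u r z) p) p x q)) := by
  have hpt : ∀ y, Tendsto
      (fun n : ℕ => fluxPrimitive s (fun z => m z * timeInfConv u a b n r z) p y) atTop
      (𝓝 (fluxPrimitive s (fun z => m z * u r z) p y)) := fun y => by
    have hur := hu.sol.continuous (ha.trans_le hr.1)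
    have hker : Continuous fun z => (s y - s z) * m z :=
      (continuous_const.sub hs.continuous).mul hm
    refine intervalIntegral.tendsto_integral_filter_of_dominated_convergence
      (fun z => ‖(s y - s z) * m z‖ * u r z) (Eventually.of_forall fun n => ?_)
      (Eventually.of_forall fun n => Eventually.of_forall fun z _ => ?_)
      ((hker.norm.mul hur).intervalIntegrable _ _) (Eventually.of_forall fun z _ => ?_)
    · exact ((continuous_const.sub hs.continuous).measurable.mul (hm.measurable.mul
        (hu.lowerSemicontinuous_timeInfConv ha (hr.1.trans hr.2) n r).measurable)
        ).aestronglyMeasurable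
    · rw [← mul_assoc, norm_mul]
      exact mul_le_mul_of_nonneg_left (hu.norm_timeInfConv_le ha n.cast_nonneg hr z)
        (norm_nonneg _)
    · exact ((hu.tendsto_timeInfConv_natCast ha hr z).const_mul _).const_mul _
  exact (((hpt x).const_mul _).sub ((hpt p).const_mul _)).sub ((hpt q).const_mul _)

lemma tendsto_integral_chordGap_timeInfConv (s : ℝ → ℝ) {t₁ t₂ : ℝ} (h₁ : a ≤ t₁) (h₁₂ : t₁ ≤ t₂)
    (h₂ : t₂ ≤ b) :
    Tendsto (fun n : ℕ => ∫ t in t₁..t₂, chordGap s (timeInfConv u a b n t) p x q) atTop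
      (𝓝 (chordGap s (fun z => ∫ t in t₁..t₂, u t z) p x q)) := by
  have hsub : Icc t₁ t₂ ⊆ Icc a b := Icc_subset_Icc h₁ h₂
  have huint : ∀ z, IntervalIntegrable (fun t => u t z) volume t₁ t₂ := fun z =>
    ((hu.continuousOn_time ha z).mono ((uIcc_of_le h₁₂).subset.trans hsub)).intervalIntegrable
  have hwint : ∀ (n : ℕ) z, IntervalIntegrable (fun t => timeInfConv u a b n t z) volume t₁ t₂ :=
    fun n z => ContinuousOn.intervalIntegrable <|
      (continuousOn_timeInfConv (h₁.trans (h₁₂.trans h₂)) (hu.continuousOn_time ha z)).mono <|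
        (uIcc_of_le h₁₂).subset.trans hsub
  have hmem : ∀ {t}, t ∈ uIoc t₁ t₂ → t ∈ Icc a b := fun ht =>
    hsub (Ioc_subset_Icc_self (uIoc_of_le h₁₂ ▸ ht))
  have hpt : ∀ z, Tendsto (fun n : ℕ => ∫ t in t₁..t₂, timeInfConv u a b n t z) atTop
      (𝓝 (∫ t in t₁..t₂, u t z)) := fun z =>
    intervalIntegral.tendsto_integral_filter_of_dominated_convergence (fun t => u t z)
      (Eventually.of_forall fun n => (hwint n z).aestronglyMeasurable_restrict_uIoc)
      (Eventually.of_forall fun n => Eventually.of_forall fun t ht =>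
        hu.norm_timeInfConv_le ha n.cast_nonneg (hmem ht) z) (huint z)
      (Eventually.of_forall fun t ht => hu.tendsto_timeInfConv_natCast ha (hmem ht) z)
  refine ((((hpt x).const_mul _).sub ((hpt p).const_mul _)).sub ((hpt q).const_mul _)).congr
    fun n => ?_
  simp only [chordGap]
  rw [integral_sub (((hwint n x).const_mul _).sub ((hwint n p).const_mul _))
    ((hwint n q).const_mul _), integral_sub ((hwint n x).const_mul _) ((hwint n p).const_mul _)]
  simp only [intervalIntegral.integral_const_mul]

/-- The time integral of a solution is a supersolution of `(κ v')' = m (u t₂ - u t₁)`. -/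
lemma chordGap_fluxPrimitive_le_integral (hs : IsScale κ s) (hm : Continuous m)
    (hm0 : ∀ x, 0 ≤ m x) {t₂ : ℝ} (h₁₂ : a ≤ t₂) (hpx : p < x) (hxq : x < q) :
    chordGap s (fluxPrimitive s (fun z => m z * (u t₂ z - u a z)) p) p x q ≤
      chordGap s (fun z => ∫ t in a..t₂, u t z) p x q := by
  have ha2 : 0 < a / 2 := half_pos ha
  have hmu : ∀ t, 0 < t → IntervalIntegrable (fun z => m z * u t z) volume p q := fun t ht =>
    (hm.mul (hu.sol.continuous ht)).intervalIntegrable _ _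
  have hlin := hs.chordGap_fluxPrimitive_add_smul (-1) ⟨hpx.le, hxq.le⟩
    (hmu t₂ (ha.trans_le h₁₂)) (hmu a ha)
  simp only [neg_one_mul, ← sub_eq_add_neg, ← mul_sub] at hlin
  rw [hlin]
  have hlim : ∀ t ∈ Icc (a / 2) (t₂ + a / 2), _ := fun t ht =>
    hu.tendsto_chordGap_fluxPrimitive_timeInfConv (p := p) (x := x) (q := q) ha2 hs hm ht
  refine le_of_tendsto_of_tendsto
    ((hlim t₂ ⟨by linarith, by linarith⟩).sub (hlim a ⟨by linarith, by linarith⟩))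
    (hu.tendsto_integral_chordGap_timeInfConv (a := a / 2) (b := t₂ + a / 2) ha2 s (by linarith) h₁₂
      (by linarith)) ?_
  obtain ⟨n₀, hn₀⟩ := exists_nat_gt (max 0 (1 / (a / 2) ^ 2))
  filter_upwards [eventually_ge_atTop n₀] with n hn
  have hn' : max 0 (1 / (a / 2) ^ 2) < (n : ℝ) := hn₀.trans_le (Nat.cast_le.2 hn)
  exact hu.chordGap_timeInfConv_sub_le ha2 hs hm hm0 ((le_max_left _ _).trans_lt hn') ha2
    ((div_lt_iff₀ (by positivity)).1 ((le_max_right _ _).trans_lt hn')) (by linarith) h₁₂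
    (by linarith) hpx hxq

end IsNonnegSol

/-! ### Rigidity of integrable supersolutions -/

lemma frequently_lt_of_integrable {v : ℝ → ℝ} (hv : Integrable v) {l : Filter ℝ}
    (hl : ∀ S ∈ l, volume S = ⊤) {ε : ℝ} (hε : 0 < ε) : ∃ᶠ x in l, v x < ε := by
  intro hge
  refine (hv.measure_norm_ge_lt_top hε).ne (hl _ ?_)
  filter_upwards [hge] with x hx
  exact (not_lt.1 hx).trans (le_abs_self _)

lemma exists_tendsto_intervalIntegral_of_integral_eq_zero {g : ℝ → ℝ} (hg : Integrable g)
    (hg0 : ∫ z, g z = 0) :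
    ∃ L, Tendsto (fun x => ∫ z in 0..x, g z) atTop (𝓝 L) ∧
      Tendsto (fun x => ∫ z in 0..x, g z) atBot (𝓝 L) := by
  refine ⟨∫ z in Ioi 0, g z, intervalIntegral_tendsto_integral_Ioi 0 hg.integrableOn tendsto_id, ?_⟩
  have hL : ∫ z in Ioi 0, g z = -∫ z in Iic 0, g z := by
    linarith [integral_Iic_add_Ioi hg.integrableOn hg.integrableOn (b := (0 : ℝ))]
  simp only [hL, integral_symm _ (0 : ℝ)]
  exact (intervalIntegral_tendsto_integral_Iic 0 hg.integrableOn tendsto_id).neg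

/-- The difference quotient of `g / w` with respect to `s / w`, for the weight `w = 1 + W s` solving
`(κ w')' = 0`, normalised to be antisymmetric; it is a discrete version of the flux
`κ (w g' - w' g)`. -/
noncomputable def twistedSlope (W : ℝ) (s g : ℝ → ℝ) (p q : ℝ) : ℝ :=
  ((1 + W * s p) * g q - (1 + W * s q) * g p) / (s q - s p)

lemma twistedSlope_sub (W : ℝ) (s g h : ℝ → ℝ) (p q : ℝ) :
    twistedSlope W s (fun z => g z - h z) p q =
      twistedSlope W s g p q - twistedSlope W s h p q := by
  simp only [twistedSlope]; ring

namespace IsScale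

variable {κ s f v : ℝ → ℝ} {W K p x q : ℝ} (hs : IsScale κ s)
include hs

lemma twistedSlope_sub_twistedSlope (W : ℝ) (g : ℝ → ℝ) (hpx : p < x) (hxq : x < q) :
    twistedSlope W s g p x - twistedSlope W s g x q =
      (1 + W * s x) * chordGap s g p x q / ((s x - s p) * (s q - s x)) := by
  have h₁ := (sub_pos.2 (hs.strictMono hpx)).ne'
  have h₂ := (sub_pos.2 (hs.strictMono hxq)).ne'
  simp only [twistedSlope, chordGap]
  field_simp
  ring

lemma mul_sub_le (hW : 0 ≤ W) (hK : ∀ z, κ z * (1 + W * s z) ≤ K) (hpq : p ≤ q) :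
    (1 + W * s p) * (q - p) ≤ K * (s q - s p) := by
  have hmono : MonotoneOn (fun z => K * s z - (1 + W * s p) * z) (Icc p q) := by
    refine monotoneOn_of_hasDerivWithinAt_nonneg (convex_Icc p q) (by
      exact ((hs.continuous.const_mul K).sub (continuous_const.mul continuous_id)).continuousOn)
      (fun z _ => (((hs.hasDerivAt z).const_mul K).sub
        ((hasDerivAt_id z).const_mul (1 + W * s p))).hasDerivWithinAt) fun z hz => ?_
    rw [interior_Icc] at hz
    have hle : 1 + W * s p ≤ 1 + W * s z := by
      have := hs.strictMono.monotone hz.1.le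
      gcongr
    have : (1 + W * s p) * κ z ≤ K :=
      (mul_le_mul_of_nonneg_right hle (hs.pos z).le).trans (mul_comm (κ z) _ ▸ hK z)
    simpa [sub_nonneg] using (le_mul_inv_iff₀ (hs.pos z)).2 this
  have := hmono (left_mem_Icc.2 hpq) (right_mem_Icc.2 hpq) hpq
  simp only at this
  linarith

lemma twistedSlope_le (hW : 0 ≤ W) (hw : ∀ z, 0 < 1 + W * s z)
    (hK : ∀ z, κ z * (1 + W * s z) ≤ K) (hv : ∀ z, 0 ≤ v z) :
    twistedSlope W s v p (p + 1) ≤ K * v (p + 1) := by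
  have hsp : 0 < s (p + 1) - s p := sub_pos.2 (hs.strictMono (lt_add_one p))
  have hle := hs.mul_sub_le hW hK (le_add_of_nonneg_right zero_le_one : p ≤ p + 1)
  rw [twistedSlope, div_le_iff₀ hsp]
  nlinarith [mul_le_mul_of_nonneg_right hle (hv (p + 1)), mul_nonneg (hw (p + 1)).le (hv p)]

lemma le_twistedSlope (hW : 0 ≤ W) (hw : ∀ z, 0 < 1 + W * s z)
    (hK : ∀ z, κ z * (1 + W * s z) ≤ K) (hv : ∀ z, 0 ≤ v z) :
    -((K + W) * v p) ≤ twistedSlope W s v p (p + 1) := by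
  have hsp : 0 < s (p + 1) - s p := sub_pos.2 (hs.strictMono (lt_add_one p))
  have hle := hs.mul_sub_le hW hK (le_add_of_nonneg_right zero_le_one : p ≤ p + 1)
  rw [twistedSlope, le_div_iff₀ hsp]
  nlinarith [mul_le_mul_of_nonneg_right hle (hv p), mul_nonneg (hw p).le (hv (p + 1))]

lemma hasDerivAt_fluxPrimitive (hf : Continuous f) (p x : ℝ) :
    HasDerivAt (fluxPrimitive s f p) ((∫ z in p..x, f z) * (κ x)⁻¹) x := by
  have hsf : Continuous fun z => s z * f z := hs.continuous.mul hf
  have hexpand : fluxPrimitive s f p =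
      fun x => s x * (∫ z in p..x, f z) - ∫ z in p..x, s z * f z := by
    ext x
    simp only [fluxPrimitive, sub_mul]
    rw [integral_sub ((hf.intervalIntegrable _ _).const_mul _) (hsf.intervalIntegrable _ _),
      intervalIntegral.integral_const_mul]
  rw [hexpand]
  refine (((hs.hasDerivAt x).mul (hf.integral_hasStrictDerivAt p x).hasDerivAt).sub
    (hsf.integral_hasStrictDerivAt p x).hasDerivAt).congr_deriv ?_
  ring

lemma integral_weight_mul_eq (hf : Continuous f) (W x : ℝ) :
    ∫ z in 0..x, (1 + W * s z) * f z =
      (1 + W * s x) * (∫ z in 0..x, f z) - W * fluxPrimitive s f 0 x := by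
  have hfi := hf.intervalIntegrable (μ := volume) 0 x
  rw [fluxPrimitive, ← intervalIntegral.integral_const_mul, ← intervalIntegral.integral_const_mul,
    ← integral_sub (hfi.const_mul _) ((hs.intervalIntegrable_kernel hfi x).const_mul _)]
  congr 1; ext z; ring

/-- Cauchy's mean value theorem for `Z / w` and `(s - s p) / w`, where `Z` is the flux primitive:
the ratio of their derivatives is `∫₀ˣ w f` up to a constant. -/
lemma exists_twistedSlope_fluxPrimitive_eq (hw : ∀ z, 0 < 1 + W * s z) (hf : Continuous f)
    (hpq : p < q) : ∃ ξ ∈ Ioo p q,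
      twistedSlope W s (fluxPrimitive s f 0) p q = ∫ z in 0..ξ, (1 + W * s z) * f z := by
  set Z := fluxPrimitive s f 0
  have hdw : ∀ z, HasDerivAt (fun z => 1 + W * s z) (W * (κ z)⁻¹) z := fun z =>
    ((hs.hasDerivAt z).const_mul W).const_add 1
  have hdZ : ∀ z, HasDerivAt (fun z => Z z / (1 + W * s z))
      ((∫ y in 0..z, (1 + W * s y) * f y) * ((κ z)⁻¹ / (1 + W * s z) ^ 2)) z := fun z =>
    ((hs.hasDerivAt_fluxPrimitive hf 0 z).div (hdw z) (hw z).ne').congr_deriv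
      (by rw [hs.integral_weight_mul_eq hf]; ring)
  have hds : ∀ z, HasDerivAt (fun z => (s z - s p) / (1 + W * s z))
      ((1 + W * s p) * ((κ z)⁻¹ / (1 + W * s z) ^ 2)) z := fun z =>
    (((hs.hasDerivAt z).sub_const (s p)).div (hdw z) (hw z).ne').congr_deriv (by ring)
  obtain ⟨ξ, hξ, heq⟩ := exists_ratio_hasDerivAt_eq_ratio_slope _ _ hpq
    (fun z _ => (hdZ z).continuousAt.continuousWithinAt) (fun z _ => hdZ z) _ _
    (fun z _ => (hds z).continuousAt.continuousWithinAt) (fun z _ => hds z)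
  refine ⟨ξ, hξ, ?_⟩
  have hsp : s q - s p ≠ 0 := (sub_pos.2 (hs.strictMono hpq)).ne'
  have hwp := (hw p).ne'
  have hwq := (hw q).ne'
  have hpos : (κ ξ)⁻¹ / (1 + W * s ξ) ^ 2 ≠ 0 :=
    (div_pos (inv_pos.2 (hs.pos ξ)) (pow_pos (hw ξ) 2)).ne'
  rw [← mul_assoc, ← mul_assoc] at heq
  have hcancel := mul_right_cancel₀ hpos heq
  rw [twistedSlope, div_eq_iff hsp]
  generalize 1 + W * s p = wp, 1 + W * s q = wq at hcancel hwp hwq ⊢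
  rw [sub_self, zero_div, sub_zero] at hcancel
  field_simp at hcancel
  linarith

lemma chordGap_fluxPrimitive_eq (hf : Continuous f) (p x q : ℝ) :
    chordGap s (fluxPrimitive s f p) p x q = chordGap s (fluxPrimitive s f 0) p x q := by
  have hfi := fun a b => hf.intervalIntegrable (μ := volume) a b
  simp only [chordGap, hs.fluxPrimitive_rebase (hfi 0 p) (hfi p _) (z := x),
    hs.fluxPrimitive_rebase (hfi 0 p) (hfi p _) (z := q),
    show fluxPrimitive s f p p = 0 from integral_same]
  ring

lemma neg_le_twistedSlope {L : ℝ} (hW : 0 ≤ W) (hw : ∀ z, 0 < 1 + W * s z)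
    (hK : ∀ z, κ z * (1 + W * s z) ≤ K) (hf : Continuous f)
    (hL : Tendsto (fun x => ∫ z in 0..x, (1 + W * s z) * f z) atTop (𝓝 L))
    (hv : ∀ z, 0 ≤ v z) (hvi : Integrable v)
    (hanti : ∀ p x q, p < x → x < q →
      twistedSlope W s (fun z => v z - fluxPrimitive s f 0 z) x q ≤
        twistedSlope W s (fun z => v z - fluxPrimitive s f 0 z) p x) (hxq : x < q) :
    -L ≤ twistedSlope W s (fun z => v z - fluxPrimitive s f 0 z) x q := by
  have hK0 : 0 < K := (mul_pos (hs.pos 0) (hw 0)).trans_le (hK 0)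
  refine le_of_forall_pos_le_add fun ε hε => ?_
  have hδ : 0 < ε / (K + W + 1) := by positivity
  have hsmall := frequently_lt_of_integrable hvi (l := atTop) (fun S hS => by
    obtain ⟨c, hc⟩ := mem_atTop_sets.1 hS
    exact top_le_iff.1 (Real.volume_Ici (a := c) ▸ measure_mono hc)) hδ
  obtain ⟨z, hvz, hFz, hqz⟩ := (hsmall.and_eventually
    ((eventually_forall_ge_atTop.2 (hL.eventually_lt_const (lt_add_of_pos_right L hδ))).and
      (eventually_gt_atTop q))).exists
  obtain ⟨ξ, hξ, heq⟩ := hs.exists_twistedSlope_fluxPrimitive_eq hw hf (lt_add_one z)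
  have hchain := (hanti _ _ _ hqz (lt_add_one z)).trans (hanti _ _ _ hxq hqz)
  rw [twistedSlope_sub, heq] at hchain
  have hvpart := (neg_le_neg (mul_le_mul_of_nonneg_left hvz.le (add_nonneg hK0.le hW))).trans
    (hs.le_twistedSlope (p := z) hW hw hK hv)
  have hsum : (K + W) * (ε / (K + W + 1)) + ε / (K + W + 1) = ε := by field_simp
  linarith [hFz ξ hξ.1.le]

lemma twistedSlope_le_neg {L : ℝ} (hW : 0 ≤ W) (hw : ∀ z, 0 < 1 + W * s z)
    (hK : ∀ z, κ z * (1 + W * s z) ≤ K) (hf : Continuous f)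
    (hL : Tendsto (fun x => ∫ z in 0..x, (1 + W * s z) * f z) atBot (𝓝 L))
    (hv : ∀ z, 0 ≤ v z) (hvi : Integrable v)
    (hanti : ∀ p x q, p < x → x < q →
      twistedSlope W s (fun z => v z - fluxPrimitive s f 0 z) x q ≤
        twistedSlope W s (fun z => v z - fluxPrimitive s f 0 z) p x) (hpx : p < x) :
    twistedSlope W s (fun z => v z - fluxPrimitive s f 0 z) p x ≤ -L := by
  have hK0 : 0 < K := (mul_pos (hs.pos 0) (hw 0)).trans_le (hK 0)
  refine le_of_forall_pos_le_add fun ε hε => ?_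
  have hδ : 0 < ε / (K + 1) := by positivity
  have hsmall := frequently_lt_of_integrable hvi (l := atBot) (fun S hS => by
    obtain ⟨c, hc⟩ := mem_atBot_sets.1 hS
    exact top_le_iff.1 (Real.volume_Iic (a := c) ▸ measure_mono hc)) hδ
  obtain ⟨z, hvz, hFz, hzp⟩ := (hsmall.and_eventually
    ((eventually_forall_le_atBot.2 (hL.eventually_const_lt (sub_lt_self L hδ))).and
      (eventually_lt_atBot p))).exists
  obtain ⟨ξ, hξ, heq⟩ := hs.exists_twistedSlope_fluxPrimitive_eq hw hf (sub_one_lt z)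
  have hchain := (hanti _ _ _ hzp hpx).trans (hanti _ _ _ (sub_one_lt z) hzp)
  rw [twistedSlope_sub W s v _ (z - 1), heq] at hchain
  have hvpart := hs.twistedSlope_le (p := z - 1) hW hw hK hv
  rw [sub_add_cancel] at hvpart
  have hvK := hvpart.trans (mul_le_mul_of_nonneg_left hvz.le hK0.le)
  have hsum : K * (ε / (K + 1)) + ε / (K + 1) = ε := by field_simp
  linarith [hFz ξ hξ.2.le]

/-- The twisted slopes of `v - Z` decrease from left to right, and their limits at `±∞` are
`-∫₀^{±∞} w f`, which agree because `w f` has total mass zero. -/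
lemma chordGap_eq_zero (hW : 0 ≤ W) (hw : ∀ z, 0 < 1 + W * s z)
    (hK : ∀ z, κ z * (1 + W * s z) ≤ K) (hf : Continuous f)
    (hfi : Integrable fun z => (1 + W * s z) * f z) (hf0 : ∫ z, (1 + W * s z) * f z = 0)
    (hv : ∀ z, 0 ≤ v z) (hvi : Integrable v)
    (hgap : ∀ p x q, p < x → x < q → chordGap s (fluxPrimitive s f p) p x q ≤ chordGap s v p x q)
    (hpx : p < x) (hxq : x < q) :
    chordGap s (fun z => v z - fluxPrimitive s f 0 z) p x q = 0 := by
  set D : ℝ → ℝ := fun z => v z - fluxPrimitive s f 0 z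
  have hD : ∀ p x q, p < x → x < q → 0 ≤ chordGap s D p x q := fun p x q hpx hxq => by
    have := hs.chordGap_fluxPrimitive_eq hf p x q ▸ hgap p x q hpx hxq
    simp only [chordGap, D] at this ⊢
    linarith
  have hden : ∀ {p x q}, p < x → x < q → 0 < (s x - s p) * (s q - s x) := fun hpx hxq =>
    mul_pos (sub_pos.2 (hs.strictMono hpx)) (sub_pos.2 (hs.strictMono hxq))
  have hanti : ∀ p x q, p < x → x < q → twistedSlope W s D x q ≤ twistedSlope W s D p x :=
    fun p x q hpx hxq => by
      rw [← sub_nonneg, hs.twistedSlope_sub_twistedSlope W D hpx hxq]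
      exact div_nonneg (mul_nonneg (hw x).le (hD p x q hpx hxq)) (hden hpx hxq).le
  obtain ⟨L, htop, hbot⟩ := exists_tendsto_intervalIntegral_of_integral_eq_zero hfi hf0
  have hslopes : twistedSlope W s D p x ≤ twistedSlope W s D x q :=
    (hs.twistedSlope_le_neg hW hw hK hf hbot hv hvi hanti hpx).trans
      (hs.neg_le_twistedSlope hW hw hK hf htop hv hvi hanti hxq)
  rw [← sub_nonpos, hs.twistedSlope_sub_twistedSlope W D hpx hxq, div_le_iff₀ (hden hpx hxq),
    zero_mul] at hslopes
  exact le_antisymm (nonpos_of_mul_nonpos_right hslopes (hw x)) (hD p x q hpx hxq)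

lemma exists_hasDerivAt_of_chordGap_eq_zero (hf : Continuous f)
    (h : ∀ p x q, p < x → x < q → chordGap s (fun z => v z - fluxPrimitive s f 0 z) p x q = 0) :
    ∃ V : ℝ → ℝ, ∀ x, HasDerivAt v (V x) x ∧ HasDerivAt (fun z => κ z * V z) (f x) x := by
  set Z := fluxPrimitive s f 0
  set D : ℝ → ℝ := fun z => v z - Z z
  have hs01 : 0 < s 1 - s 0 := sub_pos.2 (hs.strictMono zero_lt_one)
  have haffine : ∀ z, D z = D 0 + (D 1 - D 0) / (s 1 - s 0) * (s z - s 0) := fun z => by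
    field_simp
    rcases lt_trichotomy z 0 with hz | rfl | hz
    · have := h z 0 1 hz zero_lt_one
      simp only [chordGap] at this; linarith
    · ring
    rcases lt_trichotomy z 1 with hz1 | rfl | hz1
    · have := h 0 z 1 hz hz1
      simp only [chordGap] at this; linarith
    · ring
    · have := h 0 1 z zero_lt_one hz1
      simp only [chordGap] at this; linarith
  set c := (D 1 - D 0) / (s 1 - s 0)
  have hveq : v = fun z => Z z + (D 0 + c * (s z - s 0)) := by
    ext z; rw [← haffine]; ring
  refine ⟨fun z => ((∫ y in 0..z, f y) + c) * (κ z)⁻¹, fun x => ⟨?_, ?_⟩⟩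
  · rw [hveq]
    exact ((hs.hasDerivAt_fluxPrimitive hf 0 x).add
      ((((hs.hasDerivAt x).sub_const _).const_mul c).const_add _)).congr_deriv (by ring)
  · have hflux : (fun z => κ z * (((∫ y in 0..z, f y) + c) * (κ z)⁻¹)) =
        fun z => (∫ y in 0..z, f y) + c := by
      ext z; rw [mul_left_comm, mul_inv_cancel₀ (hs.pos z).ne', mul_one]
    rw [hflux]
    exact (hf.integral_hasStrictDerivAt 0 x).hasDerivAt.add_const c

end IsScale

/-! ### Positivity -/

namespace IsDivergenceSol

variable {κ m : ℝ → ℝ} {u : ℝ → ℝ → ℝ} (hu : IsDivergenceSol κ m u)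
include hu

lemma exists_lipschitzOnWith (hκ : Continuous κ) (hκ0 : ∀ x, 0 < κ x) {t : ℝ} (ht : 0 < t)
    (p q : ℝ) : ∃ K, LipschitzOnWith K (u t) (uIcc p q) := by
  obtain ⟨ut, ux, hu⟩ := hu
  have hux : Continuous (ux t) := by
    have hflux : Continuous fun z => κ z * ux t z :=
      continuous_iff_continuousAt.2 fun x => (hu t ht x).2.2.continuousAt
    exact (hflux.div hκ fun x => (hκ0 x).ne').congr fun x => mul_div_cancel_left₀ _ (hκ0 x).ne'
  have hC1 : ContDiff ℝ 1 (u t) := contDiff_one_iff_deriv.2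
    ⟨fun x => (hu t ht x).2.1.differentiableAt, by
      rwa [show deriv (u t) = ux t from funext fun x => (hu t ht x).2.1.deriv]⟩
  exact hC1.contDiffOn.exists_lipschitzOnWith one_ne_zero (convex_uIcc p q) isCompact_uIcc

/-- By Baire's theorem the Lipschitz constants in space are bounded on some time interval. -/
lemma exists_continuousOn_uncurry (hκ : Continuous κ) (hκ0 : ∀ x, 0 < κ x) {α β : ℝ} (hα : 0 < α)
    (hαβ : α < β) (p q : ℝ) : ∃ t₁ t₂, α < t₁ ∧ t₁ < t₂ ∧ t₂ < β ∧
      ContinuousOn (Function.uncurry u) (Icc t₁ t₂ ×ˢ uIcc p q) := by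
  let E : ℕ → Set ℝ := fun k => {t | LipschitzOnWith k (u (projIcc α β hαβ.le t)) (uIcc p q)}
  have hpos : ∀ t, 0 < (projIcc α β hαβ.le t : ℝ) := fun t => hα.trans_le (projIcc α β hαβ.le t).2.1
  have hclosed : ∀ k, IsClosed (E k) := fun k => by
    refine (isClosed_setOfPred_lipschitzOnWith k (uIcc p q)).preimage
      (f := fun t => u (projIcc α β hαβ.le t)) (continuous_pi fun x => ?_)
    exact continuous_iff_continuousAt.2 fun t => (hu.continuousAt_time (hpos t) x).comp
      (f := fun t => (projIcc α β hαβ.le t : ℝ))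
      (continuous_subtype_val.comp continuous_projIcc).continuousAt
  have hcover : ⋃ k, E k = univ := eq_univ_of_forall fun t => by
    obtain ⟨K, hK⟩ := hu.exists_lipschitzOnWith hκ hκ0 (hpos t) p q
    obtain ⟨k, hk⟩ := exists_nat_ge K
    exact mem_iUnion.2 ⟨k, hK.weaken hk⟩
  obtain ⟨t, ht, htαβ⟩ := (dense_iUnion_interior_of_closed hclosed hcover).exists_mem_open
    isOpen_Ioo (nonempty_Ioo.2 hαβ)
  obtain ⟨k, hk⟩ := mem_iUnion.1 ht
  obtain ⟨ε, hε, hball⟩ := Metric.isOpen_iff.1 (isOpen_interior.inter isOpen_Ioo) t ⟨hk, htαβ⟩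
  have hsub : Icc (t - ε / 2) (t + ε / 2) ⊆ interior (E k) ∩ Ioo α β :=
    (Real.closedBall_eq_Icc ▸ Metric.closedBall_subset_ball (half_lt_self hε)).trans hball
  have hmem := fun r hr => hsub (a := r) hr
  refine ⟨t - ε / 2, t + ε / 2, (hmem _ ⟨le_rfl, by linarith⟩).2.1, by linarith,
    (hmem _ ⟨by linarith, le_rfl⟩).2.2,
    continuousOn_prod_of_continuousOn_lipschitzOnWith' _ k (fun r hr => ?_) fun x _ r hr =>
      (hu.continuousAt_time (hα.trans (hmem r hr).2.1) x).continuousWithinAt⟩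
  have : LipschitzOnWith k (u (projIcc α β hαβ.le r)) (uIcc p q) := interior_subset (hmem r hr).1
  rwa [projIcc_of_mem hαβ.le (Ioo_subset_Icc_self (hmem r hr).2)] at this

lemma comparison_principle (hκ0 : ∀ x, 0 < κ x) (hm : ∀ x, 0 ≤ m x) {b bt bx jb : ℝ → ℝ → ℝ}
    {t₁ t₂ p q : ℝ} (ht₁ : 0 < t₁)
    (hcont : ContinuousOn (Function.uncurry u) (Icc t₁ t₂ ×ˢ uIcc p q))
    (hbcont : Continuous (Function.uncurry b))
    (hbt : ∀ t x, HasDerivAt (fun r => b r x) (bt t x) t)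
    (hbx : ∀ t x, HasDerivAt (b t) (bx t x) x)
    (hjb : ∀ t x, HasDerivAt (fun z => κ z * bx t z) (jb t x) x)
    (hsub : ∀ t, ∀ x ∈ uIcc p q, m x * bt t x < jb t x)
    (hinit : ∀ x ∈ uIcc p q, b t₁ x ≤ u t₁ x)
    (hp : ∀ t ∈ Icc t₁ t₂, b t p ≤ u t p) (hq : ∀ t ∈ Icc t₁ t₂, b t q ≤ u t q)
    {t x : ℝ} (ht : t ∈ Icc t₁ t₂) (hx : x ∈ uIcc p q) : b t x ≤ u t x := by
  obtain ⟨ut, ux, hu⟩ := hu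
  by_contra! hlt
  obtain ⟨⟨t', x'⟩, ⟨ht', hx'⟩, hmin⟩ := (isCompact_Icc.prod isCompact_uIcc).exists_isMinOn
    (f := fun y : ℝ × ℝ => u y.1 y.2 - b y.1 y.2) ⟨(t, x), ht, hx⟩ (hcont.sub hbcont.continuousOn)
  have hle : ∀ r ∈ Icc t₁ t₂, ∀ y ∈ uIcc p q, u t' x' - b t' x' ≤ u r y - b r y :=
    fun r hr y hy => hmin (mk_mem_prod hr hy)
  have hneg : u t' x' < b t' x' := by linarith [hle t ht x hx]
  have hxp : x' ≠ p := by rintro rfl; exact hneg.not_ge (hp t' ht')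
  have hxq : x' ≠ q := by rintro rfl; exact hneg.not_ge (hq t' ht')
  have hnhds : uIcc p q ∈ 𝓝 x' := Icc_mem_nhds
    (hx'.1.lt_of_ne fun h => (min_choice p q).elim (fun h' => hxp (h.symm.trans h'))
      fun h' => hxq (h.symm.trans h'))
    (hx'.2.lt_of_ne fun h => (max_choice p q).elim (fun h' => hxp (h.trans h'))
      fun h' => hxq (h.trans h'))
  have htI : t₁ < t' := ht'.1.lt_of_ne (by rintro rfl; exact hneg.not_ge (hinit x' hx'))
  have ht0 := ht₁.trans htI
  have hspace : 0 ≤ m x' * ut t' x' - jb t' x' := by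
    refine nonneg_of_isLocalMin_of_hasDerivAt_flux (D := fun z => u t' z - b t' z) (x := x') ?_
      (fun z => (hu t' ht0 z).2.1.sub (hbx t' z)) hκ0 ?_
    · filter_upwards [hnhds] with y hy
      exact hle t' ht' y hy
    · simp only [mul_sub]
      exact (hu t' ht0 x').2.2.sub (hjb t' x')
  have htime : ut t' x' - bt t' x' ≤ 0 := by
    have hderiv := ((hu t' ht0 x').1.sub (hbt t' x')).hasDerivWithinAt (s := Iio t')
    have : (𝓝[<] t').NeBot := inferInstance
    refine le_of_tendsto (hasDerivWithinAt_iff_tendsto_slope' self_notMem_Iio |>.1 hderiv) ?_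
    filter_upwards [Ioo_mem_nhdsLT htI] with r hr
    rw [slope_def_field]
    exact div_nonpos_of_nonneg_of_nonpos
      (sub_nonneg.2 (hle r ⟨hr.1.le, hr.2.le.trans ht'.2⟩ x' hx')) (sub_nonpos.2 hr.2.le)
  nlinarith [hsub t' x' hx', mul_nonneg (hm x') (neg_nonneg.2 htime)]

lemma exp_sub_le {s : ℝ → ℝ} (hs : IsScale κ s) (hm0 : ∀ x, 0 ≤ m x) {t₁ t₂ p q c d k l τ ξ : ℝ}
    (ht₁ : 0 < t₁) (hcont : ContinuousOn (Function.uncurry u) (Icc t₁ t₂ ×ˢ uIcc p q)) (hc : 0 < c)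
    (hkl : ∀ x ∈ uIcc p q, κ x * m x * k < l ^ 2)
    (hinit : ∀ x ∈ uIcc p q, c * Real.exp (l * (s x - s ξ) + k * (t₁ - τ)) - d ≤ u t₁ x)
    (hp : ∀ t ∈ Icc t₁ t₂, c * Real.exp (l * (s p - s ξ) + k * (t - τ)) - d ≤ u t p)
    (hq : ∀ t ∈ Icc t₁ t₂, c * Real.exp (l * (s q - s ξ) + k * (t - τ)) - d ≤ u t q)
    {t x : ℝ} (ht : t ∈ Icc t₁ t₂) (hx : x ∈ uIcc p q) :
    c * Real.exp (l * (s x - s ξ) + k * (t - τ)) - d ≤ u t x := by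
  let e : ℝ → ℝ → ℝ := fun t x => c * Real.exp (l * (s x - s ξ) + k * (t - τ))
  have he : ∀ t x, 0 < e t x := fun t x => mul_pos hc (Real.exp_pos _)
  have het : ∀ t x, HasDerivAt (fun r => e r x) (k * e t x) t := fun t x =>
    (((((hasDerivAt_id t).sub_const τ).const_mul k).const_add (l * (s x - s ξ))).exp.const_mul
      c).congr_deriv (by simp only [e, id]; ring)
  have hex : ∀ t x, HasDerivAt (e t) (l * e t x * (κ x)⁻¹) x := fun t x =>
    ((((hs.hasDerivAt x).sub_const (s ξ)).const_mul l).add_const _).exp.const_mul c |>.congr_deriv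
      (by simp only [e]; ring)
  have hflux : ∀ t x, HasDerivAt (fun z => κ z * (l * e t z * (κ z)⁻¹))
      (l * (l * e t x * (κ x)⁻¹)) x := fun t x => by
    have : (fun z => κ z * (l * e t z * (κ z)⁻¹)) = fun z => l * e t z := by
      ext z; rw [mul_left_comm, mul_inv_cancel₀ (hs.pos z).ne', mul_one]
    exact this ▸ (hex t x).const_mul l
  have hsc := hs.continuous
  refine hu.comparison_principle (b := fun t x => e t x - d) hs.pos hm0 ht₁ hcont
    (by simp only [Function.uncurry_def, e]; fun_prop) (fun t x => (het t x).sub_const _)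
    (fun t x => (hex t x).sub_const _) hflux (fun t x hx => ?_) hinit hp hq ht hx
  rw [show l * (l * e t x * (κ x)⁻¹) = l ^ 2 * e t x * (κ x)⁻¹ by ring, lt_mul_inv_iff₀ (hs.pos x)]
  linarith [mul_lt_mul_of_pos_right (hkl x hx) (he t x)]

/-- The barrier grows in `s` at rate `Λ Δ`, where `Δ = s q - s p` carries the sign of `q - p`. -/
lemma pos_of_forall_pos {s : ℝ → ℝ} (hs : IsScale κ s) (hm : Continuous m) (hm0 : ∀ x, 0 ≤ m x)
    (hu0 : ∀ t, 0 < t → ∀ x, 0 ≤ u t x) {t₁ t₂ p q z : ℝ} (ht₁ : 0 < t₁) (ht₁₂ : t₁ < t₂)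
    (hz : z ∈ uIoo p q) (hcont : ContinuousOn (Function.uncurry u) (Icc t₁ t₂ ×ˢ uIcc p q))
    (hpos : ∀ t ∈ Icc t₁ t₂, 0 < u t q) : 0 < u t₂ z := by
  obtain ⟨M, hM⟩ := (isCompact_uIcc (a := p) (b := q)).exists_bound_of_continuousOn
    (hs.continuous_flux.mul hm).continuousOn
  obtain ⟨t₀, ht₀, hmin⟩ := (isCompact_Icc (a := t₁) (b := t₂)).exists_isMinOn
    ⟨t₁, left_mem_Icc.2 ht₁₂.le⟩ (f := fun t => u t q) fun t ht =>
      (hu.continuousAt_time (ht₁.trans_le ht.1) q).continuousWithinAt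
  have hc : 0 < u t₀ q := hpos t₀ ht₀
  have hδ : 0 < t₂ - t₁ := sub_pos.2 ht₁₂
  have hΔz := mul_sub_pos_of_strictMono hs.strictMono hz
  set Δ := s q - s p
  have hΔ : Δ ≠ 0 := left_ne_zero_of_mul hΔz.ne'
  obtain ⟨Λ, hΛ⟩ := exists_gt (max 0 (M / (t₂ - t₁)))
  have hΛ0 : 0 < Λ := (le_max_left _ _).trans_lt hΛ
  have hΛM : M < Λ * (t₂ - t₁) := (div_lt_iff₀ hδ).1 ((le_max_right _ _).trans_lt hΛ)
  set k := Λ * Δ ^ 2 / (t₂ - t₁)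
  have hk : k * (t₂ - t₁) = Λ * Δ ^ 2 := div_mul_cancel₀ _ hδ.ne'
  have hk0 : 0 < k := by positivity
  have hbelow : ∀ {r}, r ≤ -(Λ * Δ ^ 2) →
      u t₀ q * Real.exp r - u t₀ q * Real.exp (-(Λ * Δ ^ 2)) ≤ 0 := fun hr =>
    sub_nonpos.2 (mul_le_mul_of_nonneg_left (Real.exp_le_exp.2 hr) hc.le)
  have hkt : ∀ t ∈ Icc t₁ t₂, k * (t - t₂) ≤ 0 := fun t ht =>
    mul_nonpos_of_nonneg_of_nonpos hk0.le (sub_nonpos.2 ht.2)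
  have hle := hu.exp_sub_le hs hm0 ht₁ hcont (c := u t₀ q) (l := Λ * Δ) (k := k) (τ := t₂)
    (ξ := q) (d := u t₀ q * Real.exp (-(Λ * Δ ^ 2))) hc (fun x hx => ?_)
    (fun x hx => (hbelow ?_).trans (hu0 t₁ ht₁ x))
    (fun t ht => (hbelow ?_).trans (hu0 t (ht₁.trans_le ht.1) p))
    (fun t ht => le_trans ?_ (hmin ht)) (right_mem_Icc.2 ht₁₂.le) (uIoo_subset_uIcc_self hz)
  · refine lt_of_lt_of_le (sub_pos.2 (mul_lt_mul_of_pos_left (Real.exp_lt_exp.2 ?_) hc)) hle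
    nlinarith [mul_pos hΛ0 hΔz]
  · have hMk := mul_le_mul_of_nonneg_right ((le_abs_self _).trans (hM x hx)) hk0.le
    simp only [Pi.mul_apply] at hMk
    nlinarith [mul_lt_mul_of_pos_right hΛM hk0]
  · nlinarith [mul_nonpos_of_nonneg_of_nonpos hΛ0.le
      (mul_sub_nonpos_of_monotone hs.strictMono.monotone hx)]
  · nlinarith [hkt t ht]
  · rw [sub_self, mul_zero, zero_add]
    nlinarith [Real.exp_le_one_iff.2 (hkt t ht), Real.exp_pos (-(Λ * Δ ^ 2))]

lemma exists_pos {s : ℝ → ℝ} (hs : IsScale κ s) (hm : Continuous m) (hm0 : ∀ x, 0 ≤ m x)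
    (hu0 : ∀ t, 0 < t → ∀ x, 0 ≤ u t x) (hpos : ∀ t, 0 < t → ∃ x, 0 < u t x) {α β : ℝ}
    (hα : 0 < α) (hαβ : α < β) (z : ℝ) : ∃ t, α < t ∧ t < β ∧ 0 < u t z := by
  obtain ⟨t₀, hαt₀, ht₀β⟩ := exists_between hαβ
  obtain ⟨q, hq⟩ := hpos t₀ (hα.trans hαt₀)
  rcases eq_or_ne z q with rfl | hzq
  · exact ⟨t₀, hαt₀, ht₀β, hq⟩
  obtain ⟨l, r, ht₀, hsub⟩ := mem_nhds_iff_exists_Ioo_subset.1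
    ((hu.continuousAt_time (hα.trans hαt₀) q).eventually_const_lt hq)
  obtain ⟨t₁, t₂, hlt₁, ht₁₂, ht₂r, hcont⟩ := hu.exists_continuousOn_uncurry hs.continuous_flux
    hs.pos (hα.trans_le (le_max_left α l)) (β := min β r)
    (lt_min (max_lt hαβ (ht₀.1.trans ht₀β)) (max_lt (hαt₀.trans ht₀.2) (ht₀.1.trans ht₀.2)))
    (2 * z - q) q
  obtain ⟨hαt₁, hlt₁⟩ := max_lt_iff.1 hlt₁
  obtain ⟨ht₂β, ht₂r⟩ := lt_min_iff.1 ht₂r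
  refine ⟨t₂, hαt₁.trans ht₁₂, ht₂β, hu.pos_of_forall_pos hs hm hm0 hu0 (hα.trans hαt₁) ht₁₂ ?_
    hcont fun t ht => hsub ⟨hlt₁.trans_le ht.1, ht.2.trans_lt ht₂r⟩⟩
  rcases hzq.lt_or_gt with h | h
  · exact Ioo_subset_uIoo ⟨by linarith, h⟩
  · exact Ioo_subset_uIoo' ⟨h, by linarith⟩

end IsDivergenceSol

/-! ### Fundamental solutions -/

lemma lowerSemicontinuousAt_lintegral {X α : Type*} [TopologicalSpace X]
    [FirstCountableTopology X] [MeasurableSpace α] {ρ : Measure α} {f : X → α → ENNReal} {x : X}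
    (hmeas : ∀ᶠ y in 𝓝 x, AEMeasurable (f y) ρ)
    (hlsc : ∀ᵐ a ∂ρ, LowerSemicontinuousAt (fun y => f y a) x) :
    LowerSemicontinuousAt (fun y => ∫⁻ a, f y a ∂ρ) x := by
  classical
  let g : X → α → ENNReal := fun y => if AEMeasurable (f y) ρ then f y else 0
  have hg : ∀ y, AEMeasurable (g y) ρ := fun y => by
    by_cases h : AEMeasurable (f y) ρ
    · simpa only [g, if_pos h] using h
    · simpa only [g, if_neg h] using measurable_zero.aemeasurable
  have hfg : ∀ᶠ y in 𝓝 x, f y = g y := hmeas.mono fun y h => (if_pos h).symm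
  rw [lowerSemicontinuousAt_iff_le_liminf]
  calc ∫⁻ a, f x a ∂ρ ≤ ∫⁻ a, liminf (fun y => f y a) (𝓝 x) ∂ρ :=
        lintegral_mono_ae (hlsc.mono fun a ha => ha.le_liminf)
    _ = ∫⁻ a, liminf (fun y => g y a) (𝓝 x) ∂ρ := by
        congr 1 with a
        exact liminf_congr (hfg.mono fun y h => congrFun h a)
    _ ≤ liminf (fun y => ∫⁻ a, g y a ∂ρ) (𝓝 x) := lintegral_liminf_le' hg
    _ = liminf (fun y => ∫⁻ a, f y a ∂ρ) (𝓝 x) :=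
        liminf_congr (hfg.mono fun y h => by rw [h])

lemma lowerSemicontinuousAt_integral {X α : Type*} [TopologicalSpace X]
    [FirstCountableTopology X] [MeasurableSpace α] {ρ : Measure α} {f : X → α → ℝ} {x : X}
    (hf0 : ∀ᶠ y in 𝓝 x, 0 ≤ᵐ[ρ] f y) (hfi : ∀ᶠ y in 𝓝 x, Integrable (f y) ρ)
    (hlsc : ∀ᵐ a ∂ρ, LowerSemicontinuousAt (fun y => f y a) x) :
    LowerSemicontinuousAt (fun y => ∫ a, f y a ∂ρ) x := by
  have h := lowerSemicontinuousAt_lintegral (f := fun y a => ENNReal.ofReal (f y a))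
    (hfi.mono fun y hy => hy.aestronglyMeasurable.aemeasurable.ennreal_ofReal)
    (hlsc.mono fun a ha => ENNReal.continuous_ofReal.continuousAt.comp_lowerSemicontinuousAt ha
      fun _ _ => ENNReal.ofReal_le_ofReal)
  intro c hc
  rcases lt_or_ge c 0 with hc0 | hc0
  · exact hf0.mono fun y hy => hc0.trans_le (integral_nonneg_of_ae hy)
  have hlt : ENNReal.ofReal c < ∫⁻ a, ENNReal.ofReal (f x a) ∂ρ := by
    rw [← ofReal_integral_eq_lintegral_ofReal hfi.self_of_nhds hf0.self_of_nhds]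
    exact (ENNReal.ofReal_lt_ofReal_iff_of_nonneg hc0).2 hc
  filter_upwards [h _ hlt, hf0, hfi] with y hy hy0 hyi
  rw [← ofReal_integral_eq_lintegral_ofReal hyi hy0] at hy
  exact (ENNReal.ofReal_lt_ofReal_iff_of_nonneg hc0).1 hy

/-- The integrating factor `exp(-W ∫₀ˣ 1/c)`, which absorbs the drift `W ∂ₓ` into the
divergence-form operator `∂ₓ(c ∂ₓ)`. -/
noncomputable def driftWeight (W : ℝ) (c : ℝ → ℝ) (x : ℝ) : ℝ :=
  Real.exp (-(W * ∫ z in (0 : ℝ)..x, (c z)⁻¹))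

/-- The scale function of the flux coefficient `driftWeight W c * c`. -/
noncomputable def driftScale (W : ℝ) (c : ℝ → ℝ) (x : ℝ) : ℝ :=
  ∫ z in (0 : ℝ)..x, (driftWeight W c z * c z)⁻¹

section DriftWeight

variable {W : ℝ} {c : ℝ → ℝ}

lemma driftWeight_pos (W : ℝ) (c : ℝ → ℝ) (x : ℝ) : 0 < driftWeight W c x := Real.exp_pos _

variable (hc : Continuous c) (hc0 : ∀ x, 0 < c x)
include hc hc0

lemma hasDerivAt_driftWeight (W x : ℝ) :
    HasDerivAt (driftWeight W c) (-(W / c x) * driftWeight W c x) x := by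
  have hinv : Continuous fun z => (c z)⁻¹ := hc.inv₀ fun z => (hc0 z).ne'
  exact ((hinv.integral_hasStrictDerivAt 0 x).hasDerivAt.const_mul W).neg.exp.congr_deriv
    (by simp only [driftWeight, Pi.neg_apply]; ring)

lemma continuous_driftWeight (W : ℝ) : Continuous (driftWeight W c) :=
  continuous_iff_continuousAt.2 fun x => (hasDerivAt_driftWeight hc hc0 W x).continuousAt

lemma isScale_driftScale (W : ℝ) :
    IsScale (fun x => driftWeight W c x * c x) (driftScale W c) := by
  have hκ := (continuous_driftWeight hc hc0 W).mul hc
  have hκ0 : ∀ x, 0 < driftWeight W c x * c x := fun x => mul_pos (driftWeight_pos W c x) (hc0 x)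
  exact ⟨hκ, hκ0, fun x =>
    ((hκ.inv₀ fun z => (hκ0 z).ne').integral_hasStrictDerivAt 0 x).hasDerivAt⟩

lemma one_add_mul_driftScale (W x : ℝ) : 1 + W * driftScale W c x = (driftWeight W c x)⁻¹ := by
  have hd : ∀ x, HasDerivAt (fun x => 1 + W * driftScale W c x - (driftWeight W c x)⁻¹) 0 x :=
    fun x => by
      have hw := (driftWeight_pos W c x).ne'
      have hcx := (hc0 x).ne'
      refine ((((isScale_driftScale hc hc0 W).hasDerivAt x).const_mul W).const_add 1 |>.sub
        ((hasDerivAt_driftWeight hc hc0 W x).inv hw)).congr_deriv ?_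
      field_simp
      ring
  have hconst := is_const_of_deriv_eq_zero (fun x => (hd x).differentiableAt)
    (fun x => (hd x).deriv) x 0
  simp only [driftScale, driftWeight, integral_same, mul_zero, neg_zero, Real.exp_zero, add_zero,
    inv_one, sub_self] at hconst ⊢
  exact sub_eq_zero.1 hconst

lemma hasDerivAt_driftWeight_mul_flux {V : ℝ → ℝ} {q x : ℝ}
    (hV : HasDerivAt (fun z => c z * V z) q x) :
    HasDerivAt (fun z => driftWeight W c z * c z * V z) (driftWeight W c x * (q - W * V x)) x := by
  have hcx := (hc0 x).ne'
  simp only [mul_assoc]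
  refine ((hasDerivAt_driftWeight hc hc0 W x).mul hV).congr_deriv ?_
  field_simp
  ring

lemma hasDerivAt_flux_of_driftWeight_mul {V : ℝ → ℝ} {g x : ℝ}
    (hV : HasDerivAt (fun z => driftWeight W c z * c z * V z) (driftWeight W c x * g) x) :
    HasDerivAt (fun z => c z * V z) (g + W * V x) x := by
  have hcx := (hc0 x).ne'
  have hw := fun z => (driftWeight_pos W c z).ne'
  have heq : (fun z => c z * V z) =
      fun z => driftWeight W c z * c z * V z / driftWeight W c z := by
    ext z
    rw [mul_assoc, mul_div_cancel_left₀ _ (hw z)]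
  rw [heq]
  refine (hV.div (hasDerivAt_driftWeight hc hc0 W x) (hw x)).congr_deriv ?_
  have := hw x
  field_simp
  ring

end DriftWeight

lemma IsCanonicalSolOn.isDivergenceSol {ν a : ℝ → ℝ} {W : ℝ} {u : ℝ → ℝ → ℝ}
    (hu : IsCanonicalSolOn ν a W u (Ioi 0)) (hc : Continuous fun x => ν x * a x)
    (hc0 : ∀ x, 0 < ν x * a x) :
    IsDivergenceSol (fun x => driftWeight W (fun x => ν x * a x) x * (ν x * a x))
      (fun x => driftWeight W (fun x => ν x * a x) x * ν x) u := by
  obtain ⟨ut, ux, q, hu⟩ := hu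
  refine ⟨ut, ux, fun t ht x => ?_⟩
  obtain ⟨hut, hux, hq, heq⟩ := hu t ht x
  refine ⟨hut, hux, (hasDerivAt_driftWeight_mul_flux hc hc0 hq).congr_deriv ?_⟩
  rw [mul_assoc]
  congr 1
  linarith

namespace IsFundSol

variable {ν a : ℝ → ℝ} {W : ℝ} {P : ℝ → ℝ → ℝ → ℝ} (hP : IsFundSol ν a W P)
include hP

lemma nonneg {t : ℝ} (ht : 0 < t) (x y : ℝ) : 0 ≤ P t x y := hP.2.1 y t ht x

lemma integral_mul_eq_one {t : ℝ} (ht : 0 < t) (y : ℝ) : ∫ x, ν x * P t x y = 1 :=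
  hP.2.2.1 y t ht

lemma add_eq_integral {s t : ℝ} (hs : 0 < s) (ht : 0 < t) (x y : ℝ) :
    P (t + s) x y = ∫ z, ν z * P t x z * P s z y := hP.2.2.2.2 s t hs ht x y

variable (hν : Continuous ν) (hν0 : ∀ x, 0 < ν x) (ha : Continuous a) (ha0 : ∀ x, 0 < a x)
include hν hν0 ha ha0

lemma isDivergenceSol (y : ℝ) :
    IsDivergenceSol (fun x => driftWeight W (fun x => ν x * a x) x * (ν x * a x))
      (fun x => driftWeight W (fun x => ν x * a x) x * ν x) fun t x => P t x y :=
  (hP.1 y).isDivergenceSol (hν.mul ha) fun x => mul_pos (hν0 x) (ha0 x)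

lemma exists_pos {α β : ℝ} (hα : 0 < α) (hαβ : α < β) (x y : ℝ) :
    ∃ t, α < t ∧ t < β ∧ 0 < P t x y := by
  have hc := hν.mul ha
  have hc0 := fun x => mul_pos (hν0 x) (ha0 x)
  refine (hP.isDivergenceSol hν hν0 ha ha0 y).exists_pos (isScale_driftScale hc hc0 W)
    ((continuous_driftWeight hc hc0 W).mul hν)
    (fun x => (mul_pos (driftWeight_pos W _ x) (hν0 x)).le) (fun t ht x => hP.nonneg ht x y)
    (fun t ht => ?_) hα hαβ x
  by_contra! h
  have := hP.integral_mul_eq_one ht y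
  simp only [le_antisymm (h _) (hP.nonneg ht _ y), mul_zero, integral_zero] at this
  exact zero_ne_one this

lemma aestronglyMeasurable {t : ℝ} (ht : 0 < t) (x : ℝ) :
    AEStronglyMeasurable fun z => P t x z := by
  have hsol := hP.isDivergenceSol hν hν0 ha ha0
  obtain ⟨t₁, htt₁, -, hpos⟩ := hP.exists_pos hν hν0 ha ha0 ht (lt_add_one t) x 0
  obtain ⟨l, r, ht₁, hsub⟩ := mem_nhds_iff_exists_Ioo_subset.1
    (((hsol 0).continuousAt_time (ht.trans htt₁) x).eventually_const_lt hpos)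
  let ι := {q : ℚ // t₁ - t < q ∧ q < r - t}
  have hcover : ⋃ q : ι, {z | 0 < P q.1 z 0} = univ := eq_univ_of_forall fun z => by
    obtain ⟨s, hs₁, hs₂, hsz⟩ := hP.exists_pos hν hν0 ha ha0 (sub_pos.2 htt₁)
      (sub_lt_sub_right ht₁.2 t) z 0
    obtain ⟨l', r', hs, hsub'⟩ := mem_nhds_iff_exists_Ioo_subset.1
      (((hsol 0).continuousAt_time ((sub_pos.2 htt₁).trans hs₁) z).eventually_const_lt hsz)
    obtain ⟨q, hq₁, hq₂⟩ := exists_rat_btwn (max_lt hs₁ hs.1)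
    obtain ⟨h₁, h₂⟩ := max_lt_iff.1 hq₁
    exact mem_iUnion.2 ⟨⟨q, h₁, hq₂.trans hs₂⟩, hsub' ⟨h₂, hq₂.trans hs.2⟩⟩
  rw [← Measure.restrict_univ (μ := volume), ← hcover, aestronglyMeasurable_iUnion_iff]
  rintro ⟨q, hq₁, hq₂⟩
  have hq : (0 : ℝ) < q := (sub_pos.2 htt₁).trans hq₁
  have hcont : Continuous fun z => P q z 0 := (hsol 0).continuous hq
  have hne : ∫ z, ν z * P t x z * P q z 0 ≠ 0 := by
    rw [← hP.add_eq_integral hq ht]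
    exact (hsub ⟨by linarith [ht₁.1], by linarith⟩ : 0 < P (t + q) x 0).ne'
  refine ((Integrable.of_integral_ne_zero hne).aestronglyMeasurable.mul
    (hν.mul hcont).measurable.inv.aestronglyMeasurable).restrict.congr ?_
  refine ae_restrict_of_forall_mem (isOpen_lt continuous_const hcont).measurableSet fun z hz => ?_
  have hz' : P q z 0 ≠ 0 := ne_of_gt hz
  have hνz := (hν0 z).ne'
  simp only [Pi.mul_apply, Pi.inv_apply]
  field_simp

/-- If the Chapman–Kolmogorov integral diverged at time `s`, then by Fatou it would exceed `1` or
diverge, hence have the junk value `0`, at all times near `s`; as `P` is continuous in time it would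
vanish near `s`. -/
lemma integrable_mul {s t : ℝ} (hs : 0 < s) (ht : 0 < t) (x y : ℝ) :
    Integrable fun z => ν z * P t x z * P s z y := by
  have hsol := hP.isDivergenceSol hν hν0 ha ha0
  have hmeas : ∀ r, 0 < r → AEStronglyMeasurable fun z => ν z * P t x z * P r z y := fun r hr =>
    (hν.aestronglyMeasurable.mul (hP.aestronglyMeasurable hν hν0 ha ha0 ht x)).mul
      ((hsol y).continuous hr).aestronglyMeasurable
  have hnonneg : ∀ r, 0 < r → 0 ≤ᵐ[volume] fun z => ν z * P t x z * P r z y := fun r hr =>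
    .of_forall fun z => mul_nonneg (mul_nonneg (hν0 z).le (hP.nonneg ht x z)) (hP.nonneg hr z y)
  by_contra hni
  have hpos : ∀ᶠ r in 𝓝 s, 0 < r := lt_mem_nhds hs
  have hlsc : LowerSemicontinuousAt
      (fun r => ∫⁻ z, ENNReal.ofReal (ν z * P t x z * P r z y)) s :=
    lowerSemicontinuousAt_lintegral
      (hpos.mono fun r hr => (hmeas r hr).aemeasurable.ennreal_ofReal) <| .of_forall fun z =>
        (ENNReal.continuous_ofReal.continuousAt.comp
          (continuousAt_const.mul ((hsol y).continuousAt_time hs z))).lowerSemicontinuousAt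
  have htop : ∫⁻ z, ENNReal.ofReal (ν z * P t x z * P s z y) = ⊤ := by
    contrapose! hni
    exact (lintegral_ofReal_ne_top_iff_integrable (hmeas s hs) (hnonneg s hs)).1 hni
  have hcont : ContinuousAt (fun r => P (t + r) x y) s :=
    ((hsol y).continuousAt_time (add_pos ht hs) x).comp (f := fun r => t + r) (by fun_prop)
  have hzero : P (t + s) x y = 0 := by rw [hP.add_eq_integral hs ht, integral_undef hni]
  have hnear : ∀ᶠ r in 𝓝 s, P (t + r) x y = 0 := by
    filter_upwards [hpos, hlsc 1 (by simp only [htop, ENNReal.one_lt_top]),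
      hcont.eventually_lt_const (hzero.trans_lt one_pos)] with r hr hI hlt
    rw [hP.add_eq_integral hr ht] at hlt ⊢
    refine integral_undef fun hint => hlt.not_ge ?_
    rw [← ofReal_integral_eq_lintegral_ofReal hint (hnonneg r hr)] at hI
    exact (ENNReal.one_lt_ofReal.1 hI).le
  obtain ⟨l, r, hs', hsub⟩ := mem_nhds_iff_exists_Ioo_subset.1 hnear
  obtain ⟨t', h₁, h₂, hpos'⟩ := hP.exists_pos hν hν0 ha ha0 (add_pos ht hs)
    (add_lt_add_right hs'.2 t) x y
  refine hpos'.ne' ?_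
  rw [← hsub ⟨by linarith [hs'.1], by linarith⟩ (a := t' - t), add_sub_cancel]

lemma lowerSemicontinuousAt {t : ℝ} (ht : 0 < t) (x y : ℝ) :
    LowerSemicontinuousAt (Function.uncurry fun t x => P t x y) (t, x) := by
  have hsol := hP.isDivergenceSol hν hν0 ha ha0
  have ht2 : 0 < t / 2 := half_pos ht
  have hlt : ∀ᶠ w : ℝ × ℝ in 𝓝 (t, x), t / 2 < w.1 :=
    continuous_fst.continuousAt.eventually_const_lt (half_lt_self ht)
  have hlsc : LowerSemicontinuousAt
      (fun w : ℝ × ℝ => ∫ z, ν z * P (t / 2) w.2 z * P (w.1 - t / 2) z y) (t, x) := by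
    refine lowerSemicontinuousAt_integral (hlt.mono fun w hw => .of_forall fun z => ?_)
      (hlt.mono fun w hw => ?_) (.of_forall fun z => ContinuousAt.lowerSemicontinuousAt ?_)
    · exact mul_nonneg (mul_nonneg (hν0 z).le (hP.nonneg ht2 _ z)) (hP.nonneg (sub_pos.2 hw) z y)
    · exact hP.integrable_mul hν hν0 ha ha0 (sub_pos.2 hw) ht2 _ y
    · refine (continuousAt_const.mul ?_).mul ?_
      · exact ((hsol z).continuous ht2).continuousAt.comp continuousAt_snd
      · exact ((hsol y).continuousAt_time (by simpa using ht2) z).comp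
          (f := fun w : ℝ × ℝ => w.1 - t / 2) (by fun_prop)
  have heq : (fun w : ℝ × ℝ => ∫ z, ν z * P (t / 2) w.2 z * P (w.1 - t / 2) z y) =ᶠ[𝓝 (t, x)]
      Function.uncurry fun t x => P t x y := by
    filter_upwards [hlt] with w hw
    rw [← hP.add_eq_integral (sub_pos.2 hw) ht2, add_sub_cancel]
    rfl
  intro b hb
  rw [← heq.self_of_nhds] at hb
  filter_upwards [hlsc b hb, heq] with w hw hw'
  rwa [← hw']

end IsFundSol

/-! ### Time averages of conservative solutions -/

section Elliptic

variable {M : ℝ} {f : ℝ → ℝ} (hM : 0 < M) (hf : Elliptic M f)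
include hM hf

lemma Elliptic.pos (x : ℝ) : 0 < f x := (one_div_pos.2 hM).trans_le (hf x).1

lemma Elliptic.one_le_mul (x : ℝ) : 1 ≤ M * f x := (div_le_iff₀' hM).1 (hf x).1

lemma Elliptic.le_mul {y : ℝ} (hy : 0 ≤ y) (x : ℝ) : y ≤ M * (f x * y) := by
  nlinarith [hf.one_le_mul hM x]

lemma Elliptic.norm_le (x : ℝ) : ‖f x‖ ≤ M := by
  rw [Real.norm_of_nonneg (hf.pos hM x).le]
  exact (hf x).2

lemma Elliptic.norm_inv_le (x : ℝ) : ‖(f x)⁻¹‖ ≤ M := by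
  rw [norm_inv, Real.norm_of_nonneg (hf.pos hM x).le]
  exact inv_le_of_inv_le₀ hM (by simpa using (hf x).1)

lemma Elliptic.mono {N : ℝ} (hMN : M ≤ N) : Elliptic N f := fun x =>
  ⟨(one_div_le_one_div_of_le hM hMN).trans (hf x).1, (hf x).2.trans hMN⟩

lemma Elliptic.mul {N : ℝ} {g : ℝ → ℝ} (hN : 0 < N) (hg : Elliptic N g) :
    Elliptic (M * N) fun x => f x * g x := fun x => by
  rw [← one_div_mul_one_div]
  exact ⟨mul_le_mul (hf x).1 (hg x).1 (by positivity) (hf.pos hM x).le,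
    mul_le_mul (hf x).2 (hg x).2 (hg.pos hN x).le hM.le⟩

lemma Elliptic.integrable_of_mul {g : ℝ → ℝ} (hfc : Continuous f)
    (hfg : Integrable fun x => f x * g x) : Integrable g := by
  have hg : g = fun x => (f x)⁻¹ * (f x * g x) := by
    ext x
    rw [inv_mul_cancel_left₀ (hf.pos hM x).ne']
  refine (hfg.norm.const_mul M).mono' ?_ (.of_forall fun x => ?_)
  · rw [hg]
    exact (hfc.inv₀ fun x => (hf.pos hM x).ne').aestronglyMeasurable.mul hfg.aestronglyMeasurable
  · rw [norm_mul, Real.norm_of_nonneg (hf.pos hM x).le]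
    exact hf.le_mul hM (norm_nonneg _) x

end Elliptic

/-- Coefficients of the equation `ν ∂ₜu = ∂ₓ(c ∂ₓu) - W ∂ₓu`: the weight `ν` and the flux
coefficient `c` are continuous and uniformly elliptic, the drift `W` is nonnegative. -/
structure IsDriftDiffusion (M W : ℝ) (ν c : ℝ → ℝ) : Prop where
  pos : 0 < M
  drift_nonneg : 0 ≤ W
  continuous_weight : Continuous ν
  elliptic_weight : Elliptic M ν
  continuous_flux : Continuous c
  elliptic_flux : Elliptic M c

/-- A nonnegative classical solution of `ν ∂ₜu = ∂ₓ(c ∂ₓu) - W ∂ₓu` of unit mass with respect to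
`ν`. The equation is written in divergence form by means of the integrating factor. -/
structure IsConservativeSol (W : ℝ) (ν c : ℝ → ℝ) (u : ℝ → ℝ → ℝ) : Prop extends
    IsNonnegSol (fun x => driftWeight W c x * c x) (fun x => driftWeight W c x * ν x) u where
  integral_eq_one : ∀ t, 0 < t → ∫ x, ν x * u t x = 1

namespace IsDriftDiffusion

variable {M W : ℝ} {ν c : ℝ → ℝ} (h : IsDriftDiffusion M W ν c)
include h

lemma weight_pos (x : ℝ) : 0 < ν x := h.elliptic_weight.pos h.pos x

lemma flux_pos (x : ℝ) : 0 < c x := h.elliptic_flux.pos h.pos x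

lemma isScale : IsScale (fun x => driftWeight W c x * c x) (driftScale W c) :=
  isScale_driftScale h.continuous_flux h.flux_pos W

lemma continuous_mul_weight : Continuous fun x => driftWeight W c x * ν x :=
  (continuous_driftWeight h.continuous_flux h.flux_pos W).mul h.continuous_weight

end IsDriftDiffusion

namespace IsConservativeSol

variable {M W : ℝ} {ν c : ℝ → ℝ} {u : ℝ → ℝ → ℝ} {a b : ℝ} (hu : IsConservativeSol W ν c u)
include hu

lemma integrable_mul {t : ℝ} (ht : 0 < t) : Integrable fun x => ν x * u t x :=
  .of_integral_ne_zero ((hu.integral_eq_one t ht).trans_ne one_ne_zero)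

lemma continuous_max_time (ha : 0 < a) (x : ℝ) : Continuous fun t => u (max t a) x :=
  continuous_iff_continuousAt.2 fun t =>
    (hu.sol.continuousAt_time (lt_max_of_lt_right ha) x).comp (f := fun t => max t a)
      (by fun_prop)

lemma intervalIntegrable_time (ha : 0 < a) (hab : a ≤ b) (x : ℝ) :
    IntervalIntegrable (fun t => u t x) volume a b :=
  (hu.continuousOn_time ha x).intervalIntegrable_of_Icc hab

lemma timeIntegral_nonneg (ha : 0 < a) (hab : a ≤ b) (x : ℝ) : 0 ≤ ∫ t in a..b, u t x :=
  integral_nonneg hab fun t ht => hu.nonneg t (ha.trans_le ht.1) x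

variable (hc : IsDriftDiffusion M W ν c)
include hc

lemma integrable {t : ℝ} (ht : 0 < t) : Integrable (u t) :=
  hc.elliptic_weight.integrable_of_mul hc.pos hc.continuous_weight (hu.integrable_mul ht)

lemma integrable_prod (ha : 0 < a) (hab : a ≤ b) :
    Integrable (Function.uncurry fun t x => ν x * u t x)
      ((volume.restrict (uIoc a b)).prod volume) := by
  have hmeas : StronglyMeasurable (Function.uncurry fun t x => ν x * u (max t a) x) :=
    stronglyMeasurable_uncurry_of_continuous_of_stronglyMeasurable
      (fun x => (hu.continuous_max_time ha x).const_mul (ν x))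
      fun t => (hc.continuous_weight.mul
        (hu.sol.continuous (lt_max_of_lt_right ha))).stronglyMeasurable
  have hmax : ∀ t ∈ uIoc a b, max t a = t := fun t ht =>
    max_eq_left (uIoc_of_le hab ▸ ht).1.le
  have hmass : ∀ t, ∫ x, ‖ν x * u (max t a) x‖ = 1 := fun t => by
    rw [← hu.integral_eq_one _ (lt_max_of_lt_right ha : 0 < max t a)]
    exact integral_congr_ae (.of_forall fun x => Real.norm_of_nonneg
      (mul_nonneg (hc.weight_pos x).le (hu.nonneg _ (lt_max_of_lt_right ha) x)))
  have hint : Integrable (Function.uncurry fun t x => ν x * u (max t a) x)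
      ((volume.restrict (uIoc a b)).prod volume) := by
    refine (integrable_prod_iff hmeas.aestronglyMeasurable).2
      ⟨.of_forall fun t => hu.integrable_mul (lt_max_of_lt_right ha), ?_⟩
    simp only [Function.uncurry, hmass]
    exact integrableOn_const (Real.volume_uIoc ▸ ENNReal.ofReal_ne_top)
  refine hint.congr ?_
  have hfst := (Measure.quasiMeasurePreserving_fst (μ := volume.restrict (uIoc a b))
    (ν := (volume : Measure ℝ))).ae (ae_restrict_of_forall_mem measurableSet_uIoc hmax)
  filter_upwards [hfst] with p hp
  simp only [Function.uncurry, hp]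

lemma integrable_mul_timeIntegral (ha : 0 < a) (hab : a ≤ b) :
    Integrable fun x => ν x * ∫ t in a..b, u t x := by
  have hswap := (hu.integrable_prod hc ha hab).swap.integral_prod_left
  simpa only [uIoc_of_le hab, Function.comp_apply, Prod.swap_prod_mk, Function.uncurry,
    ← integral_of_le hab, intervalIntegral.integral_const_mul] using hswap

lemma integral_mul_timeIntegral (ha : 0 < a) (hab : a ≤ b) :
    ∫ x, ν x * ∫ t in a..b, u t x = b - a := by
  simp only [← intervalIntegral.integral_const_mul]
  rw [← intervalIntegral_integral_swap (hu.integrable_prod hc ha hab)]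
  calc ∫ t in a..b, ∫ x, ν x * u t x = ∫ _ in a..b, (1 : ℝ) :=
        integral_congr fun t ht => hu.integral_eq_one t (ha.trans_le (uIcc_of_le hab ▸ ht).1)
    _ = b - a := by rw [integral_one]

lemma exists_hasDerivAt_timeIntegral (ha : 0 < a) (hab : a ≤ b) :
    ∃ V : ℝ → ℝ, ∀ x, HasDerivAt (fun z => ∫ t in a..b, u t z) (V x) x ∧
      HasDerivAt (fun z => driftWeight W c z * c z * V z)
        (driftWeight W c x * ν x * (u b x - u a x)) x := by
  have hb := ha.trans_le hab
  have hcancel : ∀ z, (1 + W * driftScale W c z) * driftWeight W c z = 1 := fun z => by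
    rw [one_add_mul_driftScale hc.continuous_flux hc.flux_pos,
      inv_mul_cancel₀ (driftWeight_pos W c z).ne']
  have hf : Continuous fun z => driftWeight W c z * ν z * (u b z - u a z) :=
    hc.continuous_mul_weight.mul ((hu.sol.continuous hb).sub (hu.sol.continuous ha))
  have hweight : (fun z => (1 + W * driftScale W c z) *
      (driftWeight W c z * ν z * (u b z - u a z))) = fun z => ν z * u b z - ν z * u a z := by
    ext z
    linear_combination (ν z * (u b z - u a z)) * hcancel z
  refine hc.isScale.exists_hasDerivAt_of_chordGap_eq_zero hf fun p x q hpx hxq => ?_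
  refine hc.isScale.chordGap_eq_zero (K := M) hc.drift_nonneg (fun z => ?_) (fun z => ?_) hf ?_ ?_
    (hu.timeIntegral_nonneg ha hab) ?_ (fun p x q hpx hxq => ?_) hpx hxq
  · rw [one_add_mul_driftScale hc.continuous_flux hc.flux_pos]
    exact inv_pos.2 (driftWeight_pos W c z)
  · rw [show driftWeight W c z * c z * (1 + W * driftScale W c z) = c z by
      linear_combination c z * hcancel z]
    exact (hc.elliptic_flux z).2
  · exact hweight ▸ (hu.integrable_mul hb).sub (hu.integrable_mul ha)
  · rw [hweight, integral_sub (hu.integrable_mul hb) (hu.integrable_mul ha),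
      hu.integral_eq_one b hb, hu.integral_eq_one a ha, sub_self]
  · exact hc.elliptic_weight.integrable_of_mul hc.pos hc.continuous_weight
      (hu.integrable_mul_timeIntegral hc ha hab)
  · exact hu.chordGap_fluxPrimitive_le_integral ha hc.isScale hc.continuous_mul_weight
      (fun z => (mul_pos (driftWeight_pos W c z) (hc.weight_pos z)).le) hab hpx hxq

end IsConservativeSol

/-- The forward Steklov average of `u` in time over a window of length `η`. -/
noncomputable def steklov (η : ℝ) (u : ℝ → ℝ → ℝ) (t x : ℝ) : ℝ := η⁻¹ * ∫ s in t..t + η, u s x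

namespace IsConservativeSol

variable {M W : ℝ} {ν c : ℝ → ℝ} {u : ℝ → ℝ → ℝ} {η t : ℝ} (hu : IsConservativeSol W ν c u)
include hu

lemma hasDerivAt_steklov_time (hη : 0 < η) (ht : 0 < t) (x : ℝ) :
    HasDerivAt (fun r => steklov η u r x) (η⁻¹ * (u (t + η) x - u t x)) t := by
  have ha : 0 < t / 2 := half_pos ht
  have hcont := hu.continuous_max_time ha x
  have hG := fun r => (hcont.integral_hasStrictDerivAt 0 r).hasDerivAt
  have hdiff := ((hG (t + η)).comp_add_const t η).sub (hG t)
  have hmax : ∀ r, t / 2 < r → max r (t / 2) = r := fun r hr => max_eq_left hr.le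
  rw [hmax _ (by linarith), hmax _ (half_lt_self ht)] at hdiff
  refine (hdiff.const_mul η⁻¹).congr_of_eventuallyEq ?_
  filter_upwards [lt_mem_nhds (half_lt_self ht)] with r hr
  simp only [steklov, Pi.sub_apply]
  rw [integral_interval_sub_left (hcont.intervalIntegrable _ _) (hcont.intervalIntegrable _ _)]
  congr 1
  refine integral_congr fun s hs => ?_
  rw [uIcc_of_le (by linarith)] at hs
  simp only [hmax s (hr.trans_le hs.1)]

lemma exists_steklov_eq (hη : 0 < η) (ht : 0 < t) (x : ℝ) :
    ∃ s ∈ Icc t (t + η), steklov η u t x = u s x := by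
  have hle : t ≤ t + η := by linarith
  obtain ⟨s, hs, heq⟩ := exists_eq_interval_average (f := fun s => u s x) (by linarith : t ≠ t + η)
    (uIcc_of_le hle ▸ hu.continuousOn_time ht x)
  refine ⟨s, uIcc_of_le hle ▸ uIoo_subset_uIcc_self hs, ?_⟩
  rw [heq, interval_average_eq, add_sub_cancel_left, steklov, smul_eq_mul]

lemma lowerSemicontinuousAt_steklov (hη : 0 < η) (ht : 0 < t) (x : ℝ) :
    LowerSemicontinuousAt (Function.uncurry (steklov η u)) (t, x) := by
  have hshift : Function.uncurry (steklov η u) =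
      fun w : ℝ × ℝ => η⁻¹ * ∫ r in Ioc 0 η, u (w.1 + r) w.2 := by
    ext w
    rw [← integral_of_le hη.le, integral_comp_add_left (fun s => u s w.2), add_zero]
    rfl
  have hpos : ∀ᶠ w : ℝ × ℝ in 𝓝 (t, x), 0 < w.1 := continuousAt_fst.eventually_const_lt ht
  have hlsc : LowerSemicontinuousAt
      (fun w : ℝ × ℝ => ∫ r in Ioc 0 η, u (w.1 + r) w.2) (t, x) := by
    refine lowerSemicontinuousAt_integral
      (hpos.mono fun w hw => ae_restrict_of_forall_mem measurableSet_Ioc fun r hr =>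
        hu.nonneg _ (add_pos hw hr.1) _)
      (hpos.mono fun w hw => ?_)
      (ae_restrict_of_forall_mem measurableSet_Ioc fun r hr => ?_)
    · have := (hu.intervalIntegrable_time hw (by linarith : w.1 ≤ w.1 + η) w.2).comp_add_left w.1
      rw [sub_self, add_sub_cancel_left] at this
      exact this.1
    · have hadd : ContinuousAt (fun w : ℝ × ℝ => (w.1 + r, w.2)) (t, x) := by fun_prop
      exact fun y hy => hadd.eventually (hu.lsc _ (add_pos ht hr.1) x y hy)
  rw [hshift]
  exact (continuous_const_mul η⁻¹).continuousAt.comp_lowerSemicontinuousAt hlsc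
    fun _ _ h => mul_le_mul_of_nonneg_left h (inv_nonneg.2 hη.le)

/-- So averaging can be iterated, which makes the solution twice differentiable in time. -/
protected lemma steklov (hc : IsDriftDiffusion M W ν c) (hη : 0 < η) :
    IsConservativeSol W ν c (steklov η u) where
  sol := by
    choose! V hV using fun t (ht : 0 < t) =>
      hu.exists_hasDerivAt_timeIntegral hc ht (by linarith : t ≤ t + η)
    refine ⟨fun t x => η⁻¹ * (u (t + η) x - u t x), fun t x => η⁻¹ * V t x, fun t ht x =>
      ⟨hu.hasDerivAt_steklov_time hη ht x, (hV t ht x).1.const_mul _, ?_⟩⟩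
    simpa only [mul_left_comm] using (hV t ht x).2.const_mul η⁻¹
  nonneg t ht x := mul_nonneg (inv_nonneg.2 hη.le) (hu.timeIntegral_nonneg ht (by linarith) x)
  lsc t ht x := hu.lowerSemicontinuousAt_steklov hη ht x
  integral_eq_one t ht := by
    simp only [steklov, mul_left_comm (ν _)]
    rw [MeasureTheory.integral_const_mul, hu.integral_mul_timeIntegral hc ht (by linarith),
      add_sub_cancel_left, inv_mul_cancel₀ hη.ne']

lemma tendsto_steklov_steklov (hc : IsDriftDiffusion M W ν c) (ht : 0 < t) (x : ℝ) :
    Tendsto (fun η => steklov η (steklov η u) t x) (𝓝[>] 0) (𝓝 (u t x)) := by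
  have hex : ∀ η, 0 < η → ∃ s ∈ Icc t (t + 2 * η),
      steklov η (steklov η u) t x = u s x := fun η hη => by
    obtain ⟨r, hr, hr'⟩ := (hu.steklov hc hη).exists_steklov_eq hη ht x
    obtain ⟨s, hs, hs'⟩ := hu.exists_steklov_eq hη (ht.trans_le hr.1) x
    exact ⟨s, ⟨hr.1.trans hs.1, by linarith [hr.2, hs.2]⟩, hr'.trans hs'⟩
  choose! s hs heq using hex
  have hlim : Tendsto (fun η : ℝ => t + 2 * η) (𝓝[>] 0) (𝓝 t) := by
    have : Tendsto (fun η : ℝ => t + 2 * η) (𝓝 0) (𝓝 (t + 2 * 0)) := by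
      exact Continuous.tendsto (by fun_prop) 0
    simpa using this.mono_left nhdsWithin_le_nhds
  have hst : Tendsto s (𝓝[>] 0) (𝓝 t) := by
    refine tendsto_of_tendsto_of_tendsto_of_le_of_le' tendsto_const_nhds hlim ?_ ?_
    · exact eventually_nhdsWithin_of_forall fun η hη => (hs η hη).1
    · exact eventually_nhdsWithin_of_forall fun η hη => (hs η hη).2
  refine ((hu.sol.continuousAt_time ht x).tendsto.comp hst).congr' ?_
  exact eventually_nhdsWithin_of_forall fun η hη => (heq η hη).symm

end IsConservativeSol

/-! ### Stationary equations with integrable data -/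

lemma exists_mem_Ioo_abs_le {f : ℝ → ℝ} (hf : Integrable f) {p q : ℝ} (hpq : p < q) :
    ∃ x ∈ Ioo p q, (q - p) * |f x| ≤ ∫ z, |f z| := by
  have hvol : volume (Ioo p q) ≠ 0 := by simpa using hpq
  obtain ⟨x, hx, hle⟩ := exists_le_setAverage hvol (by simp) hf.abs.integrableOn
  refine ⟨x, hx, ?_⟩
  rw [setAverage_eq, Real.volume_real_Ioo_of_le hpq.le, smul_eq_mul] at hle
  calc (q - p) * |f x| ≤ ∫ z in Ioo p q, |f z| :=
        (le_inv_mul_iff₀ (sub_pos.2 hpq)).1 hle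
    _ ≤ ∫ z, |f z| := setIntegral_le_integral hf.abs (.of_forall fun z => abs_nonneg _)

lemma abs_intervalIntegral_le_integral_abs {f : ℝ → ℝ} (hf : Integrable f) (p q : ℝ) :
    |∫ x in p..q, f x| ≤ ∫ x, |f x| := by
  simp only [← Real.norm_eq_abs]
  exact norm_integral_le_integral_norm_uIoc.trans
    (setIntegral_le_integral hf.norm (.of_forall fun _ => norm_nonneg _))

lemma integrable_of_hasDerivAt_add_of_bounded {H φ ψ : ℝ → ℝ} {K : ℝ}
    (hH : ∀ x, HasDerivAt H (φ x + ψ x) x) (hK : ∀ x, |H x| ≤ K) (hφ : Continuous φ)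
    (hφ0 : ∀ x, 0 ≤ φ x) (hψ : Integrable ψ) : Integrable φ := by
  refine integrable_of_intervalIntegral_norm_bounded (a := fun n : ℕ => -(n : ℝ))
    (b := fun n : ℕ => (n : ℝ)) (l := atTop) (2 * K + ∫ x, |ψ x|)
    (fun n => (hφ.integrableOn_Icc).mono_set Ioc_subset_Icc_self)
    (tendsto_neg_atTop_atBot.comp tendsto_natCast_atTop_atTop) tendsto_natCast_atTop_atTop
    (.of_forall fun n => ?_)
  have hφi := hφ.intervalIntegrable (μ := volume) (-(n : ℝ)) n
  have hψi := hψ.intervalIntegrable (a := -(n : ℝ)) (b := n)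
  have hftc := integral_eq_sub_of_hasDerivAt (fun x _ => hH x) (hφi.add hψi)
  rw [intervalIntegral.integral_add hφi hψi] at hftc
  have hψle := abs_intervalIntegral_le_integral_abs hψ (-(n : ℝ)) n
  simp only [Real.norm_of_nonneg (hφ0 _)]
  linarith [abs_le.1 hψle, abs_le.1 (hK n), abs_le.1 (hK (-n))]

/-- A solution `f`, with derivative `f'`, of the stationary equation `(c f')' - W f' = h` on the
line such that `f` and `h` have `L¹` norm at most `A`. -/
structure IsStationarySol (W A : ℝ) (c f f' h : ℝ → ℝ) : Prop where
  hasDerivAt : ∀ x, HasDerivAt f (f' x) x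
  hasDerivAt_flux : ∀ x, HasDerivAt (fun z => c z * f' z) (h x + W * f' x) x
  continuous_source : Continuous h
  integrable : Integrable f
  integrable_source : Integrable h
  integral_abs_le : ∫ x, |f x| ≤ A
  integral_abs_source_le : ∫ x, |h x| ≤ A

namespace IsStationarySol

variable {M W A : ℝ} {ν c f f' h : ℝ → ℝ} (hf : IsStationarySol W A c f f' h)
include hf

lemma continuous : Continuous f :=
  continuous_iff_continuousAt.2 fun x => (hf.hasDerivAt x).continuousAt

lemma exists_mem_Ioo_abs_le {p q : ℝ} (hpq : p + 1 ≤ q) : ∃ x ∈ Ioo p q, |f x| ≤ A := by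
  obtain ⟨x, hx, hle⟩ := _root_.exists_mem_Ioo_abs_le hf.integrable (by linarith : p < q)
  exact ⟨x, hx, by nlinarith [abs_nonneg (f x), hf.integral_abs_le]⟩

lemma abs_flux_sub_le (x y : ℝ) :
    |c y * f' y - W * f y - (c x * f' x - W * f x)| ≤ A := by
  have hj : ∀ z, HasDerivAt (fun z => c z * f' z - W * f z) (h z) z := fun z =>
    ((hf.hasDerivAt_flux z).sub ((hf.hasDerivAt z).const_mul W)).congr_deriv (by ring)
  rw [← integral_eq_sub_of_hasDerivAt (fun z _ => hj z) hf.integrable_source.intervalIntegrable]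
  exact (abs_intervalIntegral_le_integral_abs hf.integrable_source x y).trans
    hf.integral_abs_source_le

variable (hc : IsDriftDiffusion M W ν c)
include hc

lemma continuous_deriv : Continuous f' := by
  have hcont : Continuous fun z => c z * f' z :=
    continuous_iff_continuousAt.2 fun x => (hf.hasDerivAt_flux x).continuousAt
  refine (hcont.div hc.continuous_flux fun x => (hc.flux_pos x).ne').congr fun x => ?_
  rw [Pi.div_apply, mul_div_cancel_left₀ _ (hc.flux_pos x).ne']

/-- By the mean value theorem for `f - ∫ W f / c`, whose derivative is `(c f' - W f) / c`. -/
lemma exists_abs_sub_sub_le {p q : ℝ} (hpq : p < q) :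
    ∃ ξ ∈ Ioo p q,
      |f q - f p - (q - p) * ((c ξ)⁻¹ * (c ξ * f' ξ - W * f ξ))| ≤ M * (W * A) := by
  have hinv : Continuous fun z => (c z)⁻¹ := hc.continuous_flux.inv₀ fun z => (hc.flux_pos z).ne'
  have hcont : Continuous fun z => (c z)⁻¹ * (W * f z) := hinv.mul (hf.continuous.const_mul W)
  have hderiv : ∀ z, HasDerivAt (fun z => f z - ∫ y in p..z, (c y)⁻¹ * (W * f y))
      ((c z)⁻¹ * (c z * f' z - W * f z)) z := fun z => by
    refine ((hf.hasDerivAt z).sub (hcont.integral_hasStrictDerivAt p z).hasDerivAt).congr_deriv ?_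
    rw [mul_sub, inv_mul_cancel_left₀ (hc.flux_pos z).ne']
  obtain ⟨ξ, hξ, hslope⟩ := exists_hasDerivAt_eq_slope _ _ hpq
    (continuousOn_of_forall_continuousAt fun z _ => (hderiv z).continuousAt) fun z _ => hderiv z
  refine ⟨ξ, hξ, ?_⟩
  rw [hslope, mul_div_cancel₀ _ (sub_pos.2 hpq).ne', integral_same]
  have hle : ∀ z, |(c z)⁻¹ * (W * f z)| ≤ M * (W * |f z|) := fun z => by
    rw [abs_mul, abs_mul, abs_of_nonneg hc.drift_nonneg]
    exact mul_le_mul_of_nonneg_right (hc.elliptic_flux.norm_inv_le hc.pos z)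
      (mul_nonneg hc.drift_nonneg (abs_nonneg _))
  have hdom : Integrable fun z => M * (W * |f z|) := (hf.integrable.abs.const_mul W).const_mul M
  have hint : Integrable fun z => (c z)⁻¹ * (W * f z) :=
    hdom.mono' hcont.aestronglyMeasurable (.of_forall hle)
  calc |f q - f p - (f q - (∫ y in p..q, (c y)⁻¹ * (W * f y)) - (f p - 0))|
      = |∫ y in p..q, (c y)⁻¹ * (W * f y)| := by congr 1; ring
    _ ≤ ∫ y, |(c y)⁻¹ * (W * f y)| := abs_intervalIntegral_le_integral_abs hint p q
    _ ≤ ∫ y, M * (W * |f y|) := integral_mono hint.abs hdom hle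
    _ = M * (W * ∫ y, |f y|) := by simp only [MeasureTheory.integral_const_mul]
    _ ≤ M * (W * A) := by
        have := hc.drift_nonneg
        have := hc.pos
        gcongr
        exact hf.integral_abs_le

lemma abs_flux_le (x : ℝ) : |c x * f' x - W * f x| ≤ A + M * (2 * A + M * (W * A)) := by
  obtain ⟨p, hp, hfp⟩ := hf.exists_mem_Ioo_abs_le (by linarith : x + 1 ≤ x + 1)
  obtain ⟨q, hq, hfq⟩ := hf.exists_mem_Ioo_abs_le (by linarith : x + 2 + 1 ≤ x + 3)
  have hpq : 1 ≤ q - p := by linarith [hp.2, hq.1]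
  obtain ⟨ξ, -, hξ⟩ := hf.exists_abs_sub_sub_le hc (by linarith : p < q)
  set J := c ξ * f' ξ - W * f ξ
  have hslope : |(c ξ)⁻¹ * J| ≤ 2 * A + M * (W * A) := by
    have : |(q - p) * ((c ξ)⁻¹ * J)| ≤ 2 * A + M * (W * A) := by
      rw [abs_le] at *
      constructor <;> linarith
    rw [abs_mul, abs_of_pos (by linarith)] at this
    nlinarith [abs_nonneg ((c ξ)⁻¹ * J)]
  have hJ : |J| ≤ M * (2 * A + M * (W * A)) := by
    rw [← mul_inv_cancel_left₀ (hc.flux_pos ξ).ne' J, abs_mul]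
    exact mul_le_mul (hc.elliptic_flux.norm_le hc.pos ξ) hslope (abs_nonneg _) hc.pos.le
  have := hf.abs_flux_sub_le ξ x
  rw [abs_le] at *
  constructor <;> linarith

end IsStationarySol

lemma IsDriftDiffusion.exists_abs_le {M W : ℝ} {ν c : ℝ → ℝ} (hc : IsDriftDiffusion M W ν c)
    (A : ℝ) : ∃ K, ∀ f f' h, IsStationarySol W A c f f' h → ∀ x, |f x| ≤ K ∧ |f' x| ≤ K := by
  set J := A + M * (2 * A + M * (W * A))
  set B := A + M * J + M * (W * A)
  refine ⟨max B (M * (J + W * B)), fun f f' h hf x => ?_⟩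
  have hflux : ∀ z, |(c z)⁻¹ * (c z * f' z - W * f z)| ≤ M * J := fun z => by
    rw [abs_mul]
    exact mul_le_mul (hc.elliptic_flux.norm_inv_le hc.pos z) (hf.abs_flux_le hc z) (abs_nonneg _)
      hc.pos.le
  have hB : |f x| ≤ B := by
    obtain ⟨p, hp, hfp⟩ := hf.exists_mem_Ioo_abs_le (le_refl (x + 1))
    obtain ⟨ξ, -, hξ⟩ := hf.exists_abs_sub_sub_le hc hp.1
    have hstep : |(p - x) * ((c ξ)⁻¹ * (c ξ * f' ξ - W * f ξ))| ≤ M * J := by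
      rw [abs_mul, abs_of_pos (sub_pos.2 hp.1)]
      have := hflux ξ
      nlinarith [hp.1, hp.2, abs_nonneg ((c ξ)⁻¹ * (c ξ * f' ξ - W * f ξ))]
    rw [abs_le] at *
    constructor <;> linarith
  have hderiv : |f' x| ≤ M * (J + W * B) := by
    rw [← inv_mul_cancel_left₀ (hc.flux_pos x).ne' (f' x), abs_mul]
    refine mul_le_mul (hc.elliptic_flux.norm_inv_le hc.pos x) ?_ (abs_nonneg _) hc.pos.le
    have hWB : |W * f x| ≤ W * B := by
      rw [abs_mul, abs_of_nonneg hc.drift_nonneg]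
      exact mul_le_mul_of_nonneg_left hB hc.drift_nonneg
    linarith [abs_sub_abs_le_abs_sub (c x * f' x) (W * f x), hf.abs_flux_le hc x]
  exact ⟨hB.trans (le_max_left _ _), hderiv.trans (le_max_right _ _)⟩

/-- The derivative `θ` of a corrector: a uniformly elliptic solution of `(c θ)' = W (θ - ν)`. -/
structure IsCorrectorSlope (M W : ℝ) (ν c θ : ℝ → ℝ) : Prop where
  elliptic : Elliptic M θ
  hasDerivAt_flux : ∀ x, HasDerivAt (fun z => c z * θ z) (W * θ x - W * ν x) x

lemma IsCorrectorSlope.continuous {M W : ℝ} {ν c θ : ℝ → ℝ} (hθ : IsCorrectorSlope M W ν c θ)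
    (hc : IsDriftDiffusion M W ν c) : Continuous θ := by
  have hcont : Continuous fun z => c z * θ z :=
    continuous_iff_continuousAt.2 fun x => (hθ.hasDerivAt_flux x).continuousAt
  refine (hcont.div hc.continuous_flux fun x => (hc.flux_pos x).ne').congr fun x => ?_
  rw [Pi.div_apply, mul_div_cancel_left₀ _ (hc.flux_pos x).ne']

/-- The derivative of `f' / θ`, where `(c f')' = h + W f'` and `θ` is a corrector slope. Dividing
by `θ` leaves in it no derivative of the coefficients. -/
noncomputable def quotientDeriv (W : ℝ) (ν c θ f' h : ℝ → ℝ) (x : ℝ) : ℝ :=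
  (c x)⁻¹ * ((θ x)⁻¹ * (h x + W * (ν x * (f' x / θ x))))

namespace IsStationarySol

variable {M W A : ℝ} {ν c f f' h θ : ℝ → ℝ} (hf : IsStationarySol W A c f f' h)
include hf

lemma hasDerivAt_mul_flux (x : ℝ) :
    HasDerivAt (fun z => f z * (c z * f' z))
      (c x * f' x ^ 2 + (f x * h x + W * (f x * f' x))) x :=
  ((hf.hasDerivAt x).mul (hf.hasDerivAt_flux x)).congr_deriv (by ring)

variable (hc : IsDriftDiffusion M W ν c)
include hc

lemma integrable_mul_deriv : Integrable fun x => f x * f' x := by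
  obtain ⟨K, hK⟩ := hc.exists_abs_le A
  exact hf.integrable.mul_bdd (hf.continuous_deriv hc).aestronglyMeasurable
    (.of_forall fun x => (hK f f' h hf x).2)

lemma integrable_sq : Integrable fun x => f x ^ 2 := by
  obtain ⟨K, hK⟩ := hc.exists_abs_le A
  simpa only [sq] using hf.integrable.mul_bdd hf.continuous.aestronglyMeasurable
    (.of_forall fun x => (hK f f' h hf x).1)

lemma integrable_mul_source : Integrable fun x => f x * h x := by
  obtain ⟨K, hK⟩ := hc.exists_abs_le A
  exact hf.integrable_source.bdd_mul hf.continuous.aestronglyMeasurable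
    (.of_forall fun x => (hK f f' h hf x).1)

lemma integrable_mul_source_add : Integrable fun x => f x * h x + W * (f x * f' x) :=
  (hf.integrable_mul_source hc).add ((hf.integrable_mul_deriv hc).const_mul W)

lemma integrable_flux_mul_sq_deriv : Integrable fun x => c x * f' x ^ 2 := by
  obtain ⟨K, hK⟩ := hc.exists_abs_le A
  refine integrable_of_hasDerivAt_add_of_bounded (K := K * (M * K)) hf.hasDerivAt_mul_flux
    (fun x => ?_) (hc.continuous_flux.mul ((hf.continuous_deriv hc).pow 2))
    (fun x => mul_nonneg (hc.flux_pos x).le (sq_nonneg _)) (hf.integrable_mul_source_add hc)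
  obtain ⟨h₁, h₂⟩ := hK f f' h hf x
  have hcM := hc.elliptic_flux.norm_le hc.pos x
  rw [Real.norm_eq_abs] at hcM
  rw [abs_mul, abs_mul]
  have hK0 := (abs_nonneg _).trans h₁
  have := hc.pos
  gcongr

lemma integrable_sq_deriv : Integrable fun x => f' x ^ 2 :=
  hc.elliptic_flux.integrable_of_mul hc.pos hc.continuous_flux
    (hf.integrable_flux_mul_sq_deriv hc)

lemma integral_mul_deriv_eq_zero : ∫ x, f x * f' x = 0 := by
  have hd : ∀ x, HasDerivAt (fun z => f z ^ 2 / 2) (f x * f' x) x := fun x =>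
    (((hf.hasDerivAt x).pow 2).div_const 2).congr_deriv (by push_cast; ring)
  exact integral_eq_zero_of_hasDerivAt_of_integrable hd (hf.integrable_mul_deriv hc)
    ((hf.integrable_sq hc).div_const 2)

lemma integral_flux_mul_sq_deriv : ∫ x, c x * f' x ^ 2 = -∫ x, f x * h x := by
  have hint : Integrable fun x => f x * (c x * f' x) := by
    simpa only [mul_left_comm] using (hf.integrable_mul_deriv hc).bdd_mul
      hc.continuous_flux.aestronglyMeasurable
      (.of_forall (hc.elliptic_flux.norm_le hc.pos))
  have hzero := integral_eq_zero_of_hasDerivAt_of_integrable hf.hasDerivAt_mul_flux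
    ((hf.integrable_flux_mul_sq_deriv hc).add (hf.integrable_mul_source_add hc)) hint
  rw [integral_add (hf.integrable_flux_mul_sq_deriv hc) (hf.integrable_mul_source_add hc),
    integral_add (hf.integrable_mul_source hc) ((hf.integrable_mul_deriv hc).const_mul W),
    MeasureTheory.integral_const_mul, hf.integral_mul_deriv_eq_zero hc] at hzero
  linarith

variable (hθ : IsCorrectorSlope M W ν c θ)
include hθ

lemma continuous_deriv_div : Continuous fun x => f' x / θ x :=
  (hf.continuous_deriv hc).div (hθ.continuous hc) fun x => (hθ.elliptic.pos hc.pos x).ne'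

lemma hasDerivAt_deriv_div (x : ℝ) :
    HasDerivAt (fun z => f' z / θ z) (quotientDeriv W ν c θ f' h x) x := by
  have hcx := fun z => (hc.flux_pos z).ne'
  have hθx := fun z => (hθ.elliptic.pos hc.pos z).ne'
  have hquot := (hf.hasDerivAt_flux x).div (hθ.hasDerivAt_flux x) (mul_ne_zero (hcx x) (hθx x))
  refine (hquot.congr_deriv ?_).congr_of_eventuallyEq (.of_forall fun z => ?_)
  · have := hcx x
    have := hθx x
    rw [quotientDeriv]
    field_simp
    ring
  · rw [Pi.div_apply, mul_div_mul_left _ _ (hcx z)]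

lemma continuous_quotientDeriv : Continuous (quotientDeriv W ν c θ f' h) :=
  (hc.continuous_flux.inv₀ fun x => (hc.flux_pos x).ne').mul
    (((hθ.continuous hc).inv₀ fun x => (hθ.elliptic.pos hc.pos x).ne').mul
      (hf.continuous_source.add
        ((hc.continuous_weight.mul (hf.continuous_deriv_div hc hθ)).const_mul W)))

lemma integrable_deriv_div_mul_quotientDeriv :
    Integrable fun x => f' x / θ x * quotientDeriv W ν c θ f' h x := by
  obtain ⟨K, hK⟩ := hc.exists_abs_le A
  have hθinv := ((hθ.continuous hc).inv₀ fun x =>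
    (hθ.elliptic.pos hc.pos x).ne').aestronglyMeasurable (μ := volume)
  have hθbdd := hθ.elliptic.norm_inv_le hc.pos
  have hsource : Integrable fun x => f' x * h x :=
    hf.integrable_source.bdd_mul (hf.continuous_deriv hc).aestronglyMeasurable
      (.of_forall fun x => (hK f f' h hf x).2)
  have hdrift : Integrable fun x => ν x * ((θ x)⁻¹ * f' x ^ 2) :=
    ((hf.integrable_sq_deriv hc).bdd_mul hθinv (.of_forall hθbdd)).bdd_mul
      hc.continuous_weight.aestronglyMeasurable
      (.of_forall (hc.elliptic_weight.norm_le hc.pos))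
  have hsum := (((hsource.add (hdrift.const_mul W)).bdd_mul hθinv
    (.of_forall hθbdd)).bdd_mul hθinv (.of_forall hθbdd)).bdd_mul
      (hc.continuous_flux.inv₀ fun x => (hc.flux_pos x).ne').aestronglyMeasurable
      (.of_forall (hc.elliptic_flux.norm_inv_le hc.pos))
  refine hsum.congr (.of_forall fun x => ?_)
  simp only [quotientDeriv, Pi.add_apply, Pi.inv_apply]
  ring

lemma integral_deriv_div_mul_quotientDeriv :
    ∫ x, f' x / θ x * quotientDeriv W ν c θ f' h x = 0 := by
  have hd : ∀ x, HasDerivAt (fun z => (f' z / θ z) ^ 2 / 2)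
      (f' x / θ x * quotientDeriv W ν c θ f' h x) x := fun x =>
    (((hf.hasDerivAt_deriv_div hc hθ x).pow 2).div_const 2).congr_deriv (by push_cast; ring)
  have hθinv := ((hθ.continuous hc).inv₀ fun x =>
    (hθ.elliptic.pos hc.pos x).ne').aestronglyMeasurable (μ := volume)
  have hθbdd := hθ.elliptic.norm_inv_le hc.pos
  have hsq : Integrable fun x => (f' x / θ x) ^ 2 / 2 := by
    refine ((((hf.integrable_sq_deriv hc).bdd_mul hθinv (.of_forall hθbdd)).bdd_mul hθinv
      (.of_forall hθbdd)).div_const 2).congr (.of_forall fun x => ?_)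
    simp only [Pi.inv_apply]
    ring
  exact integral_eq_zero_of_hasDerivAt_of_integrable hd
    (hf.integrable_deriv_div_mul_quotientDeriv hc hθ) hsq

lemma integral_quotientDeriv_mul_nonneg
    (hint : Integrable fun x => quotientDeriv W ν c θ f' h x * (h x / ν x)) :
    0 ≤ ∫ x, quotientDeriv W ν c θ f' h x * (h x / ν x) := by
  set r' := quotientDeriv W ν c θ f' h
  have hrr := hf.integrable_deriv_div_mul_quotientDeriv hc hθ
  calc 0 ≤ ∫ x, r' x * (h x / ν x) + W * (f' x / θ x * r' x) := by
        refine integral_nonneg fun x => ?_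
        have hcx := hc.flux_pos x
        have hθx := hθ.elliptic.pos hc.pos x
        have hνx := hc.weight_pos x
        have : r' x * (h x / ν x) + W * (f' x / θ x * r' x) = c x * θ x / ν x * r' x ^ 2 := by
          simp only [r', quotientDeriv]
          field_simp
        rw [this]
        exact mul_nonneg (div_pos (mul_pos hcx hθx) hνx).le (sq_nonneg _)
    _ = ∫ x, r' x * (h x / ν x) := by
        rw [integral_add hint (hrr.const_mul W), MeasureTheory.integral_const_mul,
          hf.integral_deriv_div_mul_quotientDeriv hc hθ, mul_zero, add_zero]

end IsStationarySol

lemma IsDriftDiffusion.exists_abs_quotientDeriv_le {M W : ℝ} {ν c θ : ℝ → ℝ}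
    (hc : IsDriftDiffusion M W ν c) (hθ : IsCorrectorSlope M W ν c θ) (A B : ℝ) :
    ∃ L, ∀ f f' h, IsStationarySol W A c f f' h → (∀ x, |h x| ≤ B) →
      ∀ x, |quotientDeriv W ν c θ f' h x| ≤ L := by
  obtain ⟨K, hK⟩ := hc.exists_abs_le A
  refine ⟨M * (M * (B + W * (M * (K * M)))), fun f f' h hf hh x => ?_⟩
  have hM := hc.pos
  have hW := hc.drift_nonneg
  have hf'K := (hK f f' h hf x).2
  have hK0 := (abs_nonneg _).trans hf'K
  have hc' := hc.elliptic_flux.norm_inv_le hM x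
  have hθ' := hθ.elliptic.norm_inv_le hM x
  have hν' := hc.elliptic_weight.norm_le hM x
  simp only [Real.norm_eq_abs] at hc' hθ' hν'
  calc |quotientDeriv W ν c θ f' h x|
      ≤ |(c x)⁻¹| * (|(θ x)⁻¹| * (|h x| + W * (|ν x| * (|f' x| * |(θ x)⁻¹|)))) := by
        rw [quotientDeriv, abs_mul, abs_mul, div_eq_mul_inv]
        gcongr
        refine (abs_add_le _ _).trans_eq ?_
        simp only [abs_mul, abs_of_nonneg hW]
    _ ≤ M * (M * (B + W * (M * (K * M)))) := by
        gcongr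
        exact hh x

/-! ### Nash's inequality -/

lemma integral_sq_le_mul_integral_abs {f : ℝ → ℝ} {N : ℝ} (hf : Integrable f)
    (hN : ∀ x, |f x| ≤ N) : ∫ x, f x ^ 2 ≤ N * ∫ x, |f x| := by
  rw [← MeasureTheory.integral_const_mul]
  refine integral_mono_of_nonneg (.of_forall fun x => sq_nonneg _) (hf.abs.const_mul N)
    (.of_forall fun x => ?_)
  dsimp only
  rw [← sq_abs, sq]
  exact mul_le_mul_of_nonneg_right (hN x) (abs_nonneg _)

section DerivSq

variable {f f' : ℝ → ℝ} (hf : ∀ x, HasDerivAt f (f' x) x) (hf' : Continuous f')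
  (hsq : Integrable fun x => f' x ^ 2)
include hf hf' hsq

lemma sq_sub_le_abs_sub_mul_integral_sq_deriv (x y : ℝ) :
    (f y - f x) ^ 2 ≤ |y - x| * ∫ z, f' z ^ 2 := by
  wlog hxy : x < y generalizing x y
  · rcases (not_lt.1 hxy).eq_or_lt with rfl | hyx
    · simp
    · simpa only [abs_sub_comm x y, ← neg_sub (f x) (f y), neg_sq] using this y x hyx
  have hpos := sub_pos.2 hxy
  set k := (f y - f x) / (y - x)
  have hk : k * (y - x) = f y - f x := div_mul_cancel₀ _ hpos.ne'
  have hftc : ∫ z in x..y, f' z = f y - f x :=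
    integral_eq_sub_of_hasDerivAt (fun z _ => hf z) (hf'.intervalIntegrable x y)
  have hvar : 0 ≤ (∫ z in x..y, f' z ^ 2) - k * (f y - f x) :=
    calc 0 ≤ ∫ z in x..y, (f' z - k) ^ 2 := integral_nonneg hxy.le fun z _ => sq_nonneg _
      _ = ∫ z in x..y, (f' z ^ 2 - (2 * k * f' z - k ^ 2)) := by
          congr 1; ext z; ring
      _ = (∫ z in x..y, f' z ^ 2) - k * (f y - f x) := by
          have h₁ : IntervalIntegrable (fun z => f' z ^ 2) volume x y :=
            (hf'.pow 2).intervalIntegrable x y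
          have h₂ : IntervalIntegrable (fun z => 2 * k * f' z) volume x y :=
            (hf'.const_mul (2 * k)).intervalIntegrable x y
          rw [intervalIntegral.integral_sub h₁ (h₂.sub (by simp)),
            intervalIntegral.integral_sub h₂ (by simp), intervalIntegral.integral_const_mul, hftc,
            intervalIntegral.integral_const, smul_eq_mul, ← hk]
          ring
  have hset : ∫ z in x..y, f' z ^ 2 ≤ ∫ z, f' z ^ 2 := by
    rw [integral_of_le hxy.le]
    exact setIntegral_le_integral hsq (.of_forall fun z => sq_nonneg _)
  rw [abs_of_pos hpos]
  calc (f y - f x) ^ 2 = (y - x) * (k * (f y - f x)) := by rw [← hk]; ring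
    _ ≤ (y - x) * ∫ z, f' z ^ 2 := mul_le_mul_of_nonneg_left (by linarith) hpos.le

variable (hint : Integrable f)
include hint

lemma abs_pow_three_le_integral_abs_mul_integral_sq_deriv (x : ℝ) :
    |f x| ^ 3 ≤ 8 * (∫ z, |f z|) * ∫ z, f' z ^ 2 := by
  have hcont : Continuous f := continuous_iff_continuousAt.2 fun x => (hf x).continuousAt
  set m := ∫ z, |f z|
  set Y := ∫ z, f' z ^ 2
  rcases eq_or_ne (f x) 0 with h0 | h0
  · have : 0 ≤ m := integral_nonneg fun z => abs_nonneg _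
    have : 0 ≤ Y := integral_nonneg fun z => sq_nonneg _
    rw [h0, abs_zero, zero_pow three_ne_zero]
    positivity
  have hN : 0 < |f x| := abs_pos.2 h0
  have hm : 0 < m := (integral_pos_iff_support_of_nonneg (fun z => abs_nonneg (f z)) hint.abs).2
    (hcont.abs.isOpen_support.measure_pos volume ⟨x, hN.ne'⟩)
  set δ := 2 * m / |f x|
  have hδ : 0 < δ := by positivity
  have hδN : δ * |f x| = 2 * m := div_mul_cancel₀ _ hN.ne'
  obtain ⟨z, hz, hzm⟩ := exists_mem_Ioo_abs_le hint (by linarith : x < x + δ)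
  rw [add_sub_cancel_left] at hzm
  have hhalf : |f x| ≤ 2 * |f x - f z| := by
    have : |f z| ≤ |f x| / 2 := le_of_mul_le_mul_left (by linarith) hδ
    linarith [abs_sub_abs_le_abs_sub (f x) (f z)]
  have hincr : (f x - f z) ^ 2 ≤ δ * Y := by
    refine (sq_sub_le_abs_sub_mul_integral_sq_deriv hf hf' hsq z x).trans ?_
    refine mul_le_mul_of_nonneg_right ?_ (integral_nonneg fun z => sq_nonneg _)
    rw [abs_le]
    constructor <;> linarith [hz.1, hz.2]
  calc |f x| ^ 3 = |f x| ^ 2 * |f x| := by ring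
    _ ≤ (2 * |f x - f z|) ^ 2 * |f x| := by gcongr
    _ = 4 * (f x - f z) ^ 2 * |f x| := by rw [mul_pow, sq_abs]; norm_num
    _ ≤ 4 * (δ * Y) * |f x| := by gcongr
    _ = 8 * m * Y := by linear_combination 4 * Y * hδN

lemma integral_sq_pow_three_le :
    (∫ x, f x ^ 2) ^ 3 ≤ 8 * (∫ x, |f x|) ^ 4 * ∫ x, f' x ^ 2 := by
  set m := ∫ z, |f z|
  set Y := ∫ z, f' z ^ 2
  have : 0 ≤ m := integral_nonneg fun z => abs_nonneg _
  have : 0 ≤ Y := integral_nonneg fun z => sq_nonneg _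
  set N := (8 * m * Y) ^ (3⁻¹ : ℝ)
  have hN : ∀ x, |f x| ≤ N := fun x => by
    rw [Real.le_rpow_inv_iff_of_pos (abs_nonneg _) (by positivity) three_pos]
    exact_mod_cast abs_pow_three_le_integral_abs_mul_integral_sq_deriv hf hf' hsq hint x
  have hle : ∫ x, f x ^ 2 ≤ N * m := integral_sq_le_mul_integral_abs hint hN
  calc (∫ x, f x ^ 2) ^ 3 ≤ (N * m) ^ 3 := by gcongr
    _ = 8 * m * Y * m ^ 3 := by
        rw [mul_pow]
        congr 1
        exact_mod_cast Real.rpow_inv_rpow (by positivity : 0 ≤ 8 * m * Y) three_ne_zero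
    _ = 8 * m ^ 4 * Y := by ring

end DerivSq

lemma mul_sq_le_of_mul_pow_three_le {E : ℝ → ℝ} {C K : ℝ} (hC : 0 ≤ C)
    (hE0 : ∀ s, 0 < s → 0 ≤ E s) (hEK : ∀ s, 0 < s → E s ≤ K)
    (h : ∀ s₁ s₂, 0 < s₁ → s₁ < s₂ → (s₂ - s₁) * E s₂ ^ 3 ≤ C * E s₁) {s : ℝ} (hs : 0 < s) :
    s * E s ^ 2 ≤ 3 * C := by
  set Φ := (fun r => r * E r ^ 2) '' Ioc 0 s
  have hbdd : BddAbove Φ := by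
    refine ⟨s * K ^ 2, forall_mem_image.2 fun r hr => ?_⟩
    have := hE0 r hr.1
    have := hEK r hr.1
    have := hr.2
    gcongr
  have hself : ∀ r ∈ Ioc 0 s, (r * E r ^ 2) ^ 3 ≤ 8 * C ^ 2 * sSup Φ := fun r hr => by
    have hr2 : 0 < r / 2 := half_pos hr.1
    have hsup : r / 2 * E (r / 2) ^ 2 ≤ sSup Φ :=
      le_csSup hbdd (mem_image_of_mem _ ⟨hr2, by linarith [hr.1, hr.2]⟩)
    have hstep := h (r / 2) r hr2 (half_lt_self hr.1)
    rw [sub_half] at hstep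
    have hEr : 0 ≤ r / 2 * E r ^ 3 := mul_nonneg hr2.le (pow_nonneg (hE0 r hr.1) 3)
    calc (r * E r ^ 2) ^ 3 = 8 * (r / 2) * (r / 2 * E r ^ 3) ^ 2 := by ring
      _ ≤ 8 * (r / 2) * (C * E (r / 2)) ^ 2 := by gcongr
      _ = 8 * C ^ 2 * (r / 2 * E (r / 2) ^ 2) := by ring
      _ ≤ 8 * C ^ 2 * sSup Φ := by gcongr
  have hle := le_csSup hbdd (mem_image_of_mem _ ⟨hs, le_rfl⟩)
  refine hle.trans (not_lt.1 fun hlt => ?_)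
  obtain ⟨-, ⟨r, hr, rfl⟩, hrΦ⟩ := exists_lt_of_lt_csSup ((nonempty_Ioc.2 hs).image _)
    (max_lt hlt (by linarith : 8 / 9 * sSup Φ < sSup Φ))
  obtain ⟨h₁, h₂⟩ := max_lt_iff.1 hrΦ
  dsimp only at h₁ h₂
  set A := r * E r ^ 2
  have : A ^ 3 < A ^ 3 :=
    calc A ^ 3 ≤ 8 * C ^ 2 * sSup Φ := hself r hr
      _ = (3 * C) ^ 2 * (8 / 9 * sSup Φ) := by ring
      _ ≤ (3 * C) ^ 2 * A := by gcongr
      _ < A ^ 2 * A := by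
          have : 0 < A := by linarith
          gcongr
      _ = A ^ 3 := by ring
  exact this.false

lemma integral_mul_sq_sub_le {w a b : ℝ → ℝ} (hw : ∀ x, 0 ≤ w x)
    (ha : Integrable fun x => w x * a x ^ 2) (hb : Integrable fun x => w x * b x ^ 2)
    (hab : Integrable fun x => w x * a x * (a x - b x)) :
    (∫ x, w x * a x ^ 2) - ∫ x, w x * b x ^ 2 ≤ 2 * ∫ x, w x * a x * (a x - b x) := by
  rw [← integral_sub ha hb, ← MeasureTheory.integral_const_mul]
  refine integral_mono (ha.sub hb) (hab.const_mul 2) fun x => ?_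
  have := mul_nonneg (hw x) (sq_nonneg (a x - b x))
  dsimp only
  linarith

lemma IsDriftDiffusion.integral_weight_mul_sq_nonneg {M W : ℝ} {ν c : ℝ → ℝ}
    (hc : IsDriftDiffusion M W ν c) (f : ℝ → ℝ) : 0 ≤ ∫ x, ν x * f x ^ 2 :=
  integral_nonneg fun x => mul_nonneg (hc.weight_pos x).le (sq_nonneg _)

/-! ### Energy estimates for regular flows -/

/-- A family `F t`, `t > 0`, with space derivative `V t`, which solves `ν g = ∂ₓ(c V) - W V` and
whose time derivative is `g`: the first-order Taylor expansion in time holds backwards in `L¹`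
with a quadratic remainder. All bounds are uniform in time. -/
structure IsRegularFlow (M W A B C : ℝ) (ν c : ℝ → ℝ) (F V g : ℝ → ℝ → ℝ) : Prop where
  stationary : ∀ t, 0 < t → IsStationarySol W A c (F t) (V t) fun x => ν x * g t x
  integral_abs_le : ∀ t, 0 < t → ∫ x, |F t x| ≤ M
  abs_source_le : ∀ t, 0 < t → ∀ x, |ν x * g t x| ≤ B
  integral_abs_remainder_le : ∀ t₁ t₂, 0 < t₁ → t₁ ≤ t₂ →
    ∫ x, |F t₂ x - F t₁ x - (t₂ - t₁) * g t₂ x| ≤ C * (t₂ - t₁) ^ 2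

namespace IsRegularFlow

variable {M W A B C : ℝ} {ν c θ : ℝ → ℝ} {F V g : ℝ → ℝ → ℝ} {t t₁ t₂ : ℝ}
  (hF : IsRegularFlow M W A B C ν c F V g)
include hF

lemma integrable_mul_sub {φ : ℝ → ℝ} {L : ℝ} (hφ : Continuous φ) (hL : ∀ x, |φ x| ≤ L)
    (ht₁ : 0 < t₁) (ht₂ : 0 < t₂) : Integrable fun x => φ x * (F t₂ x - F t₁ x) :=
  ((hF.stationary t₂ ht₂).integrable.sub (hF.stationary t₁ ht₁).integrable).bdd_mul
    hφ.aestronglyMeasurable (.of_forall hL)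

variable (hc : IsDriftDiffusion M W ν c)
include hc

lemma integrable_source (ht : 0 < t) : Integrable (g t) :=
  hc.elliptic_weight.integrable_of_mul hc.pos hc.continuous_weight
    (hF.stationary t ht).integrable_source

lemma integrable_mul_source {φ : ℝ → ℝ} {L : ℝ} (hφ : Continuous φ) (hL : ∀ x, |φ x| ≤ L)
    (ht : 0 < t) : Integrable fun x => φ x * g t x :=
  (hF.integrable_source hc ht).bdd_mul hφ.aestronglyMeasurable (.of_forall hL)

lemma abs_integral_mul_sub_sub_le {φ : ℝ → ℝ} {L : ℝ} (hφ : Continuous φ) (hL : ∀ x, |φ x| ≤ L)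
    (ht₁ : 0 < t₁) (ht : t₁ ≤ t₂) :
    |(∫ x, φ x * (F t₂ x - F t₁ x)) - (t₂ - t₁) * ∫ x, φ x * g t₂ x| ≤
      L * (C * (t₂ - t₁) ^ 2) := by
  have ht₂ := ht₁.trans_le ht
  have hR : Integrable fun x => F t₂ x - F t₁ x - (t₂ - t₁) * g t₂ x :=
    ((hF.stationary t₂ ht₂).integrable.sub (hF.stationary t₁ ht₁).integrable).sub
      ((hF.integrable_source hc ht₂).const_mul _)
  rw [← MeasureTheory.integral_const_mul, ← integral_sub (hF.integrable_mul_sub hφ hL ht₁ ht₂)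
    ((hF.integrable_mul_source hc hφ hL ht₂).const_mul _)]
  calc |∫ x, φ x * (F t₂ x - F t₁ x) - (t₂ - t₁) * (φ x * g t₂ x)|
      ≤ ∫ x, L * |F t₂ x - F t₁ x - (t₂ - t₁) * g t₂ x| := by
        refine MeasureTheory.norm_integral_le_of_norm_le (f := fun x =>
          φ x * (F t₂ x - F t₁ x) - (t₂ - t₁) * (φ x * g t₂ x)) (hR.abs.const_mul L)
          (.of_forall fun x => ?_)
        rw [Real.norm_eq_abs, mul_left_comm (t₂ - t₁), ← mul_sub, abs_mul]
        exact mul_le_mul_of_nonneg_right (hL x) (abs_nonneg _)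
    _ = L * ∫ x, |F t₂ x - F t₁ x - (t₂ - t₁) * g t₂ x| := MeasureTheory.integral_const_mul _ _
    _ ≤ L * (C * (t₂ - t₁) ^ 2) := mul_le_mul_of_nonneg_left
        (hF.integral_abs_remainder_le t₁ t₂ ht₁ ht) ((abs_nonneg _).trans (hL 0))

lemma integrable_weight_mul_sq (ht : 0 < t) : Integrable fun x => ν x * F t x ^ 2 :=
  ((hF.stationary t ht).integrable_sq hc).bdd_mul hc.continuous_weight.aestronglyMeasurable
    (.of_forall (hc.elliptic_weight.norm_le hc.pos))

lemma exists_integral_weight_mul_sq_sub_le : ∃ L, ∀ t₁ t₂, 0 < t₁ → t₁ ≤ t₂ →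
    (∫ x, ν x * F t₂ x ^ 2) - ∫ x, ν x * F t₁ x ^ 2 ≤
      L * (t₂ - t₁) ^ 2 - 2 * (t₂ - t₁) * ∫ x, c x * V t₂ x ^ 2 := by
  obtain ⟨K, hK⟩ := hc.exists_abs_le A
  refine ⟨2 * (M * K * C), fun t₁ t₂ ht₁ ht => ?_⟩
  have ht₂ := ht₁.trans_le ht
  have hf := hF.stationary t₂ ht₂
  have hφ : Continuous fun x => ν x * F t₂ x := hc.continuous_weight.mul hf.continuous
  have hL : ∀ x, |ν x * F t₂ x| ≤ M * K := fun x => by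
    rw [abs_mul]
    exact mul_le_mul (hc.elliptic_weight.norm_le hc.pos x) (hK _ _ _ hf x).1 (abs_nonneg _)
      hc.pos.le
  have hconv := integral_mul_sq_sub_le (fun x => (hc.weight_pos x).le)
    (hF.integrable_weight_mul_sq hc ht₂) (hF.integrable_weight_mul_sq hc ht₁)
    (hF.integrable_mul_sub hφ hL ht₁ ht₂)
  have hexp := (abs_le.1 (hF.abs_integral_mul_sub_sub_le hc hφ hL ht₁ ht)).2
  have hdiss : ∫ x, ν x * F t₂ x * g t₂ x = -∫ x, c x * V t₂ x ^ 2 := by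
    rw [hf.integral_flux_mul_sq_deriv hc, neg_neg]
    simp only [mul_left_comm, mul_assoc]
  rw [hdiss] at hexp
  linarith

lemma integral_weight_mul_sq_le (ht : 0 < t) :
    ∫ x, ν x * F t x ^ 2 ≤ M * ∫ x, F t x ^ 2 := by
  rw [← MeasureTheory.integral_const_mul]
  exact integral_mono (hF.integrable_weight_mul_sq hc ht)
    (((hF.stationary t ht).integrable_sq hc).const_mul M) fun x =>
    mul_le_mul_of_nonneg_right (hc.elliptic_weight x).2 (sq_nonneg _)

variable (hθ : IsCorrectorSlope M W ν c θ)
include hθ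

lemma integrable_inv_mul_sq_deriv (ht : 0 < t) : Integrable fun x => (θ x)⁻¹ * V t x ^ 2 :=
  ((hF.stationary t ht).integrable_sq_deriv hc).bdd_mul
    ((hθ.continuous hc).inv₀ fun x => (hθ.elliptic.pos hc.pos x).ne').aestronglyMeasurable
    (.of_forall (hθ.elliptic.norm_inv_le hc.pos))

lemma integrable_inv_mul_deriv_mul_sub (ht₁ : 0 < t₁) (ht₂ : 0 < t₂) :
    Integrable fun x => (θ x)⁻¹ * V t₂ x * (V t₂ x - V t₁ x) := by
  have hL2 : ∀ t, 0 < t → MemLp (V t) 2 := fun t ht =>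
    (memLp_two_iff_integrable_sq ((hF.stationary t ht).continuous_deriv hc).aestronglyMeasurable).2
      ((hF.stationary t ht).integrable_sq_deriv hc)
  simpa only [Pi.inv_apply, Pi.mul_apply, Pi.sub_apply, mul_assoc] using
    ((hL2 t₂ ht₂).integrable_mul ((hL2 t₂ ht₂).sub (hL2 t₁ ht₁))).bdd_mul
      ((hθ.continuous hc).inv₀ fun x => (hθ.elliptic.pos hc.pos x).ne').aestronglyMeasurable
      (.of_forall (hθ.elliptic.norm_inv_le hc.pos))

lemma integral_inv_mul_deriv_mul_sub (ht₁ : 0 < t₁) (ht₂ : 0 < t₂) :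
    ∫ x, (θ x)⁻¹ * V t₂ x * (V t₂ x - V t₁ x) =
      -∫ x, quotientDeriv W ν c θ (V t₂) (fun x => ν x * g t₂ x) x * (F t₂ x - F t₁ x) := by
  obtain ⟨K, hK⟩ := hc.exists_abs_le A
  obtain ⟨L, hL⟩ := hc.exists_abs_quotientDeriv_le hθ A B
  have hf₁ := hF.stationary t₁ ht₁
  have hf₂ := hF.stationary t₂ ht₂
  set r' := quotientDeriv W ν c θ (V t₂) fun x => ν x * g t₂ x
  have hr'L := hL _ _ _ hf₂ (hF.abs_source_le t₂ ht₂)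
  have hr : Integrable fun x => (F t₂ x - F t₁ x) * (V t₂ x / θ x) := by
    refine ((hf₂.integrable.sub hf₁.integrable).mul_bdd (c := K * M)
      (hf₂.continuous_deriv_div hc hθ).aestronglyMeasurable (.of_forall fun x => ?_))
    rw [div_eq_mul_inv, norm_mul]
    have := hK _ _ _ hf₂ x
    exact mul_le_mul this.2 (hθ.elliptic.norm_inv_le hc.pos x) (norm_nonneg _)
      ((abs_nonneg _).trans this.2)
  have hr' : Integrable fun x => (F t₂ x - F t₁ x) * r' x := by
    simpa only [mul_comm] using hF.integrable_mul_sub (hf₂.continuous_quotientDeriv hc hθ) hr'L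
      ht₁ ht₂
  have hparts := integral_mul_deriv_eq_deriv_mul_of_integrable
    (fun x _ => (hf₂.hasDerivAt x).sub (hf₁.hasDerivAt x))
    (fun x _ => hf₂.hasDerivAt_deriv_div hc hθ x) hr'
    ((hF.integrable_inv_mul_deriv_mul_sub hc hθ ht₁ ht₂).congr (.of_forall fun x => ?_)) hr
  · simp only [Pi.sub_apply] at hparts
    simp only [mul_comm (r' _)]
    rw [hparts, neg_neg]
    exact integral_congr_ae (.of_forall fun x => by ring)
  · simp only [Pi.mul_apply]
    ring

/-- The monotone quantity: the Dirichlet energy weighted by the inverse corrector slope. -/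
lemma antitoneOn_integral_inv_mul_sq_deriv :
    AntitoneOn (fun t => ∫ x, (θ x)⁻¹ * V t x ^ 2) (Ioi 0) := by
  obtain ⟨L, hL⟩ := hc.exists_abs_quotientDeriv_le hθ A B
  intro s hs t _ hst
  refine le_of_sub_le_mul_sq (φ := fun t => ∫ x, (θ x)⁻¹ * V t x ^ 2) (C := 2 * (L * C)) hst
    fun p q hsp hpq _ => ?_
  have hp : 0 < p := hs.trans_le hsp
  have hq := hp.trans_le hpq
  have hf := hF.stationary q hq
  have hr'L := hL _ _ _ hf (hF.abs_source_le q hq)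
  have hr' := hf.continuous_quotientDeriv hc hθ
  have hconv := integral_mul_sq_sub_le (fun x => (inv_pos.2 (hθ.elliptic.pos hc.pos x)).le)
    (hF.integrable_inv_mul_sq_deriv hc hθ hq) (hF.integrable_inv_mul_sq_deriv hc hθ hp)
    (hF.integrable_inv_mul_deriv_mul_sub hc hθ hp hq)
  rw [hF.integral_inv_mul_deriv_mul_sub hc hθ hp hq] at hconv
  have hexp := (abs_le.1 (hF.abs_integral_mul_sub_sub_le hc hr' hr'L hp hpq)).1
  have hcancel : ∀ x, ν x * g q x / ν x = g q x := fun x =>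
    mul_div_cancel_left₀ _ (hc.weight_pos x).ne'
  have hsign := hf.integral_quotientDeriv_mul_nonneg hc hθ
    (by simpa only [hcancel] using hF.integrable_mul_source hc hr' hr'L hq)
  simp only [hcancel] at hsign
  linarith [mul_nonneg (sub_nonneg.2 hpq) hsign]

lemma mul_integral_inv_mul_sq_deriv_le (hs : 0 < t₁) (hst : t₁ ≤ t₂) :
    2 * (t₂ - t₁) * ∫ x, (θ x)⁻¹ * V t₂ x ^ 2 ≤
      M ^ 2 * ((∫ x, ν x * F t₁ x ^ 2) - ∫ x, ν x * F t₂ x ^ 2) := by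
  obtain ⟨L, hL⟩ := hF.exists_integral_weight_mul_sq_sub_le hc
  set G := ∫ x, (θ x)⁻¹ * V t₂ x ^ 2
  have hlower : ∀ q, 0 < q → q ≤ t₂ → G ≤ M ^ 2 * ∫ x, c x * V q x ^ 2 := fun q hq hqt => by
    refine (hF.antitoneOn_integral_inv_mul_sq_deriv hc hθ hq (hq.trans_le hqt) hqt).trans ?_
    rw [← MeasureTheory.integral_const_mul]
    refine integral_mono (hF.integrable_inv_mul_sq_deriv hc hθ hq)
      (((hF.stationary q hq).integrable_flux_mul_sq_deriv hc).const_mul _) fun x => ?_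
    calc (θ x)⁻¹ * V q x ^ 2 ≤ M * V q x ^ 2 := by
          gcongr
          exact (le_abs_self _).trans (hθ.elliptic.norm_inv_le hc.pos x)
      _ ≤ M * (M * (c x * V q x ^ 2)) := by
          have := hc.pos
          gcongr
          exact hc.elliptic_flux.le_mul hc.pos (sq_nonneg _) x
      _ = M ^ 2 * (c x * V q x ^ 2) := by ring
  have hdecay := le_of_sub_le_mul_sq (C := M ^ 2 * L)
    (φ := fun t => M ^ 2 * (∫ x, ν x * F t x ^ 2) + 2 * G * t) hst fun p q hsp hpq hqt => by
      have hp : 0 < p := hs.trans_le hsp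
      have h₁ := mul_le_mul_of_nonneg_left (hL p q hp hpq) (sq_nonneg M)
      have h₂ := mul_le_mul_of_nonneg_left (hlower q (hp.trans_le hpq) hqt) (sub_nonneg.2 hpq)
      linarith
  linarith

lemma integral_sq_deriv_le (ht : 0 < t) :
    ∫ x, V t x ^ 2 ≤ M * ∫ x, (θ x)⁻¹ * V t x ^ 2 := by
  rw [← MeasureTheory.integral_const_mul]
  refine integral_mono ((hF.stationary t ht).integrable_sq_deriv hc)
    ((hF.integrable_inv_mul_sq_deriv hc hθ ht).const_mul M) fun x => ?_
  have hθx := hθ.elliptic.pos hc.pos x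
  dsimp only
  rw [inv_mul_eq_div, ← mul_div_assoc, le_div_iff₀ hθx, mul_comm]
  exact mul_le_mul_of_nonneg_right (hθ.elliptic x).2 (sq_nonneg _)

lemma integral_weight_mul_sq_pow_three_le (ht : 0 < t) :
    (∫ x, ν x * F t x ^ 2) ^ 3 ≤ 8 * M ^ 8 * ∫ x, (θ x)⁻¹ * V t x ^ 2 := by
  have hM := hc.pos
  have hf := hF.stationary t ht
  calc (∫ x, ν x * F t x ^ 2) ^ 3 ≤ (M * ∫ x, F t x ^ 2) ^ 3 := by
        have := hc.integral_weight_mul_sq_nonneg (F t)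
        gcongr
        exact hF.integral_weight_mul_sq_le hc ht
    _ = M ^ 3 * (∫ x, F t x ^ 2) ^ 3 := mul_pow _ _ _
    _ ≤ M ^ 3 * (8 * (∫ x, |F t x|) ^ 4 * ∫ x, V t x ^ 2) := by
        gcongr
        exact integral_sq_pow_three_le hf.hasDerivAt (hf.continuous_deriv hc)
          (hf.integrable_sq_deriv hc) hf.integrable
    _ ≤ M ^ 3 * (8 * M ^ 4 * (M * ∫ x, (θ x)⁻¹ * V t x ^ 2)) := by
        gcongr
        · exact hF.integral_abs_le t ht
        · exact hF.integral_sq_deriv_le hc hθ ht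
    _ = 8 * M ^ 8 * ∫ x, (θ x)⁻¹ * V t x ^ 2 := by ring

lemma mul_sq_integral_weight_mul_sq_le (ht : 0 < t) :
    t * (∫ x, ν x * F t x ^ 2) ^ 2 ≤ 12 * M ^ 10 := by
  obtain ⟨K, hK⟩ := hc.exists_abs_le A
  have hM := hc.pos
  refine (mul_sq_le_of_mul_pow_three_le (E := fun s => ∫ x, ν x * F s x ^ 2) (C := 4 * M ^ 10)
    (K := M * (K * M)) (by positivity) (fun s _ => hc.integral_weight_mul_sq_nonneg (F s))
    (fun s hs => ?_) (fun s₁ s₂ hs₁ hs => ?_) ht).trans_eq (by ring)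
  · refine (hF.integral_weight_mul_sq_le hc hs).trans ?_
    have hf := hF.stationary s hs
    have hKs := fun x => (hK _ _ _ hf x).1
    have hK0 : 0 ≤ K := (abs_nonneg _).trans (hKs 0)
    gcongr
    exact (integral_sq_le_mul_integral_abs hf.integrable hKs).trans
      (mul_le_mul_of_nonneg_left (hF.integral_abs_le s hs) hK0)
  · have hs₂ := hs₁.trans hs
    calc (s₂ - s₁) * (∫ x, ν x * F s₂ x ^ 2) ^ 3
        ≤ (s₂ - s₁) * (8 * M ^ 8 * ∫ x, (θ x)⁻¹ * V s₂ x ^ 2) := by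
          gcongr
          exact hF.integral_weight_mul_sq_pow_three_le hc hθ hs₂
      _ = 4 * M ^ 8 * (2 * (s₂ - s₁) * ∫ x, (θ x)⁻¹ * V s₂ x ^ 2) := by ring
      _ ≤ 4 * M ^ 8 * (M ^ 2 * ((∫ x, ν x * F s₁ x ^ 2) - ∫ x, ν x * F s₂ x ^ 2)) := by
          gcongr 4 * M ^ 8 * ?_
          exact hF.mul_integral_inv_mul_sq_deriv_le hc hθ hs₁ hs.le
      _ ≤ 4 * M ^ 8 * (M ^ 2 * ∫ x, ν x * F s₁ x ^ 2) := by
          gcongr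
          exact sub_le_self _ (hc.integral_weight_mul_sq_nonneg (F s₂))
      _ = 4 * M ^ 10 * ∫ x, ν x * F s₁ x ^ 2 := by ring

lemma pow_three_mul_sq_integral_inv_mul_sq_deriv_le (ht : 0 < t) :
    t ^ 3 * (∫ x, (θ x)⁻¹ * V t x ^ 2) ^ 2 ≤ 24 * M ^ 14 := by
  set G := ∫ x, (θ x)⁻¹ * V t x ^ 2
  set E := ∫ x, ν x * F (t / 2) x ^ 2
  have hG : 0 ≤ G := integral_nonneg fun x =>
    mul_nonneg (inv_pos.2 (hθ.elliptic.pos hc.pos x)).le (sq_nonneg _)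
  have ht2 := half_pos ht
  have hGE : t * G ≤ M ^ 2 * E := by
    have := hF.mul_integral_inv_mul_sq_deriv_le hc hθ ht2 (half_le_self ht.le)
    linarith [mul_nonneg (sq_nonneg M) (hc.integral_weight_mul_sq_nonneg (F t))]
  calc t ^ 3 * G ^ 2 = t * (t * G) ^ 2 := by ring
    _ ≤ t * (M ^ 2 * E) ^ 2 := by gcongr
    _ = 2 * M ^ 4 * (t / 2 * E ^ 2) := by ring
    _ ≤ 2 * M ^ 4 * (12 * M ^ 10) := by
        gcongr 2 * M ^ 4 * ?_
        exact hF.mul_sq_integral_weight_mul_sq_le hc hθ ht2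
    _ = 24 * M ^ 14 := by ring

lemma pow_three_mul_sub_pow_four_le (ht : 0 < t) (x y : ℝ) :
    t ^ 3 * (F t y - F t x) ^ 4 ≤ 24 * M ^ 16 * (y - x) ^ 2 := by
  have hf := hF.stationary t ht
  set G := ∫ x, (θ x)⁻¹ * V t x ^ 2
  have hsq : (F t y - F t x) ^ 2 ≤ |y - x| * (M * G) :=
    (sq_sub_le_abs_sub_mul_integral_sq_deriv hf.hasDerivAt (hf.continuous_deriv hc)
      (hf.integrable_sq_deriv hc) x y).trans
      (mul_le_mul_of_nonneg_left (hF.integral_sq_deriv_le hc hθ ht) (abs_nonneg _))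
  calc t ^ 3 * (F t y - F t x) ^ 4 = t ^ 3 * ((F t y - F t x) ^ 2) ^ 2 := by ring
    _ ≤ t ^ 3 * (|y - x| * (M * G)) ^ 2 := by gcongr
    _ = |y - x| ^ 2 * M ^ 2 * (t ^ 3 * G ^ 2) := by ring
    _ ≤ |y - x| ^ 2 * M ^ 2 * (24 * M ^ 14) := by
        gcongr |y - x| ^ 2 * M ^ 2 * ?_
        exact hF.pow_three_mul_sq_integral_inv_mul_sq_deriv_le hc hθ ht
    _ = 24 * M ^ 16 * (y - x) ^ 2 := by rw [sq_abs]; ring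

end IsRegularFlow

namespace IsConservativeSol

variable {M W η a b r t : ℝ} {ν c : ℝ → ℝ} {u : ℝ → ℝ → ℝ} (hu : IsConservativeSol W ν c u)
include hu

lemma timeIntegral_mono (ha : 0 < a) (har : a ≤ r) (hrb : r ≤ b) (x : ℝ) :
    ∫ t in r..b, u t x ≤ ∫ t in a..b, u t x :=
  integral_mono_interval har hrb le_rfl
    (ae_restrict_of_forall_mem measurableSet_Ioc fun t ht => hu.nonneg t (ha.trans ht.1) x)
    (hu.intervalIntegrable_time ha (har.trans hrb) x)

lemma abs_steklov_sub_le (hη : 0 < η) (ha : 0 < a) (har : a ≤ r) (hrb : r ≤ b) (x : ℝ) :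
    |steklov η u r x - steklov η u b x| ≤
      η⁻¹ * ((∫ t in a..b, u t x) + ∫ t in a + η..b + η, u t x) := by
  have hr := ha.trans_le har
  have hb := hr.trans_le hrb
  have h₁ := hu.intervalIntegrable_time hr hrb x
  have h₂ := hu.intervalIntegrable_time hb (le_add_of_nonneg_right hη.le) x
  have h₃ := hu.intervalIntegrable_time hr (le_add_of_nonneg_right hη.le) x
  have h₄ := hu.intervalIntegrable_time (add_pos hr hη) (add_le_add_left hrb η) x
  have hsplit : (∫ t in r..b, u t x) + ∫ t in b..b + η, u t x =
      (∫ t in r..r + η, u t x) + ∫ t in r + η..b + η, u t x := by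
    rw [integral_add_adjacent_intervals h₁ h₂, integral_add_adjacent_intervals h₃ h₄]
  have hdiff : steklov η u r x - steklov η u b x =
      η⁻¹ * ((∫ t in r..b, u t x) - ∫ t in r + η..b + η, u t x) := by
    rw [steklov, steklov]
    linear_combination -η⁻¹ * hsplit
  have := hu.timeIntegral_mono ha har hrb x
  have := hu.timeIntegral_mono (add_pos ha hη) (add_le_add_left har η) (add_le_add_left hrb η) x
  have := hu.timeIntegral_nonneg hr hrb x
  have := hu.timeIntegral_nonneg (add_pos hr hη) (add_le_add_left hrb η) x
  rw [hdiff, abs_mul, abs_of_pos (inv_pos.2 hη)]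
  gcongr
  rw [abs_le]
  constructor <;> linarith

variable (hc : IsDriftDiffusion M W ν c)
include hc

lemma integrable_timeIntegral (ha : 0 < a) (hab : a ≤ b) :
    Integrable fun x => ∫ t in a..b, u t x :=
  hc.elliptic_weight.integrable_of_mul hc.pos hc.continuous_weight
    (hu.integrable_mul_timeIntegral hc ha hab)

lemma integral_timeIntegral_le (ha : 0 < a) (hab : a ≤ b) :
    ∫ x, ∫ t in a..b, u t x ≤ M * (b - a) := by
  rw [← hu.integral_mul_timeIntegral hc ha hab, ← MeasureTheory.integral_const_mul]
  exact integral_mono (hu.integrable_timeIntegral hc ha hab)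
    ((hu.integrable_mul_timeIntegral hc ha hab).const_mul M) fun x =>
    hc.elliptic_weight.le_mul hc.pos (hu.timeIntegral_nonneg ha hab x) x

lemma integral_abs_le (ht : 0 < t) : ∫ x, |u t x| ≤ M := by
  rw [← mul_one M, ← hu.integral_eq_one t ht, ← MeasureTheory.integral_const_mul]
  refine integral_mono (hu.integrable hc ht).abs ((hu.integrable_mul ht).const_mul M) fun x => ?_
  dsimp only
  rw [abs_of_nonneg (hu.nonneg t ht x)]
  exact hc.elliptic_weight.le_mul hc.pos (hu.nonneg t ht x) x

lemma exists_isStationarySol_steklov (hη : 0 < η) (ht : 0 < t) :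
    ∃ V, IsStationarySol W (max M (2 * η⁻¹)) c (steklov η u t) V
      fun x => ν x * (η⁻¹ * (u (t + η) x - u t x)) := by
  have htη := add_pos ht hη
  obtain ⟨V, hV⟩ := hu.exists_hasDerivAt_timeIntegral hc ht (le_add_of_nonneg_right hη.le)
  have hsource : ∀ x, ν x * (η⁻¹ * (u (t + η) x - u t x)) =
      η⁻¹ * (ν x * u (t + η) x - ν x * u t x) := fun x => by ring
  have hint := ((hu.integrable_mul htη).sub (hu.integrable_mul ht)).const_mul η⁻¹
  refine ⟨fun x => η⁻¹ * V x, fun x => (hV x).1.const_mul _, fun x => ?_, ?_,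
    (hu.steklov hc hη).integrable hc ht, ?_, ?_, ?_⟩
  · refine hasDerivAt_flux_of_driftWeight_mul hc.continuous_flux hc.flux_pos ?_
    simpa only [mul_left_comm, mul_assoc] using (hV x).2.const_mul η⁻¹
  · exact hc.continuous_weight.mul
      (((hu.sol.continuous htη).sub (hu.sol.continuous ht)).const_mul η⁻¹)
  · simpa only [hsource, Pi.sub_apply] using hint
  · exact ((hu.steklov hc hη).integral_abs_le hc ht).trans (le_max_left _ _)
  · refine le_trans ?_ (le_max_right _ _)
    have hdom := (hu.integrable_mul htη).add (hu.integrable_mul ht)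
    calc ∫ x, |ν x * (η⁻¹ * (u (t + η) x - u t x))|
        ≤ ∫ x, η⁻¹ * (ν x * u (t + η) x + ν x * u t x) := by
          simp only [hsource]
          refine integral_mono hint.abs (hdom.const_mul η⁻¹) fun x => ?_
          have h₁ := mul_nonneg (hc.weight_pos x).le (hu.nonneg _ htη x)
          have h₂ := mul_nonneg (hc.weight_pos x).le (hu.nonneg _ ht x)
          dsimp only
          rw [abs_mul, abs_of_pos (inv_pos.2 hη)]
          gcongr
          rw [abs_le]
          constructor <;> linarith
      _ = 2 * η⁻¹ := by
          rw [MeasureTheory.integral_const_mul, integral_add (hu.integrable_mul htη)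
            (hu.integrable_mul ht), hu.integral_eq_one _ htη, hu.integral_eq_one _ ht]
          ring

lemma abs_steklov_steklov_sub_sub_le (hη : 0 < η) (ha : 0 < a) (hab : a ≤ b) (x : ℝ) :
    |steklov η (steklov η u) b x - steklov η (steklov η u) a x -
        (b - a) * (η⁻¹ * (steklov η u (b + η) x - steklov η u b x))| ≤
      (b - a) * (η⁻¹ ^ 2 * ((∫ t in a..b, u t x) + 2 * (∫ t in a + η..b + η, u t x) +
        ∫ t in a + η + η..b + η + η, u t x)) := by
  rcases hab.eq_or_lt with rfl | hlt
  · simp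
  have hd : ∀ r, 0 < r → HasDerivAt (fun r => steklov η (steklov η u) r x)
      (η⁻¹ * (steklov η u (r + η) x - steklov η u r x)) r := fun r hr =>
    (hu.steklov hc hη).hasDerivAt_steklov_time hη hr x
  obtain ⟨r, hr, hslope⟩ := exists_hasDerivAt_eq_slope _ _ hlt
    (fun r hr => (hd r (ha.trans_le hr.1)).continuousAt.continuousWithinAt)
    fun r hr => hd r (ha.trans hr.1)
  have hincr := mul_div_cancel₀ (steklov η (steklov η u) b x - steklov η (steklov η u) a x)
    (sub_pos.2 hlt).ne'
  rw [← hslope] at hincr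
  have h₁ := hu.abs_steklov_sub_le hη ha hr.1.le hr.2.le x
  have h₂ := hu.abs_steklov_sub_le hη (add_pos ha hη) (add_le_add_left hr.1.le η)
    (add_le_add_left hr.2.le η) x
  have hη' := inv_pos.2 hη
  rw [← hincr, ← mul_sub, ← mul_sub, abs_mul, abs_mul, abs_of_pos (sub_pos.2 hlt), abs_of_pos hη',
    sq, mul_assoc η⁻¹]
  have := sub_pos.2 hlt
  gcongr
  rw [abs_le] at *
  constructor <;> linarith

lemma exists_isRegularFlow_steklov_steklov (hη : 0 < η) :
    ∃ A B C V g, IsRegularFlow M W A B C ν c (steklov η (steklov η u)) V g := by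
  have hU := hu.steklov hc hη
  choose! V hV using fun t (ht : 0 < t) => hU.exists_isStationarySol_steklov hc hη ht
  obtain ⟨K, hK⟩ := hc.exists_abs_le (max M (2 * η⁻¹))
  have hUK : ∀ t, 0 < t → ∀ x, |steklov η u t x| ≤ K := fun t ht x => by
    obtain ⟨V, hV⟩ := hu.exists_isStationarySol_steklov hc hη ht
    exact (hK _ _ _ hV x).1
  refine ⟨_, M * (η⁻¹ * (K + K)), 4 * M * η⁻¹ ^ 2, V, _, hV,
    fun t ht => (hU.steklov hc hη).integral_abs_le hc ht, fun t ht x => ?_,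
    fun t₁ t₂ ht₁ ht => ?_⟩
  · rw [abs_mul, abs_mul, abs_of_pos (inv_pos.2 hη)]
    have := hc.pos
    have := hUK t ht x
    have := hUK (t + η) (add_pos ht hη) x
    gcongr
    · exact hc.elliptic_weight.norm_le hc.pos x
    · exact (abs_sub _ _).trans (by gcongr)
  · have : 0 ≤ t₂ - t₁ := sub_nonneg.2 ht
    have hη₁ := add_pos ht₁ hη
    have hη₂ := add_pos hη₁ hη
    have ht' := add_le_add_left ht η
    have ht'' := add_le_add_left ht' η
    have hI := hu.integrable_timeIntegral hc ht₁ ht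
    have hI' := (hu.integrable_timeIntegral hc hη₁ ht').const_mul 2
    have hI'' := hu.integrable_timeIntegral hc hη₂ ht''
    refine (integral_mono_of_nonneg (.of_forall fun x => abs_nonneg _)
      ((((hI.add hI').add hI'').const_mul _).const_mul _)
      (.of_forall (hu.abs_steklov_steklov_sub_sub_le hc hη ht₁ ht))).trans ?_
    rw [MeasureTheory.integral_const_mul, MeasureTheory.integral_const_mul,
      integral_add' (hI.add hI') hI'', integral_add' hI hI', MeasureTheory.integral_const_mul]
    have := hu.integral_timeIntegral_le hc ht₁ ht
    have := hu.integral_timeIntegral_le hc hη₁ ht'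
    have := hu.integral_timeIntegral_le hc hη₂ ht''
    calc _ ≤ (t₂ - t₁) * (η⁻¹ ^ 2 * (4 * M * (t₂ - t₁))) := by
          gcongr
          linarith
      _ = 4 * M * η⁻¹ ^ 2 * (t₂ - t₁) ^ 2 := by ring

variable {θ : ℝ → ℝ} (hθ : IsCorrectorSlope M W ν c θ)
include hθ

/-- The Steklov averages are regular flows, and the bound for them does not depend on `η`. -/
lemma pow_three_mul_sub_pow_four_le (ht : 0 < t) (x y : ℝ) :
    t ^ 3 * (u t y - u t x) ^ 4 ≤ 24 * M ^ 16 * (y - x) ^ 2 := by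
  refine le_of_tendsto (((hu.tendsto_steklov_steklov hc ht y).sub
    (hu.tendsto_steklov_steklov hc ht x)).pow 4 |>.const_mul (t ^ 3))
    (eventually_nhdsWithin_of_forall fun η hη => ?_)
  obtain ⟨A, B, C, V, g, hF⟩ := hu.exists_isRegularFlow_steklov_steklov hc hη
  exact hF.pow_three_mul_sub_pow_four_le hc hθ ht x y

lemma abs_sub_le (ht : 0 < t) (x y : ℝ) :
    |u t x - u t y| ≤ 3 * M ^ 4 / t ^ (3 / 4 : ℝ) * |x - y| ^ (1 / 2 : ℝ) := by
  have ht4 : (t ^ (3 / 4 : ℝ)) ^ 4 = t ^ 3 := by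
    rw [← Real.rpow_mul_natCast ht.le, ← Real.rpow_natCast]
    norm_num
  have hxy4 : (|x - y| ^ (1 / 2 : ℝ)) ^ 4 = (x - y) ^ 2 := by
    rw [← Real.rpow_mul_natCast (abs_nonneg _), ← sq_abs, ← Real.rpow_natCast]
    norm_num
  refine le_of_pow_le_pow_left₀ four_ne_zero (by positivity) ?_
  rw [Even.pow_abs (by decide), mul_pow, div_pow, ht4, hxy4, div_mul_eq_mul_div,
    le_div_iff₀' (by positivity)]
  calc t ^ 3 * (u t x - u t y) ^ 4 ≤ 24 * M ^ 16 * (x - y) ^ 2 :=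
        hu.pow_three_mul_sub_pow_four_le hc hθ ht y x
    _ ≤ (3 * M ^ 4) ^ 4 * (x - y) ^ 2 := by nlinarith [sq_nonneg (M ^ 8 * (x - y))]

lemma abs_le (ht : 0 < t) (x : ℝ) : |u t x| ≤ M + 3 * M ^ 4 / t ^ (3 / 4 : ℝ) := by
  obtain ⟨z, hz, hle⟩ := exists_mem_Ioo_abs_le (hu.integrable hc ht) (lt_add_one x)
  rw [add_sub_cancel_left, one_mul] at hle
  have hxz : |x - z| ≤ 1 := by
    rw [abs_sub_comm, abs_of_pos (sub_pos.2 hz.1)]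
    linarith [hz.2]
  calc |u t x| ≤ |u t z| + |u t x - u t z| := by linarith [abs_sub_abs_le_abs_sub (u t x) (u t z)]
    _ ≤ M + 3 * M ^ 4 / t ^ (3 / 4 : ℝ) * |x - z| ^ (1 / 2 : ℝ) :=
        add_le_add (hle.trans (hu.integral_abs_le hc ht)) (hu.abs_sub_le hc hθ ht x z)
    _ ≤ M + 3 * M ^ 4 / t ^ (3 / 4 : ℝ) := by
        gcongr
        exact mul_le_of_le_one_right (by positivity)
          (Real.rpow_le_one (abs_nonneg _) hxz (by norm_num))

end IsConservativeSol

/-! ### The canonical equation -/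

section Canonical

variable {μ W t : ℝ} {ν a T : ℝ → ℝ} {P : ℝ → ℝ → ℝ → ℝ}

lemma Elliptic.isDriftDiffusion (hμ : 1 ≤ μ) (hνc : Continuous ν) (hac : Continuous a)
    (hν : Elliptic μ ν) (ha : Elliptic μ a) (hW : 0 ≤ W) :
    IsDriftDiffusion (μ ^ 5) W ν fun x => ν x * a x where
  pos := by positivity
  drift_nonneg := hW
  continuous_weight := hνc
  elliptic_weight := hν.mono (by positivity) (le_self_pow₀ hμ (by norm_num))
  continuous_flux := hνc.mul hac
  elliptic_flux := (hν.mul (by positivity) (by positivity) ha).mono (by positivity) <| by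
    rw [← sq]
    exact pow_le_pow_right₀ hμ (by norm_num)

lemma IsCorrector.exists_isCorrectorSlope (hT : IsCorrector μ ν a W T) :
    ∃ θ, IsCorrectorSlope (μ ^ 5) W ν (fun x => ν x * a x) θ := by
  obtain ⟨-, θ, -, hflux, hθ⟩ := hT
  exact ⟨θ, hθ, by simpa only [mul_comm (a _)] using hflux⟩

namespace IsFundSol

variable (hP : IsFundSol ν a W P)
include hP

lemma isConservativeSol (hν : Continuous ν) (hν0 : ∀ x, 0 < ν x) (ha : Continuous a)
    (ha0 : ∀ x, 0 < a x) (y : ℝ) :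
    IsConservativeSol W ν (fun x => ν x * a x) fun t x => P t x y where
  sol := hP.isDivergenceSol hν hν0 ha ha0 y
  nonneg _ ht x := hP.nonneg ht x y
  lsc _ ht x := hP.lowerSemicontinuousAt hν hν0 ha ha0 ht x y
  integral_eq_one _ ht := hP.integral_mul_eq_one ht y

end IsFundSol

theorem spatial_holder_estimate_general (hμ : 1 ≤ μ) (hνc : Continuous ν) (hac : Continuous a)
    (hν : Elliptic μ ν) (ha : Elliptic μ a) (hW : 0 ≤ W) (hT : IsCorrector μ ν a W T)
    (hP : IsFundSol ν a W P) {p₀ : ℝ → ℝ} (hp₀ : Integrable p₀) (ht : 0 < t) (x x' : ℝ) :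
    |(∫ y, ν y * P t x y * p₀ y) - ∫ y, ν y * P t x' y * p₀ y| ≤
      3 * μ ^ 21 / t ^ (3 / 4 : ℝ) * (∫ y, |p₀ y|) * |x - x'| ^ (1 / 2 : ℝ) := by
  have hμ0 : 0 < μ := one_pos.trans_le hμ
  have hc := hν.isDriftDiffusion hμ hνc hac ha hW
  obtain ⟨θ, hθ⟩ := hT.exists_isCorrectorSlope
  have hsol := hP.isConservativeSol hνc (hν.pos hμ0) hac (ha.pos hμ0)
  have hint : ∀ z, Integrable fun y => ν y * P t z y * p₀ y := fun z =>
    hp₀.bdd_mul (hνc.aestronglyMeasurable.mul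
      (hP.aestronglyMeasurable hνc (hν.pos hμ0) hac (ha.pos hμ0) ht z)) <| .of_forall fun y => by
        rw [norm_mul]
        exact mul_le_mul (hν.norm_le hμ0 y) ((hsol y).abs_le hc hθ ht z) (norm_nonneg _) hμ0.le
  rw [← integral_sub (hint x) (hint x')]
  calc |∫ y, ν y * P t x y * p₀ y - ν y * P t x' y * p₀ y|
      ≤ ∫ y, 3 * μ ^ 21 / t ^ (3 / 4 : ℝ) * |x - x'| ^ (1 / 2 : ℝ) * |p₀ y| := by
        rw [← Real.norm_eq_abs]
        refine norm_integral_le_of_norm_le (hp₀.abs.const_mul _) (.of_forall fun y => ?_)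
        rw [← sub_mul, ← mul_sub, norm_mul, norm_mul]
        refine mul_le_mul_of_nonneg_right ?_ (abs_nonneg _)
        calc ‖ν y‖ * ‖P t x y - P t x' y‖
            ≤ μ * (3 * (μ ^ 5) ^ 4 / t ^ (3 / 4 : ℝ) * |x - x'| ^ (1 / 2 : ℝ)) :=
              mul_le_mul (hν.norm_le hμ0 y) ((hsol y).abs_sub_le hc hθ ht x x') (norm_nonneg _)
                hμ0.le
          _ = 3 * μ ^ 21 / t ^ (3 / 4 : ℝ) * |x - x'| ^ (1 / 2 : ℝ) := by ring
    _ = 3 * μ ^ 21 / t ^ (3 / 4 : ℝ) * (∫ y, |p₀ y|) * |x - x'| ^ (1 / 2 : ℝ) := by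
        rw [MeasureTheory.integral_const_mul]
        ring

end Canonical

end

/-- Theorem 1.3, inequality (1.11): for every `μ ≥ 1` there are `C > 0` and
`β ∈ (0,1)` such that the solution `p(t,x) = ∫ ν(y)P(t,x,y)p₀(y)dy` with
`p₀ ∈ L¹ ∩ L∞` satisfies
`|p(t,x) − p(t,x')| ≤ (C/t^((1+β)/2))·‖p₀‖_{L¹}·|x − x'|^β` for all `t > 0`, `x, x'`. -/
theorem spatial_holder_estimate (μ : ℝ) (hμ : 1 ≤ μ) :
    ∃ C : ℝ, 0 < C ∧ ∃ β ∈ Set.Ioo (0 : ℝ) 1,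
      ∀ ν a : ℝ → ℝ, Continuous ν → Continuous a →
      Elliptic μ ν → Elliptic μ a →
      ∀ W : ℝ, 0 ≤ W →
      ∀ T : ℝ → ℝ, IsCorrector μ ν a W T →
      ∀ P : ℝ → ℝ → ℝ → ℝ, IsFundSol ν a W P →
      ∀ p₀ : ℝ → ℝ, Integrable p₀ → (∃ B : ℝ, ∀ x, |p₀ x| ≤ B) →
      ∀ t : ℝ, 0 < t → ∀ x x' : ℝ,
        |(∫ y : ℝ, ν y * P t x y * p₀ y) - ∫ y : ℝ, ν y * P t x' y * p₀ y| ≤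
          C / t ^ ((1 + β) / 2) * (∫ y : ℝ, |p₀ y|) * |x - x'| ^ β := by
  refine ⟨3 * μ ^ 21, by positivity, 1 / 2, by norm_num, ?_⟩
  intro ν a hνc hac hν ha W hW T hT P hP p₀ hp₀ _ t ht x x'
  rw [show ((1 : ℝ) + 1 / 2) / 2 = 3 / 4 by norm_num]
  exact spatial_holder_estimate_general hμ hνc hac hν ha hW hT hP hp₀ ht x x'
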